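/- arXiv:2002.09186 — 3 statements merged into one kernel-verified Lean document; each statement's English description precedes it below -/
import Mathlib

section
/- Let D be a discrete vector field (a matching on the Hasse diagram pairing each simplex α with a cofacet β, each simplex in at most one pair, empty set unmatched) on a finite simplicial complex K, and suppose D has no closed gradient paths. If D has exactly one critical (unmatched) 0-simplex and all other critical simplices have dimension ≥ N, then K is (N-1)-connected. -/
open scoped Classical

noncomputable section

/-- The geometric realization of a simplicial complex `K` on the vertex set `Fin n`,
inside the standard simplex. -/
def realization (n : ℕ) (K : Set (Finset (Fin n))) : Set (Fin n → ℝ) :=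
  {x ∈ stdSimplex ℝ (Fin n) | (Finset.univ.filter fun v => x v ≠ 0) ∈ K}

theorem mem_real_of {n : ℕ} {K : Set (Finset (Fin n))}
    (hdown : ∀ σ ∈ K, ∀ τ, τ ⊆ σ → τ ∈ K) {x : Fin n → ℝ} {γ : Finset (Fin n)} (hγ : γ ∈ K)
    (h0 : ∀ i, 0 ≤ x i) (h1 : ∑ i, x i = 1) (hs : ∀ i, i ∉ γ → x i = 0) :
    x ∈ realization n K := by
  refine ⟨⟨h0, h1⟩, hdown γ hγ _ ?_⟩
  intro i hi
  by_contra hc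
  exact (Finset.mem_filter.1 hi).2 (hs i hc)

theorem homotopic_straight {n : ℕ} {K : Set (Finset (Fin n))}
    (hdown : ∀ σ ∈ K, ∀ τ, τ ⊆ σ → τ ∈ K) {S : Type*} [TopologicalSpace S]
    (g h : C(S, realization n K))
    (H : ∀ s, ∃ γ ∈ K, ∀ i, i ∉ γ → (g s).1 i = 0 ∧ (h s).1 i = 0) :
    g.Homotopic h := by
  refine ⟨⟨⟨fun q => ⟨fun i => (1 - (q.1 : ℝ)) * (g q.2).1 i + (q.1 : ℝ) * (h q.2).1 i, ?_⟩, ?_⟩,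
    ?_, ?_⟩⟩
  · obtain ⟨γ, hγ, hz⟩ := H q.2
    refine mem_real_of hdown hγ ?_ ?_ ?_
    · intro i
      have h1 := (g q.2).2.1.1 i
      have h2 := (h q.2).2.1.1 i
      have h3 := q.1.2.1
      have h4 := q.1.2.2
      have : 0 ≤ 1 - (q.1 : ℝ) := by linarith
      positivity
    · rw [Finset.sum_add_distrib, ← Finset.mul_sum, ← Finset.mul_sum,
        (g q.2).2.1.2, (h q.2).2.1.2]
      ring
    · intro i hi
      simp [hz i hi]
  · refine Continuous.subtype_mk (continuous_pi fun i => ?_) _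
    have c1 : Continuous fun q : unitInterval × S => (g q.2).1 i :=
      (continuous_apply i).comp (continuous_subtype_val.comp (g.continuous.comp continuous_snd))
    have c2 : Continuous fun q : unitInterval × S => (h q.2).1 i :=
      (continuous_apply i).comp (continuous_subtype_val.comp (h.continuous.comp continuous_snd))
    have c3 : Continuous fun q : unitInterval × S => (q.1 : ℝ) :=
      continuous_subtype_val.comp continuous_fst
    exact ((continuous_const.sub c3).mul c1).add (c3.mul c2)
  · intro s
    apply Subtype.ext
    funext i
    simp
  · intro s
    apply Subtype.ext
    funext i
    simp

theorem null_of_step {n : ℕ} {K K' : Set (Finset (Fin n))} (hK : K' ⊆ K)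
    (hdown : ∀ σ ∈ K, ∀ τ, τ ⊆ σ → τ ∈ K) {S : Type*} [TopologicalSpace S]
    (g : C(S, realization n K)) (g' : C(S, realization n K'))
    (H : ∀ s, ∃ γ ∈ K, ∀ i, i ∉ γ → (g s).1 i = 0 ∧ (g' s).1 i = 0)
    (hn : g'.Nullhomotopic) : g.Nullhomotopic := by
  let ι : C(realization n K', realization n K) :=
    ⟨fun x => ⟨x.1, x.2.1, hK x.2.2⟩, by fun_prop⟩
  obtain ⟨y, hy⟩ := hn.comp_right ι
  exact ⟨y, (homotopic_straight hdown g (ι.comp g') H).trans hy⟩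

theorem continuous_inf' {n : ℕ} {S : Type*} [TopologicalSpace S] {σ : Finset (Fin n)}
    (hσ : σ.Nonempty) (f : S → Fin n → ℝ) (hf : Continuous f) :
    Continuous fun s => σ.inf' hσ (f s) := by
  apply Continuous.finset_inf'_apply hσ
  intro i _
  exact (continuous_apply i).comp hf

theorem collapse_step {n : ℕ} {K : Set (Finset (Fin n))}
    (hdown : ∀ σ ∈ K, ∀ τ, τ ⊆ σ → τ ∈ K) {S : Type*} [TopologicalSpace S]
    (α β : Finset (Fin n)) (v : Fin n) (hα : α.Nonempty) (hv : v ∉ α) (hβ : β = insert v α)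
    (hβK : β ∈ K) (hfree : ∀ γ ∈ K, α ⊆ γ → γ = α ∨ γ = β)
    (g : C(S, realization n K))
    (hnull : ∀ g' : C(S, realization n (K \ {α, β})), g'.Nullhomotopic) :
    g.Nullhomotopic := by
  have hdown' : ∀ σ ∈ K \ {α, β}, ∀ τ, τ ⊆ σ → τ ∈ K \ {α, β} := by
    rintro σ ⟨hσ, hσ'⟩ τ hτ
    refine ⟨hdown σ hσ τ hτ, fun h => hσ' ?_⟩
    have : α ⊆ τ := by
      rcases h with h | h
      · rw [h]
      · rw [Set.mem_singleton_iff.1 h, hβ]; exact Finset.subset_insert _ _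
    rcases hfree σ hσ (this.trans hτ) with h | h
    · left; exact h
    · right; exact h
  let t : (Fin n → ℝ) → ℝ := fun x => α.inf' hα x
  let r : (Fin n → ℝ) → Fin n → ℝ := fun x i =>
    x i + (if i = v then t x * α.card else 0) - (if i ∈ α then t x else 0)
  have ht0 : ∀ x : Fin n → ℝ, (∀ i, 0 ≤ x i) → 0 ≤ t x := fun x hx =>
    Finset.le_inf' hα _ fun i _ => hx i
  have hrK : ∀ x ∈ realization n K, r x ∈ realization n (K \ {α, β}) ∧
      ∃ γ ∈ K, ∀ i, i ∉ γ → x i = 0 ∧ r x i = 0 := by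
    intro x hx
    have hx0 := hx.1.1
    have ht := ht0 x hx0
    have hr0 : ∀ i, 0 ≤ r x i := by
      intro i
      simp only [r]
      by_cases hi : i ∈ α
      · have : t x ≤ x i := Finset.inf'_le _ hi
        have hiv : i ≠ v := fun h => hv (h ▸ hi)
        simp [hi, hiv]; linarith
      · have := hx0 i
        simp only [hi, if_false, sub_zero]
        split_ifs <;> positivity
    have hr1 : ∑ i, r x i = 1 := by
      simp only [r, Finset.sum_sub_distrib, Finset.sum_add_distrib]
      rw [hx.1.2]
      simp
      ring
    set γ : Finset (Fin n) := Finset.univ.filter fun v => x v ≠ 0 with hγ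
    by_cases hα' : α ⊆ γ
    · have hγβ : γ ⊆ β := by
        rcases hfree γ hx.2 hα' with h | h
        · rw [h, hβ]; exact Finset.subset_insert _ _
        · rw [h]
      have hz : ∀ i, i ∉ β → x i = 0 ∧ r x i = 0 := by
        intro i hi
        have h1 : x i = 0 := by
          by_contra hc
          exact hi (hγβ (by simp [hγ, hc]))
        have h2 : i ≠ v := by rintro rfl; exact hi (by simp [hβ])
        have h3 : i ∉ α := by intro h; exact hi (by simp [hβ, h])
        simp [r, h1, h2, h3]
      refine ⟨?_, β, hβK, hz⟩
      obtain ⟨i0, hi0, hti0⟩ := Finset.exists_mem_eq_inf' hα x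
      have hri0 : r x i0 = 0 := by
        have hiv : i0 ≠ v := fun h => hv (h ▸ hi0)
        simp only [r, hi0, hiv, if_true, if_false, t]
        linarith
      have hm := mem_real_of hdown hβK hr0 hr1 (fun i hi => (hz i hi).2)
      refine ⟨hm.1, hm.2, ?_⟩
      intro h
      have : i0 ∈ Finset.univ.filter fun v => r x v ≠ 0 := by
        rcases h with h | h
        · rw [h]; exact hi0
        · rw [Set.mem_singleton_iff.1 h, hβ]; simp [hi0]
      exact (Finset.mem_filter.1 this).2 hri0
    · have htz : t x = 0 := by
        obtain ⟨i, hi, hiγ⟩ := Finset.not_subset.1 hα'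
        have : x i = 0 := by by_contra hc; exact hiγ (by simp [hγ, hc])
        have h2 : t x ≤ x i := Finset.inf'_le _ hi
        linarith
      have hrx : r x = x := by
        funext i
        simp [r, htz]
      rw [hrx]
      refine ⟨⟨hx.1, hx.2, ?_⟩, γ, hx.2, ?_⟩
      · intro h
        apply hα'
        rcases h with h | h
        · rw [hγ, h]
        · rw [hγ, Set.mem_singleton_iff.1 h, hβ]; exact Finset.subset_insert _ _
      · intro i hi
        have : x i = 0 := by by_contra hc; exact hi (by simp [hγ, hc])
        exact ⟨this, this⟩
  have hcr : Continuous r := by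
    have := continuous_inf' hα (fun x : Fin n → ℝ => x) continuous_id
    refine continuous_pi fun i => ?_
    simp only [r, t]
    split_ifs <;> fun_prop
  let g' : C(S, realization n (K \ {α, β})) :=
    ⟨fun s => ⟨r (g s).1, (hrK _ (g s).2).1⟩,
      Continuous.subtype_mk (hcr.comp (continuous_subtype_val.comp g.continuous)) _⟩
  exact null_of_step (fun _ h => h.1) hdown g g' (fun s => (hrK _ (g s).2).2) (hnull g')

theorem radial_step {n : ℕ} {K : Set (Finset (Fin n))}
    (hdown : ∀ σ ∈ K, ∀ τ, τ ⊆ σ → τ ∈ K) {S : Type*} [TopologicalSpace S]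
    (σ : Finset (Fin n)) (hσ : σ.Nonempty)
    (hmax : ∀ γ ∈ K, σ ⊆ γ → γ = σ)
    (p : Fin n → ℝ) (hp0 : ∀ i ∈ σ, 0 < p i) (hp1 : ∀ i, i ∉ σ → p i = 0) (hps : ∑ i, p i = 1)
    (g : C(S, realization n K)) (hgp : ∀ s, (g s).1 ≠ p)
    (hnull : ∀ g' : C(S, realization n (K \ {σ})), g'.Nullhomotopic) :
    g.Nullhomotopic := by
  let l : (Fin n → ℝ) → ℝ := fun x => σ.inf' hσ (fun i => x i / p i)
  let r : (Fin n → ℝ) → Fin n → ℝ := fun x i => (x i - l x * p i) / (1 - l x)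
  have hl1 : ∀ x ∈ realization n K, x ≠ p → l x < 1 := by
    intro x hx hxp
    by_contra hc
    push Not at hc
    apply hxp
    have hge : ∀ i ∈ Finset.univ, p i ≤ x i := by
      intro i _
      by_cases hi : i ∈ σ
      · have : l x ≤ x i / p i := Finset.inf'_le (fun i => x i / p i) hi
        have h2 : 1 ≤ x i / p i := hc.trans this
        rwa [le_div_iff₀ (hp0 i hi), one_mul] at h2
      · rw [hp1 i hi]; exact hx.1.1 i
    have := (Finset.sum_eq_sum_iff_of_le hge).1 (by rw [hps, hx.1.2])
    funext i
    exact (this i (Finset.mem_univ i)).symm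
  have hrK : ∀ x ∈ realization n K, x ≠ p → r x ∈ realization n (K \ {σ}) ∧
      ∃ γ ∈ K, ∀ i, i ∉ γ → x i = 0 ∧ r x i = 0 := by
    intro x hx hxp
    have hl := hl1 x hx hxp
    have hl' : 0 < 1 - l x := by linarith
    have hx0 := hx.1.1
    set γ : Finset (Fin n) := Finset.univ.filter fun v => x v ≠ 0 with hγ
    have hxγ : ∀ i, i ∉ γ → x i = 0 := by
      intro i hi
      by_contra hc
      exact hi (by simp [hγ, hc])
    by_cases hσγ : σ ⊆ γ
    · have hγσ := hmax γ hx.2 hσγ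
      have hr0 : ∀ i, 0 ≤ r x i := by
        intro i
        refine div_nonneg ?_ hl'.le
        by_cases hi : i ∈ σ
        · have : l x ≤ x i / p i := Finset.inf'_le (fun i => x i / p i) hi
          rw [le_div_iff₀ (hp0 i hi)] at this
          linarith
        · rw [hp1 i hi]; have := hx0 i; linarith
      have hr1 : ∑ i, r x i = 1 := by
        simp only [r]
        rw [← Finset.sum_div, Finset.sum_sub_distrib, ← Finset.mul_sum, hps, hx.1.2, mul_one]
        exact div_self hl'.ne'
      have hz : ∀ i, i ∉ γ → x i = 0 ∧ r x i = 0 := by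
        intro i hi
        refine ⟨hxγ i hi, ?_⟩
        simp [r, hxγ i hi, hp1 i (hγσ ▸ hi)]
      refine ⟨?_, γ, hx.2, hz⟩
      have hm := mem_real_of hdown hx.2 hr0 hr1 (fun i hi => (hz i hi).2)
      refine ⟨hm.1, hm.2, ?_⟩
      intro h
      obtain ⟨i0, hi0, hti0⟩ := Finset.exists_mem_eq_inf' hσ (fun i => x i / p i)
      have : i0 ∈ Finset.univ.filter fun v => r x v ≠ 0 := by
        rw [Set.mem_singleton_iff.1 h]; exact hi0
      refine (Finset.mem_filter.1 this).2 ?_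
      have hli : l x = x i0 / p i0 := hti0
      have hpi := hp0 i0 hi0
      simp only [r]
      rw [div_eq_zero_iff]
      left
      rw [hli]
      field_simp
      ring
    · have hlz : l x = 0 := by
        obtain ⟨i, hi, hiγ⟩ := Finset.not_subset.1 hσγ
        apply le_antisymm
        · have : l x ≤ x i / p i := Finset.inf'_le (fun i => x i / p i) hi
          rwa [hxγ i hiγ, zero_div] at this
        · exact Finset.le_inf' hσ _ fun i hi => div_nonneg (hx0 i) (hp0 i hi).le
      have hrx : r x = x := by
        funext i
        simp [r, hlz]
      rw [hrx]
      refine ⟨⟨hx.1, hx.2, ?_⟩, γ, hx.2, fun i hi => ⟨hxγ i hi, hxγ i hi⟩⟩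
      intro h
      apply hσγ
      rw [hγ, Set.mem_singleton_iff.1 h]
  have hcg : Continuous fun s => (g s).1 := continuous_subtype_val.comp g.continuous
  have hcl : Continuous fun s => l (g s).1 := by
    apply continuous_inf' hσ (fun s i => (g s).1 i / p i)
    refine continuous_pi fun i => ?_
    exact ((continuous_apply i).comp hcg).div_const _
  have hcr : Continuous fun s => r (g s).1 := by
    refine continuous_pi fun i => ?_
    simp only [r]
    refine Continuous.div ?_ (by fun_prop) ?_
    · exact ((continuous_apply i).comp hcg).sub (hcl.mul continuous_const)
    · intro s
      have := hl1 _ (g s).2 (hgp s)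
      linarith
  let g' : C(S, realization n (K \ {σ})) :=
    ⟨fun s => ⟨r (g s).1, (hrK _ (g s).2 (hgp s)).1⟩, Continuous.subtype_mk hcr _⟩
  exact null_of_step (fun _ h => h.1) hdown g g' (fun s => (hrK _ (g s).2 (hgp s)).2) (hnull g')

theorem cell_step {n : ℕ} {K : Set (Finset (Fin n))}
    (hdown : ∀ σ ∈ K, ∀ τ, τ ⊆ σ → τ ∈ K) {S : Type*} [TopologicalSpace S]
    (j : ℕ)
    (happ : ∀ τ : Finset (Fin n), j < τ.card → ∀ f : S → τ → ℝ, Continuous f → ∀ δ : ℝ, 0 < δ →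
      ∃ w : S → τ → ℝ, Continuous w ∧ (∀ s i, |w s i - f s i| < δ) ∧ Dense (Set.range w)ᶜ)
    (σ : Finset (Fin n)) (hσc : j + 2 ≤ σ.card)
    (hmax : ∀ γ ∈ K, σ ⊆ γ → γ = σ)
    (g : C(S, realization n K))
    (hnull : ∀ g' : C(S, realization n (K \ {σ})), g'.Nullhomotopic) :
    g.Nullhomotopic := by
  have hσ : σ.Nonempty := Finset.card_pos.1 (by omega)
  obtain ⟨v, hv⟩ := hσ
  have hσ : σ.Nonempty := ⟨v, hv⟩
  set τ := σ.erase v with hτ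
  have hτc : τ.card + 1 = σ.card := Finset.card_erase_add_one hv
  have hvτ : v ∉ τ := by simp [hτ]
  have hτσ : ∀ i, i ∈ τ → i ∈ σ := fun i hi => Finset.mem_of_mem_erase hi
  have hστ : ∀ i, i ∈ σ → i ≠ v → i ∈ τ := fun i hi hne => Finset.mem_erase.2 ⟨hne, hi⟩
  have hc0 : (0 : ℝ) < σ.card := by exact_mod_cast Finset.card_pos.2 hσ
  obtain ⟨ε, hεdef⟩ : ∃ ε : ℝ, ε = 1 / (4 * σ.card) := ⟨_, rfl⟩
  have hε : 0 < ε := by rw [hεdef]; positivity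
  obtain ⟨δ, hδdef⟩ : ∃ δ : ℝ, δ = ε / σ.card := ⟨_, rfl⟩
  have hδ : 0 < δ := by rw [hδdef]; positivity
  have hδσ : δ * σ.card = ε := by rw [hδdef]; field_simp
  have hεσ : ε * (4 * σ.card) = 1 := by rw [hεdef]; field_simp
  have hτc' : (τ.card : ℝ) + 1 = σ.card := by exact_mod_cast hτc
  have hcg : Continuous fun s => (g s).1 := continuous_subtype_val.comp g.continuous
  obtain ⟨w, hwc, hwd, hwD⟩ := happ τ (by omega) (fun s i => (g s).1 i)
    (continuous_pi fun i => (continuous_apply (i : Fin n)).comp hcg) δ hδ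
  -- choose the point
  let U : Set (τ → ℝ) := {q | (∀ i, 2 * ε < q i) ∧ ∑ i, q i + 2 * ε < 1}
  have hUo : IsOpen U := by
    apply IsOpen.inter
    · have : {q : τ → ℝ | ∀ i, 2 * ε < q i} = ⋂ i, {q : τ → ℝ | 2 * ε < q i} := by
        ext; simp
      change IsOpen {q : τ → ℝ | ∀ i, 2 * ε < q i}
      rw [this]
      exact isOpen_iInter_of_finite fun i => isOpen_lt continuous_const (continuous_apply i)
    · have hc : Continuous fun q : τ → ℝ => ∑ i, q i + 2 * ε := by fun_prop
      exact isOpen_lt hc continuous_const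
  have hUne : U.Nonempty := by
    refine ⟨fun _ => 4 * ε, fun _ => by linarith, ?_⟩
    simp only [Finset.sum_const, Finset.card_univ, Fintype.card_coe, nsmul_eq_mul]
    nlinarith
  obtain ⟨q, hqU, hqw⟩ := hwD.inter_open_nonempty U hUo hUne
  let e : (τ → ℝ) → Fin n → ℝ := fun q i =>
    if h : i ∈ τ then q ⟨i, h⟩ else if i = v then 1 - ∑ k, q k else 0
  have heτ : ∀ q (i : τ), e q i = q i := by
    intro q i
    simp [e]
  have hev : ∀ q, e q v = 1 - ∑ k, q k := by
    intro q
    simp [e, hvτ]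
  have heo : ∀ q i, i ∉ σ → e q i = 0 := by
    intro q i hi
    have h1 : i ∉ τ := fun h => hi (hτσ i h)
    have h2 : i ≠ v := by rintro rfl; exact hi hv
    simp [e, h1, h2]
  have hes : ∀ q, ∑ i, e q i = 1 := by
    intro q
    rw [← Finset.sum_subset (Finset.subset_univ σ) (fun i _ hi => heo q i hi),
      ← Finset.add_sum_erase σ _ hv, hev, ← hτ, ← Finset.sum_coe_sort τ]
    simp only [heτ]
    ring
  have hei : ∀ q q', e q = e q' → q = q' := by
    intro q q' h
    funext i
    rw [← heτ q i, h, heτ]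
  have hec : Continuous e := by
    refine continuous_pi fun i => ?_
    simp only [e]
    split_ifs <;> fun_prop
  let p := e q
  have hp2 : ∀ i ∈ σ, 2 * ε < p i := by
    intro i hi
    by_cases hiv : i = v
    · subst hiv
      simp only [p, hev]
      have := hqU.2
      linarith
    · have := hqU.1 ⟨i, hστ i hi hiv⟩
      rw [← heτ q ⟨i, hστ i hi hiv⟩] at this
      exact this
  -- the perturbed map
  let μ : S → ℝ := fun s => σ.inf' hσ (g s).1
  have hμc : Continuous μ := continuous_inf' hσ (fun s => (g s).1) hcg
  let φ : S → ℝ := fun s => min 1 (μ s / ε)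
  have hφc : Continuous φ := continuous_const.min (hμc.div_const _)
  have hμ0 : ∀ s, 0 ≤ μ s := fun s => Finset.le_inf' hσ _ fun i _ => (g s).2.1.1 i
  have hφ0 : ∀ s, 0 ≤ φ s := fun s => le_min zero_le_one (div_nonneg (hμ0 s) hε.le)
  have hφ1 : ∀ s, φ s ≤ 1 := fun s => min_le_left _ _
  have hφμ : ∀ s, φ s * ε ≤ μ s := by
    intro s
    have : φ s ≤ μ s / ε := min_le_right _ _
    rwa [le_div_iff₀ hε] at this
  let h : S → Fin n → ℝ := fun s i => (g s).1 i + φ s * (e (w s) i - (g s).1 i)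
  have hhc : Continuous h := by
    refine continuous_pi fun i => ?_
    have c1 : Continuous fun s => (g s).1 i := (continuous_apply i).comp hcg
    have c2 : Continuous fun s => e (w s) i := (continuous_apply i).comp (hec.comp hwc)
    exact c1.add (hφc.mul (c2.sub c1))
  have hcase : ∀ s, (∀ i, i ∉ σ → (g s).1 i = 0) ∨ φ s = 0 := by
    intro s
    by_cases hs : σ ⊆ Finset.univ.filter fun v => (g s).1 v ≠ 0
    · left
      have := hmax _ (g s).2.2 hs
      intro i hi
      by_contra hc
      apply hi
      rw [← this]
      simp [hc]
    · right
      obtain ⟨i, hi, hiγ⟩ := Finset.not_subset.1 hs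
      have h0 : (g s).1 i = 0 := by
        by_contra hc; exact hiγ (by simp [hc])
      have h1 : μ s ≤ (g s).1 i := Finset.inf'_le _ hi
      have h2 : μ s = 0 := le_antisymm (h1.trans h0.le) (hμ0 s)
      simp [φ, h2]
  have hclose : ∀ s, (∀ i, i ∉ σ → (g s).1 i = 0) → ∀ i ∈ σ, |e (w s) i - (g s).1 i| ≤ ε := by
    intro s hs i hi
    have hδε : δ ≤ ε := by
      have : (1 : ℝ) ≤ σ.card := by exact_mod_cast Finset.card_pos.2 hσ
      nlinarith
    by_cases hiv : i = v
    · subst hiv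
      have hsum : (g s).1 i = 1 - ∑ k : τ, (g s).1 k := by
        have h1 := (g s).2.1.2
        rw [← Finset.sum_subset (Finset.subset_univ σ) (fun i _ hi => hs i hi),
          ← Finset.add_sum_erase σ _ hv, ← hτ, ← Finset.sum_coe_sort τ] at h1
        linarith
      rw [hev, hsum]
      have : (1 - ∑ k, w s k - (1 - ∑ k : τ, (g s).1 k)) = - ∑ k : τ, (w s k - (g s).1 k) := by
        rw [Finset.sum_sub_distrib]; ring
      rw [this, abs_neg]
      calc |∑ k : τ, (w s k - (g s).1 k)| ≤ ∑ k : τ, |w s k - (g s).1 k| :=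
            Finset.abs_sum_le_sum_abs _ _
        _ ≤ ∑ k : τ, δ := Finset.sum_le_sum fun k _ => (hwd s k).le
        _ = τ.card * δ := by simp
        _ ≤ ε := by nlinarith
    · have := hwd s ⟨i, hστ i hi hiv⟩
      rw [← heτ (w s) ⟨i, hστ i hi hiv⟩] at this
      exact this.le.trans hδε
  have hhz : ∀ s i, (g s).1 i = 0 → h s i = 0 ∨ i ∈ σ := by
    intro s i hi
    by_cases hiσ : i ∈ σ
    · right; exact hiσ
    · left; simp [h, hi, heo _ i hiσ]
  have hhK : ∀ s, h s ∈ realization n K ∧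
      ∃ γ ∈ K, ∀ i, i ∉ γ → (g s).1 i = 0 ∧ h s i = 0 := by
    intro s
    have hgγ : ∀ i, i ∉ (Finset.univ.filter fun v => (g s).1 v ≠ 0) → (g s).1 i = 0 := by
      intro i hi
      by_contra hc
      exact hi (by simp [hc])
    by_cases hφz : φ s = 0
    · have hhg : h s = (g s).1 := by
        funext i
        simp [h, hφz]
      rw [hhg]
      exact ⟨(g s).2, _, (g s).2.2, fun i hi => ⟨hgγ i hi, hgγ i hi⟩⟩
    · have hs := (hcase s).resolve_right hφz
      have hpos : ∀ i ∈ σ, 0 < (g s).1 i := by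
        intro i hi
        have h1 : μ s ≤ (g s).1 i := Finset.inf'_le _ hi
        have h2 : 0 < φ s * ε := mul_pos (lt_of_le_of_ne (hφ0 s) (Ne.symm hφz)) hε
        linarith [hφμ s]
      have hz : ∀ i, i ∉ (Finset.univ.filter fun v => (g s).1 v ≠ 0) →
          (g s).1 i = 0 ∧ h s i = 0 := by
        intro i hi
        refine ⟨hgγ i hi, (hhz s i (hgγ i hi)).resolve_right fun hiσ => ?_⟩
        exact (hpos i hiσ).ne' (hgγ i hi)
      refine ⟨mem_real_of hdown (g s).2.2 ?_ ?_ (fun i hi => (hz i hi).2), _, (g s).2.2, hz⟩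
      · intro i
        by_cases hiσ : i ∈ σ
        · have h1 : μ s ≤ (g s).1 i := Finset.inf'_le _ hiσ
          have h2 := (abs_le.1 (hclose s hs i hiσ)).1
          have h3 : φ s * (-ε) ≤ φ s * (e (w s) i - (g s).1 i) :=
            mul_le_mul_of_nonneg_left h2 (hφ0 s)
          have h4 := hφμ s
          simp only [h]
          linarith
        · simp [h, hs i hiσ, heo _ i hiσ]
      · simp only [h]
        rw [Finset.sum_add_distrib, ← Finset.mul_sum, Finset.sum_sub_distrib, hes, (g s).2.1.2]
        ring
  have hhp : ∀ s, h s ≠ p := by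
    intro s hsp
    by_cases hμε : ε ≤ μ s
    · have hφs : φ s = 1 := by
        simp only [φ]
        rw [min_eq_left]
        rwa [le_div_iff₀ hε, one_mul]
      apply hqw
      refine ⟨s, hei _ _ ?_⟩
      rw [show e q = p from rfl, ← hsp]
      funext i
      simp [h, hφs]
    · push Not at hμε
      obtain ⟨i0, hi0, hti0⟩ := Finset.exists_mem_eq_inf' hσ (g s).1
      have h1 : μ s = (g s).1 i0 := hti0
      have h2 := hp2 i0 hi0
      rw [← hsp] at h2
      simp only [h] at h2
      rcases hcase s with hs | hs
      · have h3 := (abs_le.1 (hclose s hs i0 hi0)).2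
        have h4 := mul_le_mul_of_nonneg_left h3 (hφ0 s)
        have h5 : φ s * ε ≤ 1 * ε := mul_le_mul_of_nonneg_right (hφ1 s) hε.le
        linarith
      · rw [hs] at h2
        linarith
  let g1 : C(S, realization n K) := ⟨fun s => ⟨h s, (hhK s).1⟩, Continuous.subtype_mk hhc _⟩
  have hg1 : g1.Nullhomotopic := radial_step hdown σ hσ hmax p
    (fun i hi => by have := hp2 i hi; linarith) (fun i hi => heo q i hi) (hes q) g1 hhp hnull
  exact null_of_step subset_rfl hdown g g1 (fun s => (hhK s).2) hg1

/-- The boundary of a cube, as a sphere for the sup norm. -/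
abbrev CubeSphere (j : ℕ) : Set (Fin (j + 1) → ℝ) := Metric.sphere 0 1

/-- Restrictions to the cube sphere of smooth functions. -/
def smoothAlg (j : ℕ) : Subalgebra ℝ C(CubeSphere j, ℝ) where
  carrier := {f | ∃ F : (Fin (j + 1) → ℝ) → ℝ, ContDiff ℝ 1 F ∧ ∀ s, f s = F s.1}
  mul_mem' := by
    rintro f g ⟨F, hF, hf⟩ ⟨G, hG, hg⟩
    exact ⟨fun x => F x * G x, hF.mul hG, fun s => by simp [hf, hg]⟩
  add_mem' := by
    rintro f g ⟨F, hF, hf⟩ ⟨G, hG, hg⟩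
    exact ⟨fun x => F x + G x, hF.add hG, fun s => by simp [hf, hg]⟩
  algebraMap_mem' := by
    intro r
    exact ⟨fun _ => r, contDiff_const, fun s => by simp⟩

theorem smoothAlg_sep (j : ℕ) : (smoothAlg j).SeparatesPoints := by
  intro x y hxy
  have : ∃ i, x.1 i ≠ y.1 i := by
    by_contra hc
    push Not at hc
    exact hxy (Subtype.ext (funext hc))
  obtain ⟨i, hi⟩ := this
  refine ⟨fun s => s.1 i, ⟨⟨fun s => s.1 i, (continuous_apply i).comp continuous_subtype_val⟩, ?_, rfl⟩, hi⟩
  exact ⟨fun x => x i, contDiff_apply ℝ ℝ i, fun s => rfl⟩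

theorem exists_coord_of_sphere {m : ℕ} {x : Fin m → ℝ} (hx : ‖x‖ = 1) :
    ∃ i, x i = 1 ∨ x i = -1 := by
  by_contra hc
  push Not at hc
  have : ‖x‖ < 1 := by
    rw [pi_norm_lt_iff one_pos]
    intro i
    refine lt_of_le_of_ne (hx ▸ norm_le_pi_norm x i) ?_
    intro h
    rw [Real.norm_eq_abs, abs_eq one_pos.le] at h
    rcases h with h | h
    · exact (hc i).1 h
    · exact (hc i).2 h
  linarith

theorem sphere_approx (j : ℕ) {τ : Type} [Fintype τ] (hj : j < Fintype.card τ)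
    (f : CubeSphere j → τ → ℝ) (hf : Continuous f) (δ : ℝ) (hδ : 0 < δ) :
    ∃ w : CubeSphere j → τ → ℝ, Continuous w ∧ (∀ s i, |w s i - f s i| < δ) ∧
      Dense (Set.range w)ᶜ := by
  have : ∀ i, ∃ F : (Fin (j + 1) → ℝ) → ℝ, ContDiff ℝ 1 F ∧
      ∀ s : CubeSphere j, |F s.1 - f s i| < δ := by
    intro i
    obtain ⟨⟨g, F, hF, hg⟩, hgf⟩ :=
      ContinuousMap.exists_mem_subalgebra_near_continuous_of_separatesPoints (smoothAlg j)
        (smoothAlg_sep j) (fun s => f s i) ((continuous_apply i).comp hf) δ hδ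
    refine ⟨F, hF, fun s => ?_⟩
    rw [← hg]
    exact hgf s
  choose F hF hFd using this
  have hFF : ContDiff ℝ 1 (fun x i => F i x) := contDiff_pi.2 hF
  refine ⟨fun s i => F i s.1, ?_, fun s i => hFd i s, ?_⟩
  · exact hFF.continuous.comp continuous_subtype_val
  · apply dense_compl_of_dimH_lt_finrank
    let G : Fin (j + 1) × Bool → (Fin j → ℝ) → τ → ℝ := fun q y i =>
      F i (q.1.insertNth (if q.2 then (1 : ℝ) else -1) y)
    have hG : ∀ q, ContDiff ℝ 1 (G q) := by
      intro q
      refine hFF.comp (contDiff_pi.2 fun k => ?_)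
      induction k using q.1.succAboveCases with
      | x => simpa using contDiff_const
      | p k => simpa using contDiff_apply ℝ ℝ k
    have hsub : Set.range (fun (s : CubeSphere j) i => F i s.1) ⊆ ⋃ q, Set.range (G q) := by
      rintro _ ⟨s, rfl⟩
      obtain ⟨i, hi⟩ := exists_coord_of_sphere (mem_sphere_zero_iff_norm.1 s.2)
      rw [Set.mem_iUnion]
      rcases hi with hi | hi
      · refine ⟨(i, true), i.removeNth s.1, ?_⟩
        funext k
        simp only [G, if_true, ← hi, Fin.insertNth_self_removeNth]
      · refine ⟨(i, false), i.removeNth s.1, ?_⟩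
        funext k
        simp [G, ← hi]
    calc dimH _ ≤ dimH (⋃ q, Set.range (G q)) := dimH_mono hsub
      _ = ⨆ q, dimH (Set.range (G q)) := dimH_iUnion _
      _ ≤ (j : ENNReal) := by
        refine iSup_le fun q => (hG q).dimH_range_le.trans ?_
        simp
      _ < _ := by
        rw [Module.finrank_fintype_fun_eq_card]
        exact_mod_cast hj

/-- Polar coordinates on the cube. -/
def polar (j : ℕ) : C(unitInterval × CubeSphere j, Metric.closedBall (0 : Fin (j + 1) → ℝ) 1) where
  toFun q := ⟨(q.1 : ℝ) • q.2.1, by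
    rw [mem_closedBall_zero_iff, norm_smul, mem_sphere_zero_iff_norm.1 q.2.2, mul_one,
      Real.norm_eq_abs, abs_of_nonneg q.1.2.1]
    exact q.1.2.2⟩
  continuous_toFun := Continuous.subtype_mk
    ((continuous_subtype_val.comp continuous_fst).smul
      (continuous_subtype_val.comp continuous_snd)) _

theorem polar_quotient (j : ℕ) : Topology.IsQuotientMap (polar j) := by
  apply (polar j).continuous.isClosedMap.isQuotientMap (polar j).continuous
  rintro ⟨x, hx⟩
  rw [mem_closedBall_zero_iff] at hx
  by_cases h0 : x = 0
  · refine ⟨(0, ⟨fun _ => 1, ?_⟩), ?_⟩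
    · rw [mem_sphere_zero_iff_norm]; simp
    · apply Subtype.ext
      simp [polar, h0]
  · have hn : ‖x‖ ≠ 0 := norm_ne_zero_iff.2 h0
    refine ⟨(⟨‖x‖, norm_nonneg _, hx⟩, ⟨‖x‖⁻¹ • x, ?_⟩), ?_⟩
    · rw [mem_sphere_zero_iff_norm, norm_smul, norm_inv, norm_norm, inv_mul_cancel₀ hn]
    · apply Subtype.ext
      simp [polar, smul_smul, hn]

theorem extend_of_null {X : Type*} [TopologicalSpace X] (j : ℕ) (g : C(CubeSphere j, X))
    (hg : g.Nullhomotopic) :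
    ∃ F : C(Metric.closedBall (0 : Fin (j + 1) → ℝ) 1, X),
      ∀ (y : Metric.closedBall (0 : Fin (j + 1) → ℝ) 1) (h : ‖y.1‖ = 1),
        F y = g ⟨y.1, mem_sphere_zero_iff_norm.2 h⟩ := by
  obtain ⟨c, hc⟩ := hg
  obtain ⟨H⟩ := hc.symm
  have hfac : Function.FactorsThrough H.toContinuousMap (polar j) := by
    rintro ⟨t, s⟩ ⟨t', s'⟩ h
    have h1 : (t : ℝ) • s.1 = (t' : ℝ) • s'.1 := congrArg Subtype.val h
    have h2 : (t : ℝ) = t' := by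
      have := congrArg norm h1
      rwa [norm_smul, norm_smul, mem_sphere_zero_iff_norm.1 s.2, mem_sphere_zero_iff_norm.1 s'.2,
        mul_one, mul_one, Real.norm_eq_abs, Real.norm_eq_abs, abs_of_nonneg t.2.1,
        abs_of_nonneg t'.2.1] at this
    have h3 : t = t' := Subtype.ext h2
    subst h3
    by_cases ht : (t : ℝ) = 0
    · have ht' : t = 0 := Subtype.ext ht
      subst ht'
      exact (H.map_zero_left s).trans (H.map_zero_left s').symm
    · have : s = s' := Subtype.ext (smul_right_injective _ ht h1)
      rw [this]
  refine ⟨(polar_quotient j).lift H.toContinuousMap hfac, ?_⟩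
  intro y hy
  have hcomp := (polar_quotient j).lift_comp H.toContinuousMap hfac
  have h1 := DFunLike.congr_fun hcomp
    ((1 : unitInterval), (⟨y.1, mem_sphere_zero_iff_norm.2 hy⟩ : CubeSphere j))
  have h2 : polar j ((1 : unitInterval), (⟨y.1, mem_sphere_zero_iff_norm.2 hy⟩ : CubeSphere j))
      = y := by
    apply Subtype.ext
    simp [polar]
  rw [ContinuousMap.comp_apply, h2] at h1
  rw [h1]
  exact H.map_one_left _

/-- Clamping of real vectors to the unit cube, after rescaling. -/
def clampCube (j : ℕ) (x : Fin (j + 1) → ℝ) : Fin j → unitInterval :=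
  fun i => Set.projIcc (0 : ℝ) 1 zero_le_one ((x i.succ + 1) / 2)

theorem continuous_clampCube (j : ℕ) : Continuous (clampCube j) := by
  refine continuous_pi fun i => continuous_projIcc.comp ?_
  fun_prop

theorem clampCube_boundary (j : ℕ) (x : Fin (j + 1) → ℝ) (i : Fin j)
    (h : x i.succ = 1 ∨ x i.succ = -1) : clampCube j x ∈ Cube.boundary (Fin j) := by
  refine ⟨i, ?_⟩
  rcases h with h | h
  · right
    simp only [clampCube, h]
    exact Set.projIcc_of_right_le _ (by norm_num)
  · left
    simp only [clampCube, h]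
    exact Set.projIcc_of_le_left _ (by norm_num)

/-- The map on the boundary of the cube associated with a generalized loop. -/
def sphereMap {X : Type*} [TopologicalSpace X] {x : X} (j : ℕ) (f : GenLoop (Fin j) X x) :
    C(CubeSphere j, X) where
  toFun s := if s.1 0 ≤ 0 then x else f (clampCube j s.1)
  continuous_toFun := by
    refine Continuous.if_le continuous_const ?_
      ((continuous_apply 0).comp continuous_subtype_val) continuous_const ?_
    · exact f.1.continuous.comp ((continuous_clampCube j).comp continuous_subtype_val)
    · intro s hs
      obtain ⟨i, hi⟩ := exists_coord_of_sphere (mem_sphere_zero_iff_norm.1 s.2)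
      induction i using Fin.cases with
      | zero => rw [hs] at hi; norm_num at hi
      | succ i => exact (f.2 _ (clampCube_boundary j s.1 i hi)).symm

theorem subsingleton_of_null {X : Type*} [TopologicalSpace X] (j : ℕ)
    (hX : ∀ g : C(CubeSphere j, X), g.Nullhomotopic) (x : X) :
    Subsingleton (HomotopyGroup (Fin j) X x) := by
  have key : ∀ f : GenLoop (Fin j) X x, GenLoop.Homotopic GenLoop.const f := by
    intro f
    obtain ⟨F, hF⟩ := extend_of_null j (sphereMap j f) (hX _)
    let c : unitInterval × (Fin j → unitInterval) → Fin (j + 1) → ℝ := fun q =>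
      Fin.cons (2 * (q.1 : ℝ) - 1) (fun i => 2 * (q.2 i : ℝ) - 1)
    have hc0 : ∀ q, c q 0 = 2 * (q.1 : ℝ) - 1 := fun q => rfl
    have hcs : ∀ q i, c q (Fin.succ i) = 2 * (q.2 i : ℝ) - 1 := fun q i => rfl
    have hcc : Continuous c := by
      refine continuous_pi fun i => ?_
      induction i using Fin.cases with
      | zero => simp only [hc0]; fun_prop
      | succ i => simp only [hcs]; fun_prop
    have habs : ∀ t : unitInterval, ‖2 * (t : ℝ) - 1‖ ≤ 1 := by
      intro t
      have := t.2.1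
      have := t.2.2
      rw [Real.norm_eq_abs, abs_le]
      constructor <;> linarith
    have hcn : ∀ q, ‖c q‖ ≤ 1 := by
      intro q
      rw [pi_norm_le_iff_of_nonneg zero_le_one]
      intro i
      induction i using Fin.cases with
      | zero => exact habs _
      | succ i => exact habs _
    have hc1 : ∀ q i, (c q i = 1 ∨ c q i = -1) → ‖c q‖ = 1 := by
      intro q i hi
      refine le_antisymm (hcn q) ?_
      have h1 := norm_le_pi_norm (c q) i
      rcases hi with hi | hi <;> rw [hi] at h1 <;> simpa using h1
    have hclamp : ∀ q, clampCube j (c q) = q.2 := by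
      intro q
      funext i
      simp only [clampCube, hcs]
      rw [show (2 * (q.2 i : ℝ) - 1 + 1) / 2 = q.2 i by ring]
      exact Set.projIcc_val _ _
    let H : C(unitInterval × (Fin j → unitInterval), X) :=
      ⟨fun q => F ⟨c q, mem_closedBall_zero_iff.2 (hcn q)⟩,
        F.continuous.comp (Continuous.subtype_mk hcc _)⟩
    have hH : ∀ q, ‖c q‖ = 1 → H q = if 2 * (q.1 : ℝ) - 1 ≤ 0 then x else f q.2 := by
      intro q hq
      have h1 : H q = sphereMap j f ⟨c q, mem_sphere_zero_iff_norm.2 hq⟩ := hF _ hq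
      rw [h1]
      simp only [sphereMap, ContinuousMap.coe_mk, hclamp, hc0]
    refine ⟨⟨⟨H, ?_, ?_⟩, ?_⟩⟩
    · intro y
      have := hH (0, y) (hc1 _ 0 (Or.inr (by simp [hc0])))
      simpa using this
    · intro y
      have := hH (1, y) (hc1 _ 0 (Or.inl (by simp [hc0]; norm_num)))
      norm_num at this
      exact this
    · intro t y hy
      obtain ⟨i, hi⟩ := id hy
      have := hH (t, y) (hc1 _ i.succ (by
        rcases hi with hi | hi
        · right; simp [hcs, hi]
        · left; simp [hcs, hi]; norm_num))
      have hfy : f y = x := f.2 y hy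
      simp only [hfy, ite_self] at this
      exact this
  constructor
  intro a b
  induction a using Quotient.inductionOn with | _ a =>
  induction b using Quotient.inductionOn with | _ b =>
  exact Quotient.sound ((key a).symm.trans (key b))

/-- Existence of a free pair in top dimension. -/
theorem exists_free {n : ℕ} {K : Set (Finset (Fin n))}
    {D : Set (Finset (Fin n) × Finset (Fin n))} (d : ℕ)
    (hDmem : ∀ q ∈ D, q.1 ∈ K ∧ q.2 ∈ K ∧ q.1 ⊆ q.2 ∧
      q.2.card = q.1.card + 1 ∧ q.1 ≠ ∅)
    (hD1 : ∀ α β β', (α, β) ∈ D → (α, β') ∈ D → β = β')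
    (hacyclic : ¬ ∃ (m : ℕ) (a b : ℕ → Finset (Fin n)), 0 < m ∧
      (∀ i < m, (a i, b i) ∈ D ∧ a (i + 1) ⊆ b i ∧
        (a (i + 1)).card + 1 = (b i).card ∧ a (i + 1) ≠ a i) ∧
      a m = a 0)
    (htop : ∀ γ ∈ K, γ.card ≤ d)
    (hmatch : ∀ γ ∈ K, γ.card = d → ∃ α, (α, γ) ∈ D)
    (γ₀ : Finset (Fin n)) (hγ₀ : γ₀ ∈ K) (hγ₀c : γ₀.card = d) :
    ∃ α β, (α, β) ∈ D ∧ ∀ γ ∈ K, α ⊆ γ → γ = α ∨ γ = β := by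
  by_contra hcon
  push Not at hcon
  let T := {α : Finset (Fin n) // ∃ β, (α, β) ∈ D ∧ β.card = d}
  have hstep : ∀ α : T, ∃ α' : T, ∃ γ, (α'.1, γ) ∈ D ∧ α.1 ⊆ γ ∧ α.1.card + 1 = γ.card ∧
      α.1 ≠ α'.1 := by
    rintro ⟨α, β, hαβ, hβ⟩
    obtain ⟨γ, hγ, hαγ, hγα, hγβ⟩ := hcon α β hαβ
    have hlt : α.card < γ.card :=
      Finset.card_lt_card (Finset.ssubset_iff_subset_ne.2 ⟨hαγ, hγα.symm⟩)
    have h1 := (hDmem _ hαβ).2.2.2.1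
    simp only at h1
    have h2 := htop γ hγ
    have h3 : γ.card = d := by omega
    obtain ⟨α', hα'⟩ := hmatch γ hγ h3
    refine ⟨⟨α', γ, hα', h3⟩, γ, hα', hαγ, by simp only; omega, ?_⟩
    intro h
    simp only at h
    subst h
    exact hγβ (hD1 _ _ _ hα' hαβ)
  choose prev up hup using hstep
  obtain ⟨α₀, hα₀⟩ := hmatch γ₀ hγ₀ hγ₀c
  let c : ℕ → T := fun k => prev^[k] ⟨α₀, γ₀, hα₀, hγ₀c⟩
  have hc : ∀ k, c (k + 1) = prev (c k) := fun k => Function.iterate_succ_apply' _ _ _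
  obtain ⟨p, q, hpq, hcpq⟩ : ∃ p q, p < q ∧ c p = c q := by
    obtain ⟨x, y, hxy, h⟩ := Finite.exists_ne_map_eq_of_infinite c
    rcases lt_or_gt_of_ne hxy with h' | h'
    · exact ⟨x, y, h', h⟩
    · exact ⟨y, x, h', h.symm⟩
  apply hacyclic
  refine ⟨q - p, fun i => (c (q - i)).1, fun i => up (c (q - (i + 1))), by omega, ?_, ?_⟩
  · intro i hi
    have h1 : c (q - i) = prev (c (q - (i + 1))) := by
      rw [← hc]; congr 1; omega
    have h2 := hup (c (q - (i + 1)))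
    rw [← h1] at h2
    exact h2
  · simp only [Nat.sub_zero]
    rw [← hcpq]
    congr 2
    omega

theorem null_main (n N j : ℕ) (hj : j < N) : ∀ (k : ℕ) 
    (K : Set (Finset (Fin n))) (_ : K.ncard = k)
    (_ : ∀ σ ∈ K, ∀ τ, τ ⊆ σ → τ ∈ K)
    (D : Set (Finset (Fin n) × Finset (Fin n)))
    (_ : ∀ q ∈ D, q.1 ∈ K ∧ q.2 ∈ K ∧ q.1 ⊆ q.2 ∧
      q.2.card = q.1.card + 1 ∧ q.1 ≠ ∅)
    (_ : ∀ α β β', (α, β) ∈ D → (α, β') ∈ D → β = β')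
    (_ : ∀ α α' β, (α, β) ∈ D → (α', β) ∈ D → α = α')
    (_ : ∀ α β γ, (α, β) ∈ D → (β, γ) ∈ D → False)
    (_ : ¬ ∃ (m : ℕ) (a b : ℕ → Finset (Fin n)), 0 < m ∧
      (∀ i < m, (a i, b i) ∈ D ∧ a (i + 1) ⊆ b i ∧
        (a (i + 1)).card + 1 = (b i).card ∧ a (i + 1) ≠ a i) ∧
      a m = a 0)
    (σ₀ : Finset (Fin n)) (_ : σ₀ ∈ K) (_ : σ₀.card = 1)
    (_ : ∀ β, (σ₀, β) ∉ D ∧ (β, σ₀) ∉ D)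
    (_ : ∀ σ ∈ K, σ ≠ ∅ → σ ≠ σ₀ → (∀ β, (σ, β) ∉ D ∧ (β, σ) ∉ D) →
      N + 1 ≤ σ.card) (g : C(CubeSphere j, realization n K)), g.Nullhomotopic := by
  intro k
  induction k using Nat.strong_induction_on with
  | _ k ih =>
  intro K hk hdown D hDmem hD1 hD2 hD3 hacyclic σ₀ hσ₀ hσ₀card hσ₀crit hcrit g
  obtain ⟨γ₀, hγ₀, hγmax⟩ := Set.exists_max_image K Finset.card (Set.toFinite K) ⟨σ₀, hσ₀⟩
  have hd1 : 1 ≤ γ₀.card := hσ₀card ▸ hγmax σ₀ hσ₀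
  by_cases hex : ∃ σ ∈ K, σ.card = γ₀.card ∧ σ ≠ σ₀ ∧ ∀ β, (σ, β) ∉ D ∧ (β, σ) ∉ D
  · -- remove a critical simplex
    obtain ⟨σ, hσK, hσc, hσσ₀, hσcrit⟩ := hex
    have hσne : σ ≠ ∅ := by rintro rfl; simp at hσc; omega
    have hσN := hcrit σ hσK hσne hσσ₀ hσcrit
    have hmax : ∀ γ ∈ K, σ ⊆ γ → γ = σ := fun γ hγ h =>
      (Finset.eq_of_subset_of_card_le h (by rw [hσc]; exact hγmax γ hγ)).symm
    refine cell_step hdown j ?_ σ (by omega) hmax g ?_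
    · intro τ hτ f hf δ hδ
      exact sphere_approx j (by simpa using hτ) f hf δ hδ
    · refine ih (K \ {σ}).ncard ?_ (K \ {σ}) rfl ?_ D ?_ hD1 hD2 hD3 hacyclic σ₀
        ⟨hσ₀, fun h => hσσ₀ (Set.mem_singleton_iff.1 h).symm⟩ hσ₀card hσ₀crit
        (fun σ hσ => hcrit σ hσ.1)
      · rw [← hk]
        exact Set.ncard_sdiff_singleton_lt_of_mem hσK (Set.toFinite K)
      · rintro γ ⟨hγ, hγ'⟩ τ hτ
        refine ⟨hdown γ hγ τ hτ, fun h => hγ' ?_⟩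
        rw [Set.mem_singleton_iff] at h ⊢
        subst h
        exact hmax γ hγ hτ
      · intro q hq
        obtain ⟨h1, h2, h3⟩ := hDmem q hq
        refine ⟨⟨h1, fun h => ?_⟩, ⟨h2, fun h => ?_⟩, h3⟩
        · exact (hσcrit q.2).1 (by rw [← Set.mem_singleton_iff.1 h]; exact hq)
        · exact (hσcrit q.1).2 (by rw [← Set.mem_singleton_iff.1 h]; exact hq)
  · push Not at hex
    by_cases hd : γ₀.card = 1
    · -- a single point
      have hKs : ∀ γ ∈ K, γ ≠ ∅ → γ = σ₀ := by
        intro γ hγ hne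
        by_contra hc
        have hγ1 : γ.card = 1 := by
          have h1 := hγmax γ hγ
          have h2 := Finset.card_pos.2 (Finset.nonempty_iff_ne_empty.2 hne)
          omega
        obtain ⟨β, hβ⟩ := hex γ hγ (by omega) hc
        by_cases h1 : (γ, β) ∈ D
        · have h2 := hDmem _ h1
          have h3 := hγmax _ h2.2.1
          have h4 := h2.2.2.2.1
          simp only at h3 h4
          omega
        · have h2 := hDmem _ (hβ h1)
          have h4 := h2.2.2.2.1
          simp only at h4
          exact h2.2.2.2.2 (Finset.card_eq_zero.1 (by simp only; omega))
      obtain ⟨v, hv⟩ := Finset.card_eq_one.1 hσ₀card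
      have hsub : ∀ x ∈ realization n K, x = Pi.single v 1 := by
        intro x hx
        have hne : (Finset.univ.filter fun v => x v ≠ 0) ≠ ∅ := by
          intro h
          have hz : ∀ i, x i = 0 := by
            intro i
            by_contra hc
            have : i ∈ (Finset.univ.filter fun v => x v ≠ 0) := by simp [hc]
            rw [h] at this
            simp at this
          have := hx.1.2
          simp [hz] at this
        have h1 := hKs _ hx.2 hne
        rw [hv] at h1
        have hz : ∀ i, i ≠ v → x i = 0 := by
          intro i hi
          by_contra hc
          have : i ∈ (Finset.univ.filter fun v => x v ≠ 0) := by simp [hc]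
          rw [h1] at this
          exact hi (by simpa using this)
        have h2 := hx.1.2
        rw [Finset.sum_eq_single v (fun i _ hi => hz i hi) (by simp)] at h2
        funext i
        by_cases hi : i = v
        · subst hi; simp [h2]
        · simp [hi, hz i hi]
      let s₀ : CubeSphere j := ⟨fun _ => 1, by rw [mem_sphere_zero_iff_norm]; simp⟩
      refine ⟨g s₀, ?_⟩
      have : g = ContinuousMap.const _ (g s₀) := by
        ext1 s
        apply Subtype.ext
        rw [ContinuousMap.const_apply, hsub _ (g s).2, hsub _ (g s₀).2]
      rw [this]
      exact ContinuousMap.Homotopic.refl _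
    · -- collapse a free pair
      obtain ⟨α, β, hαβ, hfree⟩ := exists_free γ₀.card hDmem hD1 hacyclic hγmax (by
        intro γ hγ hγc
        obtain ⟨β, hβ⟩ := hex γ hγ hγc (by rintro rfl; omega)
        refine ⟨β, hβ fun h1 => ?_⟩
        have h2 := hDmem _ h1
        have h3 := hγmax _ h2.2.1
        have h4 := h2.2.2.2.1
        simp only at h3 h4
        omega) γ₀ hγ₀ rfl
      obtain ⟨hαK, hβK, hsub, hcard, hαne⟩ := hDmem _ hαβ
      simp only at hαK hβK hsub hcard hαne
      obtain ⟨v, hv, hβv⟩ : ∃ v, v ∉ α ∧ β = insert v α := by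
        obtain ⟨v, hv, h⟩ := (Finset.covBy_iff_exists_insert (s := α) (t := β)).1
          (Finset.covBy_iff_card_sdiff_eq_one.2 ⟨hsub, by
            rw [Finset.card_sdiff_of_subset hsub]; omega⟩)
        exact ⟨v, hv, h.symm⟩
      refine collapse_step hdown α β v (Finset.nonempty_iff_ne_empty.2 hαne) hv hβv hβK hfree g ?_
      refine ih (K \ {α, β}).ncard ?_ (K \ {α, β}) rfl ?_ (D \ {(α, β)}) ?_
        (fun a b b' h h' => hD1 a b b' h.1 h'.1) (fun a b b' h h' => hD2 a b b' h.1 h'.1)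
        (fun a b b' h h' => hD3 a b b' h.1 h'.1) ?_ σ₀ ⟨hσ₀, ?_⟩ hσ₀card
        (fun b => ⟨fun h => (hσ₀crit b).1 h.1, fun h => (hσ₀crit b).2 h.1⟩) ?_
      · rw [← hk]
        apply Set.ncard_lt_ncard _ (Set.toFinite K)
        refine ⟨fun _ h => h.1, fun h => ?_⟩
        exact (h hαK).2 (Or.inl rfl)
      · rintro γ ⟨hγ, hγ'⟩ τ hτ
        refine ⟨hdown γ hγ τ hτ, fun h => hγ' ?_⟩
        have : α ⊆ τ := by
          rcases h with h | h
          · rw [h]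
          · rw [Set.mem_singleton_iff.1 h]; exact hsub
        rcases hfree γ hγ (this.trans hτ) with h | h
        · left; exact h
        · right; exact h
      · rintro ⟨a, b⟩ ⟨hq, hq'⟩
        obtain ⟨h1, h2, h3⟩ := hDmem _ hq
        simp only [Set.mem_singleton_iff, Prod.mk.injEq] at hq'
        refine ⟨⟨h1, ?_⟩, ⟨h2, ?_⟩, h3⟩
        · rintro (h | h)
          · simp only at h
            subst h
            exact hq' ⟨rfl, hD1 _ _ _ hq hαβ⟩
          · simp only [Set.mem_singleton_iff] at h
            subst h
            exact hD3 _ _ _ hαβ hq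
        · rintro (h | h)
          · simp only at h
            subst h
            exact hD3 _ _ _ hq hαβ
          · simp only [Set.mem_singleton_iff] at h
            subst h
            exact hq' ⟨hD2 _ _ _ hq hαβ, rfl⟩
      · rintro ⟨m, a, b, hm, h, h'⟩
        exact hacyclic ⟨m, a, b, hm, fun i hi => ⟨(h i hi).1.1, (h i hi).2⟩, h'⟩
      · rintro (h | h)
        · subst h
          exact (hσ₀crit _).1 hαβ
        · rw [Set.mem_singleton_iff] at h
          subst h
          exact (hσ₀crit _).2 hαβ
      · rintro γ ⟨hγ, hγ'⟩ hne hneσ hγcrit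
        refine hcrit γ hγ hne hneσ fun b => ⟨fun h => ?_, fun h => ?_⟩
        · refine (hγcrit b).1 ⟨h, fun h1 => hγ' ?_⟩
          left
          exact (Prod.mk.inj (Set.mem_singleton_iff.1 h1)).1
        · refine (hγcrit b).2 ⟨h, fun h1 => hγ' ?_⟩
          right
          exact (Prod.mk.inj (Set.mem_singleton_iff.1 h1)).2

/-- **Forman's theorem** (discrete Morse theory; Theorem `ThmWedge`, second part).
Let `D` be a discrete vector field on a finite simplicial complex `K` (a matching on
the Hasse diagram pairing simplices with cofacets, each simplex in at most one pair,
the empty simplex unmatched) with no closed gradient paths. If `D` has exactly one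
critical (unmatched) `0`-simplex and all other critical simplices have dimension
`≥ N`, then (the geometric realization of) `K` is `(N-1)`-connected. -/
theorem forman_connectivity (n N : ℕ) (hN : 1 ≤ N)
    (K : Set (Finset (Fin n)))
    (hdown : ∀ σ ∈ K, ∀ τ, τ ⊆ σ → τ ∈ K)
    (D : Set (Finset (Fin n) × Finset (Fin n)))
    -- `D` pairs a simplex with a cofacet; the empty simplex is unmatched
    (hDmem : ∀ q ∈ D, q.1 ∈ K ∧ q.2 ∈ K ∧ q.1 ⊆ q.2 ∧
      q.2.card = q.1.card + 1 ∧ q.1 ≠ ∅)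
    -- each simplex participates in at most one pair
    (hD1 : ∀ α β β', (α, β) ∈ D → (α, β') ∈ D → β = β')
    (hD2 : ∀ α α' β, (α, β) ∈ D → (α', β) ∈ D → α = α')
    (hD3 : ∀ α β γ, (α, β) ∈ D → (β, γ) ∈ D → False)
    -- acyclicity: no closed gradient path
    (hacyclic : ¬ ∃ (m : ℕ) (a b : ℕ → Finset (Fin n)), 0 < m ∧
      (∀ i < m, (a i, b i) ∈ D ∧ a (i + 1) ⊆ b i ∧
        (a (i + 1)).card + 1 = (b i).card ∧ a (i + 1) ≠ a i) ∧
      a m = a 0)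
    -- exactly one critical `0`-simplex …
    (σ₀ : Finset (Fin n)) (hσ₀ : σ₀ ∈ K) (hσ₀card : σ₀.card = 1)
    (hσ₀crit : ∀ β, (σ₀, β) ∉ D ∧ (β, σ₀) ∉ D)
    -- … and every other critical simplex has dimension `≥ N`
    (hcrit : ∀ σ ∈ K, σ ≠ ∅ → σ ≠ σ₀ → (∀ β, (σ, β) ∉ D ∧ (β, σ) ∉ D) →
      N + 1 ≤ σ.card) :
    -- conclusion: the realization of `K` is `(N-1)`-connected
    Nonempty (realization n K) ∧
    ∀ j < N, ∀ x : realization n K,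
      Subsingleton (HomotopyGroup (Fin j) (realization n K) x) := by
  refine ⟨?_, fun j hj x => subsingleton_of_null j (fun g => null_main n N j hj _ K rfl hdown D
    hDmem hD1 hD2 hD3 hacyclic σ₀ hσ₀ hσ₀card hσ₀crit hcrit g) x⟩
  obtain ⟨v, hv⟩ := Finset.card_eq_one.1 hσ₀card
  refine ⟨⟨Pi.single v 1, mem_real_of hdown hσ₀ ?_ ?_ ?_⟩⟩
  · intro i
    by_cases hi : i = v
    · subst hi; simp
    · simp [hi]
  · simp
  · intro i hi
    have : i ≠ v := by rintro rfl; exact hi (by simp [hv])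
    simp [this]
end
end

section
/- Fix r = p^ν a prime power, d ≥ 1, k = ⌈(r-1)d/r⌉, s = (r-1)d - r(k-1) with s < r, m = (2r-1)(k+1), color classes C_1, ..., C_{k+1} of size 2r-1 partitioning [m]. The configuration space 𝔠 of tuples (A_1,...,A_r;B) (disjoint rainbow sets A_i, at most s of them of size k+1, B the complement, B ≠ [m]) is (rk+s-2)-connected. -/
open scoped Classical

noncomputable section

/-- A simplex of the configuration space `𝔠`: a set of vertices `(v, i) ∈ [m] × [r]`
(meaning `v ∈ Aᵢ`) such that the resulting sets `A₁, …, A_r` are pairwise disjoint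
rainbow sets with at most `s` of them of cardinality `k+1`. -/
def IsConfSimplex (m r k s : ℕ) (C : Fin (k + 1) → Finset (Fin m))
    (S : Finset (Fin m × Fin r)) : Prop :=
  (∀ v : Fin m, ∀ i j : Fin r, (v, i) ∈ S → (v, j) ∈ S → i = j) ∧
  (∀ i : Fin r, ∀ c : Fin (k + 1),
    (S.filter fun q => q.2 = i ∧ q.1 ∈ C c).card ≤ 1) ∧
  ((Finset.univ.filter fun i : Fin r =>
    (S.filter fun q => q.2 = i).card = k + 1).card ≤ s)

/-- The geometric realization of `𝔠` inside the standard simplex on `[m] × [r]`. -/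
def confRealization (m r k s : ℕ) (C : Fin (k + 1) → Finset (Fin m)) :
    Set ((Fin m × Fin r) → ℝ) :=
  {x ∈ stdSimplex ℝ (Fin m × Fin r) |
    IsConfSimplex m r k s C (Finset.univ.filter fun q => x q ≠ 0)}

/-- `Good n K`: the complex `K` is built from nothing by adding intervals `[R, F]`. -/
inductive Good {V : Type*} (n : ℕ) : Set (Finset V) → Prop
  | empty : Good n ∅
  | step (K : Set (Finset V)) (R F : Finset V) : Good n K → R ⊆ F → (R = F → n ≤ F.card) →
      R ∉ K → (∀ S, S ⊆ F → ¬ R ⊆ S → S ∈ K) → Good n (K ∪ Set.Icc R F)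

theorem Good.lower {V : Type*} {n : ℕ} {K : Set (Finset V)} (h : Good n K) :
    ∀ S ∈ K, ∀ T, T ⊆ S → T ∈ K := by
  induction h with
  | empty => simp
  | step K R F hK hRF hn hR hS ih =>
    intro S hSK T hT
    rcases hSK with h | h
    · exact Or.inl (ih S h T hT)
    · by_cases hRT : R ⊆ T
      · exact Or.inr ⟨hRT, hT.trans h.2⟩
      · exact Or.inl (hS T (hT.trans h.2) hRT)

theorem Good.join_aux {V : Type*} {x : V} {R F S : Finset V} (hx : x ∉ R) :
    S ∈ Set.Icc (insert x R) (insert x F) ↔ x ∈ S ∧ S.erase x ∈ Set.Icc R F := by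
  simp only [Set.mem_Icc]
  constructor
  · rintro ⟨h1, h2⟩
    refine ⟨h1 (Finset.mem_insert_self _ _), ?_, ?_⟩
    · intro y hy
      exact Finset.mem_erase.2 ⟨fun h => hx (h ▸ hy), h1 (Finset.mem_insert_of_mem hy)⟩
    · intro y hy
      rw [Finset.mem_erase] at hy
      exact (Finset.mem_insert.1 (h2 hy.2)).resolve_left hy.1
  · rintro ⟨h0, h1, h2⟩
    refine ⟨?_, ?_⟩
    · rw [Finset.insert_subset_iff]
      exact ⟨h0, h1.trans (Finset.erase_subset _ _)⟩
    · rw [← Finset.insert_erase h0]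
      exact Finset.insert_subset_insert _ h2

theorem Good.delete {V : Type*} {n : ℕ} {x : V} {D L : Set (Finset V)} (hD : Good n D)
    (hL : Good (n - 1) L) (hxD : ∀ S ∈ D, x ∉ S) (hLD : L ⊆ D) :
    Good n (D ∪ {S | x ∈ S ∧ S.erase x ∈ L}) := by
  induction hL with
  | empty => simpa using hD
  | step L R F hK hRF hn hR hS ih =>
    have h1 := ih (Set.subset_union_left.trans hLD)
    have hF : F ∈ D := hLD (Or.inr ⟨hRF, le_rfl⟩)
    have hxF := hxD F hF
    have hxR : x ∉ R := fun h => hxF (hRF h)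
    have key := Good.step _ (insert x R) (insert x F) h1 (Finset.insert_subset_insert _ hRF)
      (by
        intro h
        have : R = F := by
          rw [← Finset.erase_insert hxR, ← Finset.erase_insert hxF, h]
        have := hn this
        rw [Finset.card_insert_of_notMem hxF]; omega)
      (by
        rintro (h | h)
        · exact hxD _ h (Finset.mem_insert_self _ _)
        · simp only [Set.mem_ofPred_eq, Finset.erase_insert hxR] at h
          exact hR h.2)
      (by
        intro S hSF hRS
        by_cases hxS : x ∈ S
        · right
          refine ⟨hxS, hS _ ?_ ?_⟩
          · rw [← Finset.erase_insert hxF]; exact Finset.erase_subset_erase _ hSF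
          · intro h; apply hRS
            rw [Finset.insert_subset_iff]
            exact ⟨hxS, h.trans (Finset.erase_subset _ _)⟩
        · left
          refine hD.lower F hF S ?_
          rwa [Finset.subset_insert_iff_of_notMem hxS] at hSF)
    convert key using 1
    ext S
    simp only [Set.mem_union, Set.mem_ofPred_eq, Good.join_aux hxR]
    tauto

theorem Good.cone {V : Type*} {n n' : ℕ} {x : V} {L : Set (Finset V)}
    (hL : Good n' L) (hxL : ∀ S ∈ L, x ∉ S) :
    Good n {S | S.erase x ∈ L} := by
  induction hL with
  | empty => simpa using Good.empty
  | step L R F hK hRF hn hR hS ih =>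
    have h1 := ih (fun S h => hxL S (Or.inl h))
    have hxF := hxL F (Or.inr ⟨hRF, le_rfl⟩)
    have hxR : x ∉ R := fun h => hxF (hRF h)
    have key := Good.step _ R (insert x F) h1 (hRF.trans (Finset.subset_insert _ _))
      (by
        intro h
        exact absurd (h ▸ Finset.mem_insert_self x F) hxR)
      (by
        simpa [Finset.erase_eq_of_notMem hxR] using hR)
      (by
        intro S hSF hRS
        refine hS _ ?_ ?_
        · rw [← Finset.erase_insert hxF]; exact Finset.erase_subset_erase _ hSF
        · exact fun h => hRS (h.trans (Finset.erase_subset _ _)))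
    convert key using 1
    ext S
    have : R ⊆ S.erase x ↔ R ⊆ S := by
      constructor
      · exact fun h => h.trans (Finset.erase_subset _ _)
      · intro h y hy
        exact Finset.mem_erase.2 ⟨fun h => hxR (h ▸ hy), h hy⟩
    simp only [Set.mem_union, Set.mem_ofPred_eq, Set.mem_Icc, this,
      Finset.subset_insert_iff]

/-- Partial rainbow placements with allowed vertices `A` and cells already used `D`. -/
def KK {V E W : Type*} (cell : V → E) (val : V → W) (I : Set (Finset E)) (A : Finset V)
    (D : Finset E) : Set (Finset V) :=
  {S | S ⊆ A ∧ Set.InjOn cell S ∧ Set.InjOn val S ∧ S.image cell ∪ D ∈ I}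

section
variable {V E W : Type*} {cell : V → E} {val : V → W} {I : Set (Finset E)}

theorem KK_mono (hI : ∀ X ∈ I, ∀ Y, Y ⊆ X → Y ∈ I) {A A' : Finset V} {D D' : Finset E}
    (hA : A ⊆ A') (hD : D' ⊆ D) : KK cell val I A D ⊆ KK cell val I A' D' := by
  rintro S ⟨h1, h2, h3, h4⟩
  exact ⟨h1.trans hA, h2, h3, hI _ h4 _ (Finset.union_subset_union_right hD)⟩

theorem KK_link {A : Finset V} {D : Finset E} {x : V} (hx : x ∈ A) {S : Finset V} (hxS : x ∈ S) :
    S ∈ KK cell val I A D ↔ S.erase x ∈ KK cell val I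
      (A.filter fun y => cell y ≠ cell x ∧ val y ≠ val x) (insert (cell x) D) := by
  have himg : (S.erase x).image cell ∪ insert (cell x) D = S.image cell ∪ D := by
    conv_rhs => rw [← Finset.insert_erase hxS]
    ext e; simp only [Finset.image_insert, Finset.mem_union, Finset.mem_insert]; tauto
  simp only [KK, Set.mem_ofPred_eq, himg]
  constructor
  · rintro ⟨h1, h2, h3, h4⟩
    refine ⟨?_, h2.mono (by simp), h3.mono (by simp), h4⟩
    intro y hy
    rw [Finset.mem_erase] at hy
    rw [Finset.mem_filter]
    exact ⟨h1 hy.2, fun h => hy.1 (h2 hy.2 hxS h), fun h => hy.1 (h3 hy.2 hxS h)⟩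
  · rintro ⟨h1, h2, h3, h4⟩
    have hmem : ∀ y ∈ S, y = x ∨ (y ∈ S.erase x ∧ y ∈ A ∧ cell y ≠ cell x ∧ val y ≠ val x) := by
      intro y hy
      by_cases h : y = x
      · exact Or.inl h
      · have := Finset.mem_erase.2 ⟨h, hy⟩
        exact Or.inr ⟨this, by simpa using h1 this⟩
    refine ⟨?_, ?_, ?_, h4⟩
    · intro y hy
      rcases hmem y hy with rfl | h
      · exact hx
      · exact h.2.1
    · intro y hy z hz hyz
      rcases hmem y hy with rfl | h <;> rcases hmem z hz with rfl | h'
      · rfl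
      · exact absurd hyz.symm h'.2.2.1
      · exact absurd hyz h.2.2.1
      · exact h2 h.1 h'.1 hyz
    · intro y hy z hz hyz
      rcases hmem y hy with rfl | h <;> rcases hmem z hz with rfl | h'
      · rfl
      · exact absurd hyz.symm h'.2.2.2
      · exact absurd hyz h.2.2.2
      · exact h3 h.1 h'.1 hyz

theorem KK_delete (hI : ∀ X ∈ I, ∀ Y, Y ⊆ X → Y ∈ I) {n : ℕ} {A : Finset V} {D : Finset E} {x : V}
    (hx : x ∈ A)
    (h1 : Good n (KK cell val I (A.erase x) D))
    (h2 : Good (n - 1) (KK cell val I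
      (A.filter fun y => cell y ≠ cell x ∧ val y ≠ val x) (insert (cell x) D))) :
    Good n (KK cell val I A D) := by
  have key := h1.delete h2 (x := x) (fun S hS h => by simpa using hS.1 h)
    (KK_mono hI (by
      intro y hy
      simp only [Finset.mem_filter] at hy
      exact Finset.mem_erase.2 ⟨fun h => hy.2.1 (h ▸ rfl), hy.1⟩) (Finset.subset_insert _ _))
  convert key using 1
  ext S
  by_cases hxS : x ∈ S
  · rw [KK_link hx hxS]
    simp only [Set.mem_union, Set.mem_ofPred_eq, hxS, true_and]
    constructor
    · exact Or.inr
    · rintro (h | h)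
      · have := h.1 hxS
        simp at this
      · exact h
  · simp only [Set.mem_union, Set.mem_ofPred_eq, hxS, false_and, or_false, KK,
      Finset.subset_erase, not_false_eq_true, and_true]

theorem KK_remove (hI : ∀ X ∈ I, ∀ Y, Y ⊆ X → Y ∈ I) {n : ℕ} {A : Finset V} {D : Finset E}
    (T : Finset V)
    (h : ∀ x ∈ T, ∀ T' ⊆ T, x ∉ T' → x ∈ A → Good (n - 1) (KK cell val I
      ((A \ T').filter fun y => cell y ≠ cell x ∧ val y ≠ val x) (insert (cell x) D)))
    (hT : Good n (KK cell val I (A \ T) D)) : Good n (KK cell val I A D) := by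
  induction T using Finset.induction_on with
  | empty => simpa using hT
  | insert x T hx ih =>
    apply ih
    · intro y hy T' hT' hyT' hyA
      exact h y (Finset.mem_insert_of_mem hy) T' (hT'.trans (Finset.subset_insert _ _)) hyT' hyA
    · have he : (A \ T).erase x = A \ insert x T := by
        ext y; simp only [Finset.mem_erase, Finset.mem_sdiff, Finset.mem_insert]; tauto
      by_cases hxA : x ∈ A
      · apply KK_delete hI (x := x) (Finset.mem_sdiff.2 ⟨hxA, hx⟩)
        · rwa [he]
        · exact h x (Finset.mem_insert_self _ _) T (Finset.subset_insert _ _) hx hxA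
      · rw [← he, Finset.erase_eq_of_notMem (by simp [hxA])] at hT
        exact hT

/-- Augmentation up to a given size. -/
theorem aug_iter
    (hA : ∀ X ∈ I, ∀ Y ∈ I, X.card < Y.card → ∃ y ∈ Y, y ∉ X ∧ insert y X ∈ I)
    (X Y : Finset E) (hX : X ∈ I) (hY : Y ∈ I) :
    ∃ Z ∈ I, X ⊆ Z ∧ Z ⊆ X ∪ Y ∧ Y.card ≤ Z.card := by
  obtain ⟨t, ht⟩ : ∃ t, Y.card - X.card = t := ⟨_, rfl⟩
  induction t generalizing X with
  | zero => exact ⟨X, hX, le_rfl, Finset.subset_union_left, by omega⟩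
  | succ t ih =>
    obtain ⟨y, hy, hyX, hi⟩ := hA X hX Y hY (by omega)
    obtain ⟨Z, hZ, h1, h2, h3⟩ := ih (insert y X) hi
      (by rw [Finset.card_insert_of_notMem hyX]; omega)
    refine ⟨Z, hZ, (Finset.subset_insert _ _).trans h1, h2.trans ?_, h3⟩
    rw [Finset.insert_union, Finset.insert_subset_iff]
    exact ⟨Finset.mem_union_right _ hy, le_rfl⟩

theorem rank_contract
    (hI : ∀ X ∈ I, ∀ Y, Y ⊆ X → Y ∈ I)
    (hA : ∀ X ∈ I, ∀ Y ∈ I, X.card < Y.card → ∃ y ∈ Y, y ∉ X ∧ insert y X ∈ I)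
    {U D : Finset E} {n : ℕ} (hUD : Disjoint U D) {B C : Finset E} (hB : B ⊆ U)
    (hBD : B ∪ D ∈ I) (hBn : n ≤ B.card) (hC : C ⊆ U) (hCD : C ∪ D ∈ I) :
    ∃ B', C ⊆ B' ∧ B' ⊆ C ∪ B ∧ B' ∪ D ∈ I ∧ n ≤ B'.card := by
  obtain ⟨Z, hZ, h1, h2, h3⟩ := aug_iter hA (C ∪ D) (B ∪ D) hCD hBD
  have hdB : Disjoint B D := hUD.mono_left hB
  refine ⟨Z \ D, ?_, ?_, ?_, ?_⟩
  · intro y hy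
    exact Finset.mem_sdiff.2 ⟨h1 (Finset.mem_union_left _ hy),
      Finset.disjoint_left.1 hUD (hC hy)⟩
  · intro y hy
    rw [Finset.mem_sdiff] at hy
    have := h2 hy.1
    simp only [Finset.mem_union] at this ⊢
    tauto
  · refine hI Z hZ _ ?_
    exact Finset.union_subset (Finset.sdiff_subset) (Finset.subset_union_right.trans h1)
  · rw [Finset.card_union_of_disjoint hdB] at h3
    have := Finset.card_sdiff_add_card_eq_card (Finset.subset_union_right.trans h1)
    omega

end

theorem KK_good {V E W Q : Type*} {cell : V → E} {val : V → W} {I : Set (Finset E)}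
    (κ : E → Q) (hκ : ∀ x y, val x = val y → κ (cell x) = κ (cell y))
    (hinj : ∀ x y, cell x = cell y → val x = val y → x = y)
    (hI : ∀ X ∈ I, ∀ Y, Y ⊆ X → Y ∈ I)
    (hA : ∀ X ∈ I, ∀ Y ∈ I, X.card < Y.card → ∃ y ∈ Y, y ∉ X ∧ insert y X ∈ I)
    (N : ℕ) : ∀ (U : Finset E) (A : Finset V) (D : Finset E) (n : ℕ), U.card = N →
      (∀ x ∈ A, cell x ∈ U) → Disjoint U D →
      (D ∈ I → ∃ B ⊆ U, B ∪ D ∈ I ∧ n ≤ B.card) →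
      (∀ e ∈ U, 2 * (U.filter fun e' => κ e' = κ e).card ≤
        (A.filter fun y => cell y = e).card + 1) →
      Good n (KK cell val I A D) := by
  induction N with
  | zero =>
    intro U A D n hU hAU hUD hB hl
    by_cases hD : D ∈ I
    swap
    · have : KK cell val I A D = ∅ := by
        rw [Set.eq_empty_iff_forall_notMem]
        exact fun S hS => hD (hI _ hS.2.2.2 _ Finset.subset_union_right)
      rw [this]; exact Good.empty
    rw [Finset.card_eq_zero] at hU
    subst hU
    have hA0 : A = ∅ := by
      rw [Finset.eq_empty_iff_forall_notMem]
      intro x hx; simpa using hAU x hx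
    subst hA0
    obtain ⟨B, hB1, -, hB3⟩ := hB hD
    have hn : n ≤ 0 := by
      rw [Finset.subset_empty.1 hB1] at hB3; simpa using hB3
    have key := Good.step (V := V) (n := n) ∅ ∅ ∅ Good.empty le_rfl (by simpa using hn) (by simp)
      (by simp)
    convert key using 1
    ext S
    simp only [KK, Set.mem_ofPred_eq, Finset.subset_empty, Set.empty_union, Set.Icc_self,
      Set.mem_singleton_iff]
    constructor
    · exact fun h => h.1
    · rintro rfl; simpa using hD
  | succ N ih =>
    intro U A D n hU hAU hUD hB hl
    by_cases hD : D ∈ I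
    swap
    · have : KK cell val I A D = ∅ := by
        rw [Set.eq_empty_iff_forall_notMem]
        exact fun S hS => hD (hI _ hS.2.2.2 _ Finset.subset_union_right)
      rw [this]; exact Good.empty
    obtain ⟨B, hBU, hBD, hBn⟩ := hB hD
    obtain ⟨e, he⟩ : U.Nonempty := Finset.card_pos.1 (by omega)
    obtain ⟨x1, hx1⟩ : (A.filter fun y => cell y = e).Nonempty := by
      have h1 := hl e he
      have h2 : 0 < (U.filter fun e' => κ e' = κ e).card :=
        Finset.card_pos.2 ⟨e, by simp [he]⟩
      exact Finset.card_pos.1 (by omega)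
    rw [Finset.mem_filter] at hx1
    obtain ⟨hx1A, hx1e⟩ := hx1
    -- list sizes after removing at most two values
    have hlist : ∀ x : V, cell x ∈ U → κ (cell x) = κ e → ∀ A' ⊆ A,
        (∀ y ∈ A, y ∉ A' → cell y ≠ cell x → val y = val x1 ∨ val y = val x) →
        ∀ e' ∈ U.erase (cell x), 2 * ((U.erase (cell x)).filter fun e'' => κ e'' = κ e').card ≤
        (A'.filter fun y => cell y = e').card + 1 := by
      intro x hxU hxe A' hA' hlost e' he'
      rw [Finset.mem_erase] at he'
      have h0 := hl e' he'.2
      set G := A.filter fun y => cell y = e' ∧ (val y = val x1 ∨ val y = val x) with hG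
      have h1 : (A.filter fun y => cell y = e').card ≤
          (A'.filter fun y => cell y = e').card + G.card := by
        refine le_trans (Finset.card_le_card ?_) (Finset.card_union_le _ _)
        intro y hy
        simp only [hG, Finset.mem_union, Finset.mem_filter] at hy ⊢
        by_cases hy' : y ∈ A'
        · exact Or.inl ⟨hy', hy.2⟩
        · exact Or.inr ⟨hy.1, hy.2, hlost y hy.1 hy' (by rw [hy.2]; exact he'.1)⟩
      by_cases hc : κ e' = κ e
      · have hG2 : G.card ≤ 2 := by
          have : G.card ≤ ({val x1, val x} : Finset W).card := by
            apply Finset.card_le_card_of_injOn val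
            · intro y hy
              simp only [hG, Finset.coe_filter, Set.mem_ofPred_eq] at hy
              simpa using hy.2.2
            · intro y hy z hz hyz
              simp only [hG, Finset.coe_filter, Set.mem_ofPred_eq] at hy hz
              exact hinj y z (hy.2.1.trans hz.2.1.symm) hyz
          exact this.trans Finset.card_le_two
        have h3 : (U.filter fun e'' => κ e'' = κ e').card =
            ((U.erase (cell x)).filter fun e'' => κ e'' = κ e').card + 1 := by
          rw [Finset.filter_erase, Finset.card_erase_add_one]
          simp [hxU, hxe, hc]
        omega
      · have hG0 : G = ∅ := by
          rw [Finset.eq_empty_iff_forall_notMem]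
          intro y hy
          simp only [hG, Finset.mem_filter] at hy
          apply hc
          rw [← hy.2.1]
          rcases hy.2.2 with h | h
          · rw [hκ _ _ h, hx1e]
          · rw [hκ _ _ h, hxe]
        have h3 : ((U.erase (cell x)).filter fun e'' => κ e'' = κ e').card ≤
            (U.filter fun e'' => κ e'' = κ e').card :=
          Finset.card_le_card (Finset.filter_subset_filter _ (Finset.erase_subset _ _))
        rw [hG0, Finset.card_empty] at h1
        omega
    have hlink : ∀ x ∈ A, κ (cell x) = κ e → ∀ A' ⊆ A,
        (∀ y ∈ A, y ∉ A' → cell y ≠ cell x → val y = val x1) →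
        Good (n - 1) (KK cell val I
          (A'.filter fun y => cell y ≠ cell x ∧ val y ≠ val x) (insert (cell x) D)) := by
      intro x hx hxe A' hA' hlost
      have hxU := hAU x hx
      apply ih (U.erase (cell x))
      · rw [Finset.card_erase_of_mem hxU]; omega
      · intro y hy
        rw [Finset.mem_filter] at hy
        exact Finset.mem_erase.2 ⟨hy.2.1, hAU y (hA' hy.1)⟩
      · rw [Finset.disjoint_left]
        intro y hy hy'
        rw [Finset.mem_erase] at hy
        rw [Finset.mem_insert] at hy'
        rcases hy' with h | h
        · exact hy.1 h
        · exact Finset.disjoint_left.1 hUD hy.2 h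
      · intro hins
        obtain ⟨B', h1, h2, h3, h4⟩ := rank_contract hI hA hUD hBU hBD hBn (C := {cell x})
          (by simpa using hxU) (by simpa [← Finset.insert_eq] using hins)
        rw [Finset.singleton_subset_iff] at h1
        refine ⟨B'.erase (cell x), ?_, ?_, ?_⟩
        · apply Finset.erase_subset_erase
          refine h2.trans (Finset.union_subset (by simpa using hxU) hBU)
        · convert h3 using 1
          ext z
          simp only [Finset.mem_union, Finset.mem_erase, Finset.mem_insert]
          by_cases hz : z = cell x
          · subst hz; simp [h1]
          · simp [hz]
        · rw [Finset.card_erase_of_mem h1]; omega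
      · apply hlist x hxU hxe
        · exact (Finset.filter_subset _ _).trans hA'
        · intro y hy hy' hyx
          by_cases h : y ∈ A'
          · right
            by_contra h2
            exact hy' (Finset.mem_filter.2 ⟨h, hyx, h2⟩)
          · exact Or.inl (hlost y hy h hyx)
    set T1 := A.filter fun y => val y = val x1 ∧ y ≠ x1 with hT1
    set T2 := A.filter fun y => cell y = e ∧ y ≠ x1 with hT2
    apply KK_remove hI T1
    · intro x hx T' hT' hxT' _
      simp only [hT1, Finset.mem_filter] at hx
      apply hlink x hx.1 (by rw [hκ _ _ hx.2.1, hx1e]) _ Finset.sdiff_subset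
      intro y hy hy' _
      have : y ∈ T' := by
        by_contra h; exact hy' (Finset.mem_sdiff.2 ⟨hy, h⟩)
      have := hT' this
      simp only [hT1, Finset.mem_filter] at this
      exact this.2.1
    apply KK_remove hI T2
    · intro x hx T' hT' hxT' _
      simp only [hT2, Finset.mem_filter] at hx
      apply hlink x hx.1 (by rw [hx.2.1]) _ (Finset.sdiff_subset.trans Finset.sdiff_subset)
      intro y hy hy' hyx
      by_cases h : y ∈ T'
      · have := hT' h
        simp only [hT2, Finset.mem_filter] at this
        exact absurd (this.2.1.trans hx.2.1.symm) hyx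
      · have : y ∈ T1 := by
          by_contra h'
          exact hy' (Finset.mem_sdiff.2 ⟨Finset.mem_sdiff.2 ⟨hy, h'⟩, h⟩)
        simp only [hT1, Finset.mem_filter] at this
        exact this.2.1
    set A3 := (A \ T1) \ T2 with hA3
    have hA3A : A3 ⊆ A := Finset.sdiff_subset.trans Finset.sdiff_subset
    have hx1A3 : x1 ∈ A3 := by simp [hA3, hT1, hT2, hx1A]
    have hA3' : ∀ y ∈ A3, y ≠ x1 → cell y ≠ cell x1 ∧ val y ≠ val x1 := by
      intro y hy hne
      simp only [hA3, hT1, hT2, Finset.mem_sdiff, Finset.mem_filter, not_and, not_not] at hy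
      refine ⟨fun h => hne (hy.2 hy.1.1 (h.trans hx1e)), fun h => hne (hy.1.2 hy.1.1 h)⟩
    have hA3lost : ∀ y ∈ A, y ∉ A3 → cell y ≠ cell x1 → val y = val x1 := by
      intro y hy hy3 hne
      by_contra h
      apply hy3
      simp only [hA3, hT1, hT2, Finset.mem_sdiff, Finset.mem_filter, not_and, not_not]
      exact ⟨⟨hy, fun _ h' => absurd h' h⟩, fun _ h' => absurd (h'.trans hx1e.symm) hne⟩
    have hA4 : (A3.filter fun y => cell y ≠ cell x1 ∧ val y ≠ val x1) = A3.erase x1 := by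
      ext y
      simp only [Finset.mem_filter, Finset.mem_erase]
      constructor
      · rintro ⟨h1, h2, h3⟩
        exact ⟨fun h => h2 (h ▸ rfl), h1⟩
      · rintro ⟨h1, h2⟩
        exact ⟨h2, hA3' y h2 h1⟩
    have hlk := hlink x1 hx1A (by rw [hx1e]) A3 hA3A hA3lost
    by_cases hB2 : ∃ B ⊆ U.erase e, B ∪ D ∈ I ∧ n ≤ B.card
    · apply KK_delete hI hx1A3 _ hlk
      apply ih (U.erase e)
      · rw [Finset.card_erase_of_mem he]; omega
      · intro y hy
        rw [Finset.mem_erase] at hy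
        exact Finset.mem_erase.2 ⟨hx1e ▸ (hA3' y hy.2 hy.1).1, hAU y (hA3A hy.2)⟩
      · exact hUD.mono_left (Finset.erase_subset _ _)
      · exact fun _ => hB2
      · have := hlist x1 (hx1e ▸ he) (by rw [hx1e]) (A3.erase x1)
          ((Finset.erase_subset _ _).trans hA3A) (by
            intro y hy hy' hne
            left
            refine hA3lost y hy (fun h => hy' (Finset.mem_erase.2 ⟨fun h' => hne (h' ▸ rfl), h⟩)) hne)
        rwa [hx1e] at this
    · rw [hA4] at hlk
      have key := hlk.cone (n := n) (x := x1) (fun S hS h => by simpa using hS.1 h)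
      convert key using 1
      ext S
      rw [Set.mem_ofPred_eq]
      by_cases hxS : x1 ∈ S
      · rw [KK_link hx1A3 hxS, hA4]
      · rw [Finset.erase_eq_of_notMem hxS]
        constructor
        · rintro ⟨h1, h2, h3, h4⟩
          refine ⟨Finset.subset_erase.2 ⟨h1, hxS⟩, h2, h3, ?_⟩
          by_contra hcon
          apply hB2
          have hCU : S.image cell ⊆ U := by
            intro z hz
            obtain ⟨y, hy, rfl⟩ := Finset.mem_image.1 hz
            exact hAU y (hA3A (h1 hy))
          obtain ⟨B', g1, g2, g3, g4⟩ := rank_contract hI hA hUD hBU hBD hBn hCU h4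
          refine ⟨B', ?_, g3, g4⟩
          rw [Finset.subset_erase]
          refine ⟨g2.trans (Finset.union_subset hCU hBU), ?_⟩
          intro heB
          apply hcon
          refine hI _ g3 _ ?_
          rw [hx1e]
          apply Finset.union_subset (g1.trans Finset.subset_union_left)
          rw [Finset.insert_subset_iff]
          exact ⟨Finset.mem_union_left _ heB, Finset.subset_union_right⟩
        · exact fun h => KK_mono hI (Finset.erase_subset _ _) (Finset.subset_insert _ _) h

/-- The matroid on cells: at most `s` full rows. -/
def cellI (r k s : ℕ) : Set (Finset (Fin r × Fin (k + 1))) :=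
  {X | (Finset.univ.filter fun i : Fin r => (X.filter fun q => q.1 = i).card = k + 1).card ≤ s}

theorem row_le {r k : ℕ} (X : Finset (Fin r × Fin (k + 1))) (i : Fin r) :
    (X.filter fun q => q.1 = i).card ≤ k + 1 := by
  have : (X.filter fun q => q.1 = i).card ≤ (Finset.univ : Finset (Fin (k + 1))).card := by
    apply Finset.card_le_card_of_injOn Prod.snd
    · intro y _; simp
    · intro y hy z hz hyz
      simp only [Finset.coe_filter, Set.mem_ofPred_eq] at hy hz
      exact Prod.ext (hy.2.trans hz.2.symm) hyz
  simpa using this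

theorem cellI_lower {r k s : ℕ} : ∀ X ∈ cellI r k s, ∀ Y, Y ⊆ X → Y ∈ cellI r k s := by
  intro X hX Y hY
  refine le_trans (Finset.card_le_card ?_) hX
  intro i hi
  simp only [Finset.mem_filter, Finset.mem_univ, true_and] at hi ⊢
  refine le_antisymm (row_le X i) ?_
  exact hi.symm.le.trans (Finset.card_le_card (Finset.filter_subset_filter _ hY))

theorem cellI_aug {r k s : ℕ} : ∀ X ∈ cellI r k s, ∀ Y ∈ cellI r k s, X.card < Y.card →
    ∃ y ∈ Y, y ∉ X ∧ insert y X ∈ cellI r k s := by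
  intro X hX Y hY hlt
  by_contra hcon
  push Not at hcon
  have hXs : (Finset.univ.filter fun i : Fin r =>
      (X.filter fun q => q.1 = i).card = k + 1).card = s := by
    refine le_antisymm hX ?_
    by_contra h
    push Not at h
    obtain ⟨y, hy, hyX⟩ : ∃ y ∈ Y, y ∉ X := by
      by_contra h'
      push Not at h'
      exact absurd (Finset.card_le_card (fun y hy => h' y hy)) (by omega)
    apply hcon y hy hyX
    have : (Finset.univ.filter fun i : Fin r =>
      ((insert y X).filter fun q => q.1 = i).card = k + 1) ⊆
      insert y.1 (Finset.univ.filter fun i : Fin r =>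
        (X.filter fun q => q.1 = i).card = k + 1) := by
      intro i hi
      simp only [Finset.mem_filter, Finset.mem_univ, true_and, Finset.mem_insert] at hi ⊢
      by_cases hi' : i = y.1
      · exact Or.inl hi'
      · right
        rwa [Finset.filter_insert, if_neg (fun h => hi' h.symm)] at hi
    have h2 := (Finset.card_le_card this).trans (Finset.card_insert_le _ _)
    show _ ≤ s
    omega
  have hfull : ∀ y ∈ Y, y ∉ X → (X.filter fun q => q.1 = y.1).card = k := by
    intro y hy hyX
    by_contra h
    apply hcon y hy hyX
    show _ ≤ s
    rw [← hXs]
    apply Finset.card_le_card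
    intro i hi
    simp only [Finset.mem_filter, Finset.mem_univ, true_and] at hi ⊢
    by_cases hi' : i = y.1
    · subst hi'
      rw [Finset.filter_insert, if_pos rfl, Finset.card_insert_of_notMem (by simp [hyX])] at hi
      omega
    · rwa [Finset.filter_insert, if_neg (fun h => hi' h.symm)] at hi
  have hrow : ∀ i : Fin r, (Y.filter fun q => q.1 = i).card +
      (if (X.filter fun q => q.1 = i).card = k + 1 then 1 else 0) ≤
      (X.filter fun q => q.1 = i).card +
      (if (Y.filter fun q => q.1 = i).card = k + 1 then 1 else 0) := by
    intro i
    have h1 := row_le X i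
    have h2 := row_le Y i
    by_cases hsub : (Y.filter fun q => q.1 = i) ⊆ (X.filter fun q => q.1 = i)
    · have h3 := Finset.card_le_card hsub
      split_ifs <;> omega
    · obtain ⟨y, hy, hyX⟩ := Finset.not_subset.1 hsub
      simp only [Finset.mem_filter] at hy hyX
      have h4 := hfull y hy.1 (fun h => hyX ⟨h, hy.2⟩)
      rw [hy.2] at h4
      split_ifs <;> omega
  have hsum := Finset.sum_le_sum (fun i (_ : i ∈ (Finset.univ : Finset (Fin r))) => hrow i)
  rw [Finset.sum_add_distrib, Finset.sum_add_distrib, ← Finset.card_filter, ← Finset.card_filter,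
    ← Finset.card_eq_sum_card_fiberwise (f := Prod.fst) (s := Y) (t := Finset.univ) (by simp),
    ← Finset.card_eq_sum_card_fiberwise (f := Prod.fst) (s := X) (t := Finset.univ) (by simp),
    hXs] at hsum
  have hY' : (Finset.univ.filter fun i : Fin r =>
      (Y.filter fun q => q.1 = i).card = k + 1).card ≤ s := hY
  omega

theorem cellI_rank {r k s : ℕ} (hsr : s < r) :
    ∃ B ∈ cellI r k s, r * k + s ≤ B.card := by
  set B : Finset (Fin r × Fin (k + 1)) :=
    Finset.univ.filter fun q => q.1.val < s ∨ q.2 ≠ 0 with hB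
  have hrow : ∀ i : Fin r, (B.filter fun q => q.1 = i).card = k + if i.val < s then 1 else 0 := by
    intro i
    have h1 : (B.filter fun q => q.1 = i) = (Finset.univ.filter fun c : Fin (k + 1) =>
        i.val < s ∨ c ≠ 0).image (fun c => (i, c)) := by
      ext ⟨j, c⟩
      simp only [hB, Finset.mem_filter, Finset.mem_univ, true_and, Finset.mem_image, Prod.mk.injEq]
      constructor
      · rintro ⟨h, rfl⟩; exact ⟨c, h, rfl, rfl⟩
      · rintro ⟨c', h, rfl, rfl⟩; exact ⟨h, rfl⟩
    rw [h1, Finset.card_image_of_injective _ (fun a b h => by simpa using h)]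
    by_cases h : i.val < s
    · simp [h]
    · simp [h, Finset.filter_ne']
  have hs' : (Finset.univ.filter fun i : Fin r => i.val < s).card = s := by
    rw [Fin.card_filter_val_lt]; omega
  refine ⟨B, ?_, ?_⟩
  · show _ ≤ s
    simp only [hrow]
    refine le_trans (Finset.card_le_card ?_) hs'.le
    intro i hi
    simp only [Finset.mem_filter, Finset.mem_univ, true_and] at hi ⊢
    by_contra h
    simp [h] at hi
  · rw [Finset.card_eq_sum_card_fiberwise (f := Prod.fst) (s := B) (t := Finset.univ) (by simp)]
    simp only [hrow]
    rw [Finset.sum_add_distrib, ← Finset.card_filter, hs']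
    simp

theorem conf_good (m r k s : ℕ) (hsr : s < r) (C : Fin (k + 1) → Finset (Fin m))
    (hCpart : ∀ v : Fin m, ∃! i, v ∈ C i)
    (hCcard : ∀ i, (C i).card = 2 * r - 1) :
    Good (r * k + s) {S | IsConfSimplex m r k s C S} := by
  choose col hcol hcol' using fun v => (hCpart v)
  have hcol'' : ∀ v c, v ∈ C c ↔ col v = c := by
    intro v c
    exact ⟨fun h => (hcol' v c h).symm, fun h => h ▸ hcol v⟩
  have key := KK_good (V := Fin m × Fin r) (E := Fin r × Fin (k + 1)) (W := Fin m)
    (cell := fun x => (x.2, col x.1)) (val := fun x => x.1) (I := cellI r k s)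
    (κ := Prod.snd) (fun x y h => by simp [h])
    (fun x y h1 h2 => Prod.ext h2 (by simpa using (Prod.ext_iff.1 h1).1))
    cellI_lower (by
      intro X hX Y hY h
      obtain ⟨y, h1, h2, h3⟩ := cellI_aug X hX Y hY h
      exact ⟨y, h1, h2, by convert h3⟩) _ Finset.univ Finset.univ ∅ (r * k + s) rfl (by simp) (by simp)
    (by
      intro _
      obtain ⟨B, h1, h2⟩ := cellI_rank (k := k) hsr
      exact ⟨B, by simp, by simpa using h1, h2⟩)
    (by
      rintro ⟨i, c⟩ _
      have h1 : (Finset.univ.filter fun e' : Fin r × Fin (k + 1) => e'.2 = c).card ≤ r := by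
        have : (Finset.univ.filter fun e' : Fin r × Fin (k + 1) => e'.2 = c).card ≤
            (Finset.univ : Finset (Fin r)).card := by
          apply Finset.card_le_card_of_injOn Prod.fst
          · intro y _; simp
          · intro y hy z hz hyz
            simp only [Finset.coe_filter, Set.mem_ofPred_eq] at hy hz
            exact Prod.ext hyz (hy.2.trans hz.2.symm)
        simpa using this
      have h2 : (C c).card ≤ (Finset.univ.filter fun y : Fin m × Fin r =>
          (y.2, col y.1) = (i, c)).card := by
        apply Finset.card_le_card_of_injOn (fun v => (v, i))
        · intro v hv
          have : col v = c := (hcol'' v c).1 hv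
          simp [this]
        · intro v _ w _ h
          simpa using h
      rw [hCcard c] at h2
      have h3 : 2 * (Finset.univ.filter fun e' : Fin r × Fin (k + 1) => e'.2 = c).card ≤
          (Finset.univ.filter fun y : Fin m × Fin r => (y.2, col y.1) = (i, c)).card + 1 := by
        omega
      convert h3)
  convert key using 1
  ext S
  simp only [KK, IsConfSimplex, cellI, Set.mem_ofPred_eq, Finset.subset_univ, true_and,
    Finset.union_empty]
  have e1 : (∀ v : Fin m, ∀ i j : Fin r, (v, i) ∈ S → (v, j) ∈ S → i = j) ↔
      Set.InjOn (fun x : Fin m × Fin r => x.1) S := by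
    constructor
    · rintro h ⟨v, i⟩ hx ⟨w, j⟩ hy hxy
      simp only at hxy
      subst hxy
      rw [h v i j hx hy]
    · intro h v i j hi hj
      exact (Prod.ext_iff.1 (h hi hj rfl)).2
  have e2 : (∀ i : Fin r, ∀ c : Fin (k + 1),
      (S.filter fun q => q.2 = i ∧ q.1 ∈ C c).card ≤ 1) ↔
      Set.InjOn (fun x : Fin m × Fin r => (x.2, col x.1)) S := by
    simp only [Finset.card_le_one, Finset.mem_filter, hcol'']
    constructor
    · intro h x hx y hy hxy
      simp only [Prod.mk.injEq] at hxy
      exact h x.2 (col x.1) x ⟨hx, rfl, rfl⟩ y ⟨hy, hxy.1.symm, hxy.2.symm⟩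
    · rintro h i c x ⟨hx, hx1, hx2⟩ y ⟨hy, hy1, hy2⟩
      exact h hx hy (by simp [hx1, hx2, hy1, hy2])
  rw [e1, e2]
  have e3 : Set.InjOn (fun x : Fin m × Fin r => (x.2, col x.1)) S → ∀ i : Fin r,
      ((S.image fun x : Fin m × Fin r => (x.2, col x.1)).filter fun q => q.1 = i).card =
      (S.filter fun q => q.2 = i).card := by
    intro h i
    rw [Finset.filter_image, Finset.card_image_of_injOn]
    exact h.mono (fun x hx => Finset.mem_coe.2 (Finset.mem_of_mem_filter x (Finset.mem_coe.1 hx)))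
  have e4 : Set.InjOn (fun x : Fin m × Fin r => (x.2, col x.1)) S →
      (Finset.univ.filter fun i : Fin r =>
        ((S.image fun x : Fin m × Fin r => (x.2, col x.1)).filter fun q => q.1 = i).card
          = k + 1).card = 
      (Finset.univ.filter fun i : Fin r => (S.filter fun q => q.2 = i).card = k + 1).card := by
    intro h
    simp only [e3 h]
  constructor
  · rintro ⟨h1, h2, h3⟩
    refine ⟨h2, h1, ?_⟩
    refine le_trans (le_of_eq ?_) h3
    convert e4 h2
  · rintro ⟨h2, h1, h3⟩
    refine ⟨h1, h2, ?_⟩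
    refine le_trans (le_of_eq ?_) h3
    convert (e4 h2).symm

section topo
variable {V : Type*} [Fintype V]

/-- Support of a point. -/
def supp (x : V → ℝ) : Finset V := Finset.univ.filter fun q => x q ≠ 0

/-- Geometric realization. -/
def geo (K : Set (Finset V)) : Set (V → ℝ) := {x ∈ stdSimplex ℝ V | supp x ∈ K}

theorem mem_supp {x : V → ℝ} {i : V} : i ∈ supp x ↔ x i ≠ 0 := by simp [supp]

theorem geo_line {S : Type*} [TopologicalSpace S] {K : Set (Finset V)}
    (hK : ∀ A ∈ K, ∀ B, B ⊆ A → B ∈ K) (f g : C(S, geo K))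
    (h : ∀ s, ∃ F ∈ K, supp (f s).1 ⊆ F ∧ supp (g s).1 ⊆ F) : f.Homotopic g := by
  refine ⟨⟨⟨fun p => ⟨fun i => (1 - (p.1 : ℝ)) * (f p.2).1 i + (p.1 : ℝ) * (g p.2).1 i, ?_⟩, ?_⟩,
    ?_, ?_⟩⟩
  · obtain ⟨F, hF, h1, h2⟩ := h p.2
    refine ⟨⟨fun i => ?_, ?_⟩, hK F hF _ ?_⟩
    · have a1 := (f p.2).2.1.1 i
      have a2 := (g p.2).2.1.1 i
      have a3 := p.1.2.1
      have a4 := p.1.2.2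
      have : 0 ≤ 1 - (p.1 : ℝ) := by linarith
      positivity
    · rw [Finset.sum_add_distrib, ← Finset.mul_sum, ← Finset.mul_sum, (f p.2).2.1.2,
        (g p.2).2.1.2]
      ring
    · intro i hi
      rw [mem_supp] at hi
      by_contra hiF
      have b1 : (f p.2).1 i = 0 := by
        by_contra h'; exact hiF (h1 (mem_supp.2 h'))
      have b2 : (g p.2).1 i = 0 := by
        by_contra h'; exact hiF (h2 (mem_supp.2 h'))
      simp [b1, b2] at hi
  · refine Continuous.subtype_mk ?_ _
    refine continuous_pi fun i => ?_
    have c0 : Continuous fun p : unitInterval × S => (p.1 : ℝ) :=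
      continuous_subtype_val.comp continuous_fst
    have c1 : Continuous fun p : unitInterval × S => (f p.2).1 i :=
      (continuous_apply i).comp (continuous_subtype_val.comp (f.continuous.comp continuous_snd))
    have c2 : Continuous fun p : unitInterval × S => (g p.2).1 i :=
      (continuous_apply i).comp (continuous_subtype_val.comp (g.continuous.comp continuous_snd))
    exact ((continuous_const.sub c0).mul c1).add (c0.mul c2)
  · intro s; ext i; simp
  · intro s; ext i; simp

/-- Every map from `S` is nullhomotopic. -/
def NullAll (S : Type*) [TopologicalSpace S] (K : Set (Finset V)) : Prop :=
  ∀ f : C(S, geo K), f.Nullhomotopic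

theorem geo_push {S : Type*} [TopologicalSpace S] {K K' : Set (Finset V)}
    (hK' : ∀ A ∈ K', ∀ B, B ⊆ A → B ∈ K') (hKK : K ⊆ K') (hP : NullAll S K)
    (f : C(S, geo K')) (g : S → V → ℝ) (hg : Continuous g) (hgK : ∀ s, g s ∈ geo K)
    (hF : ∀ s, ∃ F ∈ K', supp (f s).1 ⊆ F ∧ supp (g s) ⊆ F) : f.Nullhomotopic := by
  have hsub : geo K ⊆ geo K' := fun x hx => ⟨hx.1, hKK hx.2⟩
  let g1 : C(S, geo K) := ⟨fun s => ⟨g s, hgK s⟩, hg.subtype_mk _⟩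
  let ι : C(geo K, geo K') := ⟨Set.inclusion hsub, continuous_inclusion hsub⟩
  obtain ⟨y, hy⟩ := (hP g1).comp_right ι
  exact ⟨y, (geo_line hK' f (ι.comp g1) hF).trans hy⟩

theorem step_mem {K : Set (Finset V)} (hK : ∀ A ∈ K, ∀ B, B ⊆ A → B ∈ K) {R F : Finset V}
    (hR : R ∉ K) {x : V → ℝ} (hx : x ∈ geo (K ∪ Set.Icc R F)) :
    (∃ i ∈ R, x i = 0) ∧ supp x ∈ K ∨ (∀ i ∈ R, 0 < x i) ∧ R ⊆ supp x ∧ supp x ⊆ F := by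
  rcases hx.2 with h | h
  · left
    refine ⟨?_, h⟩
    by_contra hcon
    push Not at hcon
    exact hR (hK _ h _ fun i hi => mem_supp.2 (hcon i hi))
  · right
    refine ⟨fun i hi => ?_, h.1, h.2⟩
    exact lt_of_le_of_ne (hx.1.1 i) (Ne.symm (mem_supp.1 (h.1 hi)))

theorem null_empty {S : Type*} [TopologicalSpace S] [Nonempty S] : NullAll S (∅ : Set (Finset V)) := by
  intro f
  obtain ⟨s⟩ := ‹Nonempty S›
  exact absurd (f s).2.2 (by simp)

theorem null_simplex {S : Type*} [TopologicalSpace S] [Nonempty S] {K : Set (Finset V)}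
    (hK' : ∀ A ∈ K, ∀ B, B ⊆ A → B ∈ K) {F : Finset V} (hF : F ∈ K) (hKF : ∀ A ∈ K, A ⊆ F) :
    NullAll S K := by
  intro f
  obtain ⟨s0⟩ := ‹Nonempty S›
  refine ⟨f s0, geo_line hK' _ _ fun s => ⟨F, hF, hKF _ (f s).2.2, hKF _ (f s0).2.2⟩⟩

theorem null_collapse {S : Type*} [TopologicalSpace S] {K : Set (Finset V)} {R F : Finset V}
    (hK : ∀ A ∈ K, ∀ B, B ⊆ A → B ∈ K) (hRF : R ⊆ F) (hne : R ≠ F) (hR0 : R.Nonempty)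
    (hR : R ∉ K) (hS : ∀ S, S ⊆ F → ¬ R ⊆ S → S ∈ K)
    (hK' : ∀ A ∈ K ∪ Set.Icc R F, ∀ B, B ⊆ A → B ∈ K ∪ Set.Icc R F)
    (hP : NullAll S K) : NullAll S (K ∪ Set.Icc R F) := by
  intro f
  have hFR : (F \ R).Nonempty := by
    rw [Finset.sdiff_nonempty]
    exact fun h => hne (Finset.Subset.antisymm hRF h)
  have hFRc : (0 : ℝ) < (F \ R).card := by exact_mod_cast Finset.card_pos.2 hFR
  let w : V → ℝ := fun i => if i ∈ R then -1 else if i ∈ F then (R.card : ℝ) / (F \ R).card else 0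
  have hw : ∑ i, w i = 0 := by
    have h1 : ∑ i, w i = ∑ i ∈ F, w i := by
      symm
      apply Finset.sum_subset (Finset.subset_univ _)
      intro i _ hi
      have : i ∉ R := fun h => hi (hRF h)
      simp [w, hi, this]
    rw [h1, ← Finset.sum_sdiff hRF]
    have h2 : ∑ i ∈ F \ R, w i = ∑ i ∈ F \ R, (R.card : ℝ) / (F \ R).card := by
      apply Finset.sum_congr rfl
      intro i hi
      rw [Finset.mem_sdiff] at hi
      simp [w, hi.1, hi.2]
    have h3 : ∑ i ∈ R, w i = ∑ i ∈ R, (-1 : ℝ) := by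
      apply Finset.sum_congr rfl
      intro i hi
      simp [w, hi]
    rw [h2, h3, Finset.sum_const, Finset.sum_const, nsmul_eq_mul, nsmul_eq_mul]
    field_simp
    ring
  let t : (V → ℝ) → ℝ := fun x => R.inf' hR0 x
  have ht : Continuous t := by
    show Continuous fun x : V → ℝ => R.inf' hR0 (fun i => x i)
    exact Continuous.finset_inf'_apply hR0 (fun i _ => continuous_apply i)
  have key : ∀ x ∈ geo (K ∪ Set.Icc R F), (fun i => x i + t x * w i) ∈ geo K ∧
      ∃ F' ∈ K ∪ Set.Icc R F, supp x ⊆ F' ∧ supp (fun i => x i + t x * w i) ⊆ F' := by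
    intro x hx
    rcases step_mem hK hR hx with ⟨⟨i, hi, hxi⟩, hxK⟩ | ⟨hpos, h1, h2⟩
    · have ht0 : t x = 0 := by
        apply le_antisymm
        · rw [← hxi]; exact Finset.inf'_le _ hi
        · exact Finset.le_inf' _ _ fun i _ => hx.1.1 i
      have he : (fun i => x i + t x * w i) = x := by ext i; simp [ht0]
      rw [he]
      exact ⟨⟨hx.1, hxK⟩, supp x, Or.inl hxK, le_rfl, le_rfl⟩
    · have ht0 : 0 ≤ t x := Finset.le_inf' _ _ fun i _ => hx.1.1 i
      have hsF : supp (fun i => x i + t x * w i) ⊆ F := by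
        intro i hi
        rw [mem_supp] at hi
        by_contra hiF
        have b1 : x i = 0 := by
          by_contra h; exact hiF (h2 (mem_supp.2 h))
        have b2 : i ∉ R := fun h => hiF (hRF h)
        simp [b1, w, b2, hiF] at hi
      refine ⟨⟨⟨?_, ?_⟩, hS _ hsF ?_⟩, F, Or.inr ⟨hRF, le_rfl⟩, h2, hsF⟩
      · intro i
        have h0 := hx.1.1 i
        by_cases hiR : i ∈ R
        · have : t x ≤ x i := Finset.inf'_le _ hiR
          simp only [w, hiR, if_true]; linarith
        · by_cases hiF : i ∈ F
          · simp only [w, hiR, hiF, if_true, if_false]; positivity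
          · simp only [w, hiR, hiF, if_false]; linarith
      · rw [Finset.sum_add_distrib, ← Finset.mul_sum, hw, hx.1.2]; ring
      · intro hsub
        obtain ⟨i, hi, hie⟩ := Finset.exists_mem_eq_inf' hR0 x
        have := hsub hi
        rw [mem_supp] at this
        apply this
        have hte : t x = x i := hie
        simp [w, hi, hte]
  refine geo_push hK' Set.subset_union_left hP f (fun s i => (f s).1 i + t (f s).1 * w i) ?_
    (fun s => (key _ (f s).2).1) (fun s => (key _ (f s).2).2)
  refine continuous_pi fun i => ?_
  have c1 : Continuous fun s => (f s).1 := by fun_prop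
  have c2 : Continuous fun s => t (f s).1 := ht.comp c1
  have c3 : Continuous fun s => (f s).1 i := (continuous_apply i).comp c1
  fun_prop

theorem null_radial {S : Type*} [TopologicalSpace S] {K : Set (Finset V)} {F : Finset V}
    (hK : ∀ A ∈ K, ∀ B, B ⊆ A → B ∈ K) (hR0 : F.Nonempty)
    (hR : F ∉ K) (hS : ∀ S, S ⊆ F → ¬ F ⊆ S → S ∈ K)
    (hK' : ∀ A ∈ K ∪ Set.Icc F F, ∀ B, B ⊆ A → B ∈ K ∪ Set.Icc F F)
    (hP : NullAll S K) (f : C(S, geo (K ∪ Set.Icc F F))) (y : V → ℝ) (hy : ∀ i ∈ F, 0 < y i)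
    (hy0 : ∀ i ∉ F, y i = 0) (hy1 : ∑ i, y i = 1) (hfy : ∀ s, (f s).1 ≠ y) :
    f.Nullhomotopic := by
  let t : (V → ℝ) → ℝ := fun x => F.inf' hR0 (fun i => x i / y i)
  have ht : Continuous t := by
    exact Continuous.finset_inf'_apply hR0 (fun i _ => (continuous_apply i).div_const _)
  have htn : ∀ x ∈ geo (K ∪ Set.Icc F F), 0 ≤ t x := fun x hx =>
    Finset.le_inf' _ _ fun i hi => div_nonneg (hx.1.1 i) (hy i hi).le
  have hle : ∀ x, ∀ i ∈ F, t x * y i ≤ x i := by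
    intro x i hi
    have : t x ≤ x i / y i := Finset.inf'_le _ hi
    rwa [le_div_iff₀ (hy i hi)] at this
  have ht1 : ∀ x ∈ geo (K ∪ Set.Icc F F), x ≠ y → t x < 1 := by
    intro x hx hxy
    by_contra hcon
    push Not at hcon
    apply hxy
    have h1 : ∀ i ∈ Finset.univ, y i ≤ x i := by
      intro i _
      by_cases hi : i ∈ F
      · have := hle x i hi
        nlinarith [hy i hi]
      · rw [hy0 i hi]; exact hx.1.1 i
    have h2 := (Finset.sum_eq_sum_iff_of_le h1).1 (by rw [hy1, hx.1.2])
    ext i; exact (h2 i (Finset.mem_univ i)).symm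
  have key : ∀ x ∈ geo (K ∪ Set.Icc F F), x ≠ y → (fun i => (x i - t x * y i) / (1 - t x)) ∈ geo K ∧
      ∃ F' ∈ K ∪ Set.Icc F F, supp x ⊆ F' ∧
        supp (fun i => (x i - t x * y i) / (1 - t x)) ⊆ F' := by
    intro x hx hxy
    have ht1' := ht1 x hx hxy
    have ht0 := htn x hx
    rcases step_mem hK hR hx with ⟨⟨i, hi, hxi⟩, hxK⟩ | ⟨hpos, h1, h2⟩
    · have ht0 : t x = 0 := by
        apply le_antisymm
        · have : t x ≤ x i / y i := Finset.inf'_le _ hi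
          simpa [hxi] using this
        · exact ht0
      have he : (fun i => (x i - t x * y i) / (1 - t x)) = x := by ext i; simp [ht0]
      rw [he]
      exact ⟨⟨hx.1, hxK⟩, supp x, Or.inl hxK, le_rfl, le_rfl⟩
    · have hsF : supp (fun i => (x i - t x * y i) / (1 - t x)) ⊆ F := by
        intro i hi
        rw [mem_supp] at hi
        by_contra hiF
        have b1 : x i = 0 := by
          by_contra h; exact hiF (h2 (mem_supp.2 h))
        simp [b1, hy0 i hiF] at hi
      refine ⟨⟨⟨?_, ?_⟩, hS _ hsF ?_⟩, F, Or.inr ⟨le_rfl, le_rfl⟩, h2, hsF⟩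
      · intro i
        have h0 := hx.1.1 i
        apply div_nonneg _ (by linarith)
        by_cases hiF : i ∈ F
        · linarith [hle x i hiF]
        · rw [hy0 i hiF]; simpa using h0
      · rw [← Finset.sum_div, Finset.sum_sub_distrib, ← Finset.mul_sum, hy1, hx.1.2, mul_one]
        exact div_self (by linarith)
      · intro hsub
        obtain ⟨i, hi, hie⟩ := Finset.exists_mem_eq_inf' hR0 (fun i => x i / y i)
        have := hsub hi
        rw [mem_supp] at this
        apply this
        have hte : t x = x i / y i := hie
        have hyi := hy i hi
        rw [hte]
        field_simp
        simp
  refine geo_push hK' Set.subset_union_left hP f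
    (fun s i => ((f s).1 i - t (f s).1 * y i) / (1 - t (f s).1)) ?_
    (fun s => (key _ (f s).2 (hfy s)).1) (fun s => (key _ (f s).2 (hfy s)).2)
  refine continuous_pi fun i => ?_
  have c1 : Continuous fun s => (f s).1 := by fun_prop
  have c2 : Continuous fun s => t (f s).1 := ht.comp c1
  have c3 : Continuous fun s => (f s).1 i := (continuous_apply i).comp c1
  refine Continuous.div (by fun_prop) (by fun_prop) fun s => ?_
  have := ht1 _ (f s).2 (hfy s)
  linarith
end topo

/-- Lipschitz functions on a compact metric space form a subalgebra. -/
def lipAlg (S : Type*) [MetricSpace S] [CompactSpace S] : Subalgebra ℝ C(S, ℝ) where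
  carrier := {f | ∃ K, LipschitzWith K f}
  mul_mem' := by
    rintro f g ⟨K, hf⟩ ⟨L, hg⟩
    refine ⟨‖f‖₊ * L + ‖g‖₊ * K, LipschitzWith.of_dist_le_mul fun x y => ?_⟩
    have h1 := hf.dist_le_mul x y
    have h2 := hg.dist_le_mul x y
    have h3 := f.norm_coe_le_norm x
    have h4 := g.norm_coe_le_norm y
    rw [Real.dist_eq] at *
    simp only [ContinuousMap.mul_apply, NNReal.coe_add, NNReal.coe_mul, coe_nnnorm]
    have e : f x * g x - f y * g y = f x * (g x - g y) + g y * (f x - f y) := by ring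
    rw [e]
    refine (abs_add_le _ _).trans ?_
    rw [abs_mul, abs_mul, add_mul, mul_assoc, mul_assoc]
    exact add_le_add (mul_le_mul h3 h2 (abs_nonneg _) (norm_nonneg _))
      (mul_le_mul h4 h1 (abs_nonneg _) (norm_nonneg _))
  add_mem' := by
    rintro f g ⟨K, hf⟩ ⟨L, hg⟩
    exact ⟨K + L, hf.add hg⟩
  algebraMap_mem' c := ⟨0, by
    refine LipschitzWith.of_dist_le_mul fun x y => ?_
    simp [algebraMap_apply]⟩

theorem lip_approx {S V : Type*} [Fintype V] [MetricSpace S] [CompactSpace S] (f : S → V → ℝ)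
    (hf : Continuous f) (ε : ℝ) (hε : 0 < ε) :
    ∃ g : S → V → ℝ, (∃ K, LipschitzWith K g) ∧ ∀ s i, |g s i - f s i| < ε := by
  have hsep : (lipAlg S).SeparatesPoints := by
    intro x y hxy
    refine ⟨fun z => dist z x, ⟨⟨fun z => dist z x, by fun_prop⟩, ⟨1, LipschitzWith.dist_left x⟩, rfl⟩, ?_⟩
    simp only [dist_self]
    exact fun h => hxy (dist_eq_zero.1 h.symm).symm
  have h1 : ∀ i : V, ∃ g : S → ℝ, (∃ K, LipschitzWith K g) ∧ ∀ s, |g s - f s i| < ε := by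
    intro i
    obtain ⟨g, hg⟩ := ContinuousMap.exists_mem_subalgebra_near_continuous_of_separatesPoints
      (lipAlg S) hsep (fun s => f s i) (by fun_prop) ε hε
    exact ⟨g.1, g.2, hg⟩
  choose g hg1 hg2 using h1
  choose K hK using hg1
  refine ⟨fun s i => g i s, ⟨∑ i, K i, LipschitzWith.of_dist_le_mul fun x y => ?_⟩,
    fun s i => hg2 i s⟩
  rw [dist_pi_le_iff (by positivity)]
  intro i
  refine ((hK i).dist_le_mul x y).trans ?_
  gcongr
  exact Finset.single_le_sum (f := K) (fun _ _ => zero_le) (Finset.mem_univ i)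

theorem exists_missing {S V : Type*} [Fintype V] [MetricSpace S] (g : S → V → ℝ)
    (hg : ∃ K, LipschitzWith K g) (F : Finset V) (hF : F.Nonempty)
    (hdim : dimH (Set.univ : Set S) < ((F.card - 1 : ℕ) : ENNReal)) (a : ℝ) (ha : 0 < a) :
    ∃ y : V → ℝ, (∀ i ∈ F, |y i - (F.card : ℝ)⁻¹| < a) ∧ (∀ i ∉ F, y i = 0) ∧ ∑ i, y i = 1 ∧
      ∀ s, g s ≠ y := by
  by_contra hcon
  push Not at hcon
  obtain ⟨i0, hi0⟩ := hF
  obtain ⟨K, hK⟩ := hg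
  set F' := F.erase i0 with hF'
  have hFpos : (0 : ℝ) < F.card := by exact_mod_cast Finset.card_pos.2 ⟨i0, hi0⟩
  have hcard : (F'.card : ℝ) = F.card - 1 := by
    have := Finset.card_erase_add_one hi0
    rw [← this]; push_cast; ring
  let π : (V → ℝ) → (F' → ℝ) := fun u i => u i
  have hπ : LipschitzWith 1 π := by
    refine LipschitzWith.of_dist_le_mul fun x y => ?_
    rw [NNReal.coe_one, one_mul, dist_pi_le_iff dist_nonneg]
    exact fun i => dist_le_pi_dist x y i
  have hsub : Metric.ball (fun _ : F' => (F.card : ℝ)⁻¹) (a / F.card) ⊆ Set.range (π ∘ g) := by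
    intro z hz
    rw [Metric.mem_ball, dist_pi_lt_iff (by positivity)] at hz
    let y : V → ℝ := fun i => if h : i ∈ F' then z ⟨i, h⟩ else if i = i0 then 1 - ∑ j, z j else 0
    have hyF' : ∀ j : F', y j = z j := fun j => by simp [y]
    have hi0F' : i0 ∉ F' := by simp [hF']
    have hyi0 : y i0 = 1 - ∑ j, z j := by simp [y, hi0F']
    have hsumF' : ∑ i ∈ F', y i = ∑ j, z j := by
      rw [← Finset.sum_coe_sort]
      exact Finset.sum_congr rfl fun j _ => hyF' j
    have hsmall : a / F.card ≤ a := by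
      apply div_le_self ha.le
      exact_mod_cast Finset.card_pos.2 ⟨i0, hi0⟩
    obtain ⟨s, hs⟩ := hcon y (by
        intro i hi
        by_cases h : i = i0
        · subst h
          rw [hyi0]
          have e : 1 - ∑ j, z j - (F.card : ℝ)⁻¹ = ∑ j : F', ((F.card : ℝ)⁻¹ - z j) := by
            rw [Finset.sum_sub_distrib, Finset.sum_const, Finset.card_univ, Fintype.card_coe,
              nsmul_eq_mul, hcard]
            field_simp
            ring
          rw [e]
          calc |∑ j : F', ((F.card : ℝ)⁻¹ - z j)| ≤ ∑ j : F', |(F.card : ℝ)⁻¹ - z j| :=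
                Finset.abs_sum_le_sum_abs _ _
            _ ≤ ∑ j : F', a / F.card := by
                apply Finset.sum_le_sum
                intro j _
                rw [abs_sub_comm]; exact (hz j).le
            _ = (F.card - 1) * (a / F.card) := by
                rw [Finset.sum_const, Finset.card_univ, Fintype.card_coe, nsmul_eq_mul, hcard]
            _ < a := by
                have : (F.card - 1) * (a / F.card) = a - a / F.card := by field_simp
                rw [this]
                have : 0 < a / F.card := by positivity
                linarith
        · have : i ∈ F' := Finset.mem_erase.2 ⟨h, hi⟩
          have h2 := hz ⟨i, this⟩
          rw [← hyF' ⟨i, this⟩, Real.dist_eq] at h2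
          exact h2.trans_le hsmall)
      (by
        intro i hi
        have h1 : i ∉ F' := fun h => hi (Finset.mem_of_mem_erase h)
        have h2 : i ≠ i0 := fun h => hi (h ▸ hi0)
        simp [y, h1, h2])
      (by
        have h1 : ∑ i, y i = ∑ i ∈ F, y i := by
          symm
          apply Finset.sum_subset (Finset.subset_univ _)
          intro i _ hi
          have h1 : i ∉ F' := fun h => hi (Finset.mem_of_mem_erase h)
          have h2 : i ≠ i0 := fun h => hi (h ▸ hi0)
          simp [y, h1, h2]
        rw [h1, ← Finset.add_sum_erase F y hi0, ← hF', hsumF', hyi0]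
        ring)
    refine ⟨s, ?_⟩
    ext j
    show g s j = z j
    rw [hs, hyF']
  have h1 := dimH_mono hsub
  rw [Real.dimH_ball_pi _ (by positivity), Fintype.card_coe] at h1
  have hc : F'.card = F.card - 1 := Finset.card_erase_of_mem hi0
  have h2 := (hπ.comp hK).dimH_range_le
  have h3 := h1.trans h2
  rw [hc] at h3
  exact absurd h3 (not_le.2 hdim)

theorem gen_pos {S V : Type*} [Fintype V] [MetricSpace S] [CompactSpace S] {K : Set (Finset V)}
    {F : Finset V}
    (hK : ∀ A ∈ K, ∀ B, B ⊆ A → B ∈ K) (hR0 : F.Nonempty) (hR : F ∉ K)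
    (hK' : ∀ A ∈ K ∪ Set.Icc F F, ∀ B, B ⊆ A → B ∈ K ∪ Set.Icc F F)
    (hdim : dimH (Set.univ : Set S) < ((F.card - 1 : ℕ) : ENNReal))
    (f : C(S, geo (K ∪ Set.Icc F F))) :
    ∃ f1 : C(S, geo (K ∪ Set.Icc F F)), f.Homotopic f1 ∧ ∃ y : V → ℝ, (∀ i ∈ F, 0 < y i) ∧
      (∀ i ∉ F, y i = 0) ∧ ∑ i, y i = 1 ∧ ∀ s, (f1 s).1 ≠ y := by
  have hFpos : (0 : ℝ) < F.card := by exact_mod_cast Finset.card_pos.2 hR0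
  obtain ⟨a, ha, hac⟩ : ∃ a : ℝ, 0 < a ∧ (F.card : ℝ)⁻¹ = 4 * a :=
    ⟨(F.card : ℝ)⁻¹ / 4, by positivity, by ring⟩
  have cf : Continuous fun s => (f s).1 := continuous_subtype_val.comp f.continuous
  obtain ⟨G, ⟨KG, hGL⟩, hG⟩ := lip_approx (fun s => (f s).1) cf (a / 4) (by positivity)
  let g : S → V → ℝ := fun s i => if i ∈ F then G s i + (1 - ∑ j ∈ F, G s j) / F.card else 0
  have hgL : LipschitzWith (2 * KG) g := by
    refine LipschitzWith.of_dist_le_mul fun x y => ?_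
    rw [dist_pi_le_iff (by positivity)]
    intro i
    have hd : ∀ j, |G x j - G y j| ≤ KG * dist x y := fun j => by
      rw [← Real.dist_eq]
      exact (dist_le_pi_dist (G x) (G y) j).trans (hGL.dist_le_mul x y)
    by_cases hi : i ∈ F
    · simp only [g, hi, if_true, Real.dist_eq]
      have e : G x i + (1 - ∑ j ∈ F, G x j) / F.card - (G y i + (1 - ∑ j ∈ F, G y j) / F.card) =
          (G x i - G y i) - (∑ j ∈ F, (G x j - G y j)) / F.card := by
        rw [Finset.sum_sub_distrib]; ring
      rw [e]
      refine (abs_sub _ _).trans ?_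
      have h2 : |(∑ j ∈ F, (G x j - G y j)) / F.card| ≤ KG * dist x y := by
        rw [abs_div, abs_of_pos hFpos, div_le_iff₀ hFpos]
        refine (Finset.abs_sum_le_sum_abs _ _).trans ?_
        refine (Finset.sum_le_sum fun j _ => hd j).trans ?_
        rw [Finset.sum_const, nsmul_eq_mul]; linarith
      have := hd i
      push_cast
      linarith
    · simp only [g, hi, if_false, dist_self]
      positivity
  have hgsum : ∀ s, ∑ i, g s i = 1 := by
    intro s
    have h1 : ∑ i, g s i = ∑ i ∈ F, g s i := by
      symm
      apply Finset.sum_subset (Finset.subset_univ _)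
      intro i _ hi
      simp [g, hi]
    rw [h1, Finset.sum_congr rfl (g := fun i => G s i + (1 - ∑ j ∈ F, G s j) / F.card)
      (fun i hi => by simp [g, hi]), Finset.sum_add_distrib, Finset.sum_const, nsmul_eq_mul]
    field_simp
    ring
  let t : (V → ℝ) → ℝ := fun x => F.inf' hR0 (fun i => x i)
  have ht : Continuous t := Continuous.finset_inf'_apply hR0 (fun i _ => continuous_apply i)
  have hti : ∀ x, ∀ i ∈ F, t x ≤ x i := fun x i hi => Finset.inf'_le _ hi
  -- where `t > 0`, the point lies in the open simplex `F`
  have hopen : ∀ s, 0 < t (f s).1 → supp (f s).1 = F := by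
    intro s hs
    rcases step_mem hK hR (f s).2 with ⟨⟨i, hi, hxi⟩, -⟩ | ⟨-, h1, h2⟩
    · have := hti (f s).1 i hi
      linarith
    · exact Finset.Subset.antisymm h2 h1
  have hgf : ∀ s, 0 < t (f s).1 → ∀ i ∈ F, |g s i - (f s).1 i| ≤ a / 2 := by
    intro s hs i hi
    have hs' := hopen s hs
    have hsum : ∑ j ∈ F, (f s).1 j = 1 := by
      rw [← (f s).2.1.2]
      apply Finset.sum_subset (Finset.subset_univ _)
      intro j _ hj
      by_contra h
      exact hj (hs' ▸ mem_supp.2 h)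
    have e : g s i - (f s).1 i = (G s i - (f s).1 i) -
        (∑ j ∈ F, (G s j - (f s).1 j)) / F.card := by
      simp only [g, hi, if_true]
      rw [Finset.sum_sub_distrib, hsum]; ring
    rw [e]
    refine (abs_sub _ _).trans ?_
    have h2 : |(∑ j ∈ F, (G s j - (f s).1 j)) / F.card| ≤ a / 4 := by
      rw [abs_div, abs_of_pos hFpos, div_le_iff₀ hFpos]
      refine (Finset.abs_sum_le_sum_abs _ _).trans ?_
      refine (Finset.sum_le_sum fun j _ => (hG s j).le).trans ?_
      rw [Finset.sum_const, nsmul_eq_mul]; linarith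
    have := (hG s i).le
    linarith
  let θ : S → ℝ := fun s => max 0 (min 1 ((t (f s).1 - a) / a))
  have cθ : Continuous θ := by
    have c2 : Continuous fun s => t (f s).1 := ht.comp cf
    fun_prop
  have hθ0 : ∀ s, 0 ≤ θ s := fun s => le_max_left _ _
  have hθ1 : ∀ s, θ s ≤ 1 := fun s => max_le zero_le_one (min_le_left _ _)
  have hθa : ∀ s, t (f s).1 ≤ a → θ s = 0 := by
    intro s hs
    apply max_eq_left
    refine (min_le_right _ _).trans ?_
    apply div_nonpos_of_nonpos_of_nonneg <;> linarith
  have hθb : ∀ s, 2 * a ≤ t (f s).1 → θ s = 1 := by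
    intro s hs
    have : 1 ≤ (t (f s).1 - a) / a := by
      rw [le_div_iff₀ ha]; linarith
    simp only [θ]
    rw [min_eq_left this]; simp
  let h : S → V → ℝ := fun s i => (f s).1 i + θ s * (g s i - (f s).1 i)
  have hclose : ∀ s, 0 < t (f s).1 → ∀ i ∈ F, |h s i - (f s).1 i| ≤ a / 2 := by
    intro s hs i hi
    have e : h s i - (f s).1 i = θ s * (g s i - (f s).1 i) := by simp [h]
    rw [e, abs_mul, abs_of_nonneg (hθ0 s)]
    have := hgf s hs i hi
    have h3 := abs_nonneg (g s i - (f s).1 i)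
    nlinarith [hθ1 s, hθ0 s]
  have hh : ∀ s, h s ∈ geo (K ∪ Set.Icc F F) ∧
      ∃ F' ∈ K ∪ Set.Icc F F, supp (f s).1 ⊆ F' ∧ supp (h s) ⊆ F' := by
    intro s
    by_cases hs : t (f s).1 ≤ a
    · have he : h s = (f s).1 := by ext i; simp [h, hθa s hs]
      rw [he]
      exact ⟨(f s).2, _, (f s).2.2, le_rfl, le_rfl⟩
    · push Not at hs
      have hs0 : 0 < t (f s).1 := ha.trans hs
      have hsF : supp (h s) ⊆ F := by
        intro i hi
        rw [mem_supp] at hi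
        by_contra hiF
        have b1 : (f s).1 i = 0 := by
          by_contra h'; exact hiF (hopen s hs0 ▸ mem_supp.2 h')
        simp [h, b1, g, hiF] at hi
      refine ⟨⟨⟨?_, ?_⟩, hK' F (Or.inr ⟨le_rfl, le_rfl⟩) _ hsF⟩, F, Or.inr ⟨le_rfl, le_rfl⟩,
        (hopen s hs0).le, hsF⟩
      · intro i
        by_cases hiF : i ∈ F
        · have h1 := abs_le.1 (hclose s hs0 i hiF)
          have h2 := hti (f s).1 i hiF
          linarith
        · have : h s i = 0 := by
            by_contra h'; exact hiF (hsF (mem_supp.2 h'))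
          rw [this]
      · simp only [h]
        rw [Finset.sum_add_distrib, ← Finset.mul_sum, Finset.sum_sub_distrib, hgsum,
          (f s).2.1.2]
        ring
  have ch : Continuous h := by
    refine continuous_pi fun i => ?_
    have c3 : Continuous fun s => (f s).1 i := (continuous_apply i).comp cf
    have c4 : Continuous fun s => g s i := (continuous_apply i).comp hgL.continuous
    exact c3.add (cθ.mul (c4.sub c3))
  let f1 : C(S, geo (K ∪ Set.Icc F F)) := ⟨fun s => ⟨h s, (hh s).1⟩, ch.subtype_mk _⟩
  obtain ⟨y, hy1, hy2, hy3, hy4⟩ := exists_missing g ⟨_, hgL⟩ F hR0 hdim a ha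
  have hy5 : ∀ i ∈ F, 3 * a < y i := by
    intro i hi
    have := abs_lt.1 (hy1 i hi)
    rw [hac] at this
    linarith
  refine ⟨f1, geo_line hK' f f1 fun s => (hh s).2, y, fun i hi => by linarith [hy5 i hi], hy2, hy3, ?_⟩
  intro s hs
  have hs : h s = y := hs
  by_cases hsa : t (f s).1 ≤ a
  · have he : h s = (f s).1 := by ext i; simp [h, hθa s hsa]
    obtain ⟨i, hi, hie⟩ := Finset.exists_mem_eq_inf' hR0 (fun i => (f s).1 i)
    have hie' : t (f s).1 = (f s).1 i := hie
    have := hy5 i hi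
    rw [← hs, he] at this
    linarith
  · push Not at hsa
    have hs0 : 0 < t (f s).1 := ha.trans hsa
    have h2a : 2 * a ≤ t (f s).1 := by
      apply Finset.le_inf'
      intro i hi
      have h1 := abs_le.1 (hclose s hs0 i hi)
      have h2 := hy5 i hi
      rw [← hs] at h2
      linarith
    apply hy4 s
    rw [← hs]
    ext i
    simp [h, hθb s h2a]

theorem good_null {S V : Type*} [Fintype V] [MetricSpace S] [CompactSpace S] [Nonempty S]
    {n : ℕ} {K : Set (Finset V)} (hK : Good n K)
    (hdim : dimH (Set.univ : Set S) < ((n - 1 : ℕ) : ENNReal)) : NullAll S K := by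
  induction hK with
  | empty => exact null_empty
  | step K R F hK hRF hn hR hS ih =>
    have hlow' := (Good.step K R F hK hRF hn hR hS).lower
    rcases R.eq_empty_or_nonempty with hR0 | hR0
    · subst hR0
      refine null_simplex hlow' (F := F) (Or.inr ⟨hRF, le_rfl⟩) ?_
      rintro A (hA | hA)
      · exact absurd (hK.lower A hA ∅ (by simp)) hR
      · exact hA.2
    · by_cases hne : R = F
      · subst hne
        intro f
        have hd : dimH (Set.univ : Set S) < ((R.card - 1 : ℕ) : ENNReal) := by
          refine hdim.trans_le ?_
          have := hn rfl
          exact_mod_cast (by omega : n - 1 ≤ R.card - 1)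
        obtain ⟨f1, hf1, y, h1, h2, h3, h4⟩ := gen_pos hK.lower hR0 hR hlow' hd f
        obtain ⟨p, hp⟩ := null_radial hK.lower hR0 hR hS hlow' ih f1 y h1 h2 h3 h4
        exact ⟨p, hf1.trans hp⟩
      · exact null_collapse hK.lower hRF hne hR0 hR hS hlow' ih

abbrev Sph (j : ℕ) := Metric.sphere (0 : Fin (j + 1) → ℝ) 1

instance sph_nonempty (j : ℕ) : Nonempty (Sph j) :=
  ⟨⟨fun _ => 1, by
    rw [mem_sphere_zero_iff_norm]
    rw [pi_norm_const]; simp⟩⟩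

theorem sph_abs {j : ℕ} (y : Fin (j + 1) → ℝ) (hy : ‖y‖ = 1) : ∃ i, |y i| = 1 := by
  obtain ⟨i, hi⟩ := Finite.exists_max fun i => |y i|
  refine ⟨i, le_antisymm (hy ▸ norm_le_pi_norm y i) ?_⟩
  rw [← hy]
  exact (pi_norm_le_iff_of_nonneg (abs_nonneg _)).2 hi

theorem sph_dim (j : ℕ) : dimH (Set.univ : Set (Sph j)) ≤ j := by
  have h0 : dimH (Set.univ : Set (Sph j)) = dimH (Metric.sphere (0 : Fin (j + 1) → ℝ) 1) := by
    rw [← (isometry_subtype_coe (s := Metric.sphere (0 : Fin (j + 1) → ℝ) 1)).dimH_image Set.univ,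
      Set.image_univ, Subtype.range_coe]
  rw [h0]
  let φ : Fin (j + 1) × Bool → (Fin j → ℝ) → (Fin (j + 1) → ℝ) := fun a z =>
    Fin.insertNth (α := fun _ => ℝ) a.1 (if a.2 then 1 else -1) z
  have hφ : ∀ a, LipschitzWith 1 (φ a) := by
    intro a
    refine LipschitzWith.of_dist_le_mul fun x y => ?_
    rw [NNReal.coe_one, one_mul, dist_pi_le_iff dist_nonneg]
    intro i
    refine Fin.succAboveCases a.1 ?_ (fun i => ?_) i
    · simp [φ]
    · simp only [φ, Fin.insertNth_apply_succAbove]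
      exact dist_le_pi_dist x y i
  have hsub : Metric.sphere (0 : Fin (j + 1) → ℝ) 1 ⊆ ⋃ a, Set.range (φ a) := by
    intro y hy
    rw [mem_sphere_zero_iff_norm] at hy
    obtain ⟨i, hi⟩ := sph_abs y hy
    rw [Set.mem_iUnion]
    rcases (abs_eq zero_le_one).1 hi with h | h
    · refine ⟨(i, true), i.removeNth y, ?_⟩
      simp only [φ, if_true]
      rw [← h]; simp
    · refine ⟨(i, false), i.removeNth y, ?_⟩
      simp only [φ]
      rw [if_neg (by simp), ← h]; simp
  refine (dimH_mono hsub).trans ?_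
  rw [dimH_iUnion]
  refine iSup_le fun a => ?_
  refine (hφ a).dimH_range_le.trans ?_
  rw [Real.dimH_univ_pi_fin]

/-- extension of a nullhomotopic map over the ball -/
theorem ext_ball {j : ℕ} {X : Type*} [TopologicalSpace X] (f : C(Sph j, X))
    (hf : f.Nullhomotopic) :
    ∃ G : C(Metric.closedBall (0 : Fin (j + 1) → ℝ) 1, X),
      ∀ y : Sph j, G ⟨y.1, Metric.sphere_subset_closedBall y.2⟩ = f y := by
  obtain ⟨p, ⟨H⟩⟩ := hf
  let q : C(unitInterval × Sph j, Metric.closedBall (0 : Fin (j + 1) → ℝ) 1) :=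
    ⟨fun a => ⟨(1 - (a.1 : ℝ)) • a.2.1, by
      rw [mem_closedBall_zero_iff, norm_smul, mem_sphere_zero_iff_norm.1 a.2.2, mul_one,
        Real.norm_eq_abs, abs_le]
      have := a.1.2.1
      have := a.1.2.2
      constructor <;> linarith⟩, by fun_prop⟩
  have hq : Topology.IsQuotientMap q := by
    refine q.continuous.isClosedMap.isQuotientMap q.continuous ?_
    rintro ⟨y, hy⟩
    rw [mem_closedBall_zero_iff] at hy
    by_cases h0 : y = 0
    · obtain ⟨z⟩ := sph_nonempty j
      refine ⟨(1, z), Subtype.ext ?_⟩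
      simp [q, h0]
    · have hn : ‖y‖ ≠ 0 := norm_ne_zero_iff.2 h0
      refine ⟨(⟨1 - ‖y‖, by linarith, by linarith [norm_nonneg y]⟩, ⟨‖y‖⁻¹ • y, ?_⟩), Subtype.ext ?_⟩
      · rw [mem_sphere_zero_iff_norm, norm_smul, norm_inv, norm_norm, inv_mul_cancel₀ hn]
      · simp [q, smul_smul, hn]
  have hfac : ∀ a b, q a = q b → H a = H b := by
    rintro ⟨t, y⟩ ⟨u, z⟩ h
    have h1 : (1 - (t : ℝ)) • y.1 = (1 - (u : ℝ)) • z.1 := congrArg Subtype.val h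
    have h2 := congrArg norm h1
    rw [norm_smul, norm_smul, mem_sphere_zero_iff_norm.1 y.2, mem_sphere_zero_iff_norm.1 z.2,
      mul_one, mul_one, Real.norm_of_nonneg (by linarith [t.2.2]),
      Real.norm_of_nonneg (by linarith [u.2.2])] at h2
    have h3 : t = u := Subtype.ext (by linarith)
    subst h3
    by_cases ht : t = 1
    · subst ht
      simp
    · have : 1 - (t : ℝ) ≠ 0 := fun h => ht (Subtype.ext (by rw [Set.Icc.coe_one]; linarith))
      have h4 : y = z := Subtype.ext (smul_right_injective _ this h1)
      rw [h4]
  refine ⟨hq.lift H.toContinuousMap (fun a b h => hfac a b h), fun y => ?_⟩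
  have h5 : (⟨y.1, Metric.sphere_subset_closedBall y.2⟩ :
      Metric.closedBall (0 : Fin (j + 1) → ℝ) 1) = q (0, y) := Subtype.ext (by simp [q])
  rw [h5]
  have := congrArg (fun g : C(_, X) => g (0, y)) (hq.lift_comp H.toContinuousMap (fun a b h => hfac a b h))
  refine this.trans ?_
  simp

theorem subsingleton_htpy {j : ℕ} {X : Type*} [TopologicalSpace X]
    (hX : ∀ f : C(Sph j, X), f.Nullhomotopic) (x : X) :
    Subsingleton (HomotopyGroup (Fin j) X x) := by
  have key : ∀ f : GenLoop (Fin j) X x, GenLoop.Homotopic f GenLoop.const := by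
    intro f
    let e : (Fin (j + 1) → ℝ) → (Fin j → unitInterval) := fun y i =>
      Set.projIcc 0 1 zero_le_one ((y i.succ + 1) / 2)
    have ce : Continuous e := by
      refine continuous_pi fun i => ?_
      refine continuous_projIcc.comp ?_
      fun_prop
    have hbd : ∀ y : Sph j, y.1 0 = 0 → e y.1 ∈ Cube.boundary (Fin j) := by
      intro y hy
      obtain ⟨i, hi⟩ := sph_abs y.1 (mem_sphere_zero_iff_norm.1 y.2)
      rcases Fin.eq_zero_or_eq_succ i with h | ⟨i, h⟩
      · subst h; rw [hy] at hi; simp at hi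
      · subst h
        refine ⟨i, ?_⟩
        rcases (abs_eq zero_le_one).1 hi with h | h
        · right; simp only [e, h]; norm_num
        · left; simp only [e, h]; norm_num
    let f' : C(Sph j, X) := ⟨fun y => if y.1 0 ≤ 0 then f (e y.1) else x, by
      refine Continuous.if_le ?_ continuous_const ?_ continuous_const ?_
      · exact f.1.continuous.comp (ce.comp continuous_subtype_val)
      · exact (continuous_apply 0).comp continuous_subtype_val
      · intro y hy
        exact f.2 _ (hbd y hy)⟩
    obtain ⟨G, hG⟩ := ext_ball f' (hX f')
    let b : unitInterval × (Fin j → unitInterval) → (Fin (j + 1) → ℝ) := fun a =>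
      Fin.cons (2 * (a.1 : ℝ) - 1) (fun i => 2 * (a.2 i : ℝ) - 1)
    have hI : ∀ t : unitInterval, |2 * (t : ℝ) - 1| ≤ 1 := fun t => by
      rw [abs_le]; constructor <;> linarith [t.2.1, t.2.2]
    have hb : ∀ a, ‖b a‖ ≤ 1 := by
      intro a
      rw [pi_norm_le_iff_of_nonneg zero_le_one]
      intro i
      refine Fin.cases ?_ (fun i => ?_) i
      · exact hI _
      · exact hI _
    have hb1 : ∀ a i, |b a i| = 1 → ‖b a‖ = 1 := fun a i h =>
      le_antisymm (hb a) (h ▸ norm_le_pi_norm (b a) i)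
    have cb : Continuous b := by
      refine continuous_pi fun i => ?_
      refine Fin.cases ?_ (fun i => ?_) i
      · simp only [b, Fin.cons_zero]; fun_prop
      · simp only [b, Fin.cons_succ]; fun_prop
    have heb : ∀ a, e (b a) = a.2 := by
      intro a
      ext i
      simp only [e, b, Fin.cons_succ]
      have : (2 * (a.2 i : ℝ) - 1 + 1) / 2 = a.2 i := by ring
      rw [this, Set.projIcc_val]
    let Φ : C(unitInterval × (Fin j → unitInterval), X) :=
      ⟨fun a => G ⟨b a, mem_closedBall_zero_iff.2 (hb a)⟩, G.continuous.comp (cb.subtype_mk _)⟩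
    have hΦ : ∀ a i, |b a i| = 1 → Φ a = if b a 0 ≤ 0 then f a.2 else x := by
      intro a i h
      have h2 := hG ⟨b a, mem_sphere_zero_iff_norm.2 (hb1 a i h)⟩
      refine h2.trans ?_
      show (if b a 0 ≤ 0 then f (e (b a)) else x) = _
      rw [heb]
    have hbdry : ∀ t u, u ∈ Cube.boundary (Fin j) → Φ (t, u) = x := by
      rintro t u ⟨i, hi⟩
      have h1 : |b (t, u) i.succ| = 1 := by
        simp only [b, Fin.cons_succ]
        rcases hi with h | h <;> rw [h] <;> norm_num
      have h2 : f u = x := f.2 u ⟨i, hi⟩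
      rw [hΦ _ _ h1]
      show (if b (t, u) 0 ≤ 0 then f u else x) = x
      rw [h2, ite_self]
    refine ⟨⟨⟨Φ, ?_, ?_⟩, ?_⟩⟩
    · intro u
      refine (hΦ (0, u) 0 (by simp [b])).trans ?_
      rw [if_pos (by simp [b])]; rfl
    · intro u
      refine (hΦ (1, u) 0 (by norm_num [b])).trans ?_
      rw [if_neg (by norm_num [b])]; rfl
    · intro t u hu
      exact (hbdry t u hu).trans (f.2 u hu).symm
  refine ⟨fun a b => ?_⟩
  induction a using Quotient.inductionOn
  induction b using Quotient.inductionOn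
  exact Quotient.sound ((key _).trans (key _).symm)

theorem conf_nonempty (m r k s : ℕ) (C : Fin (k + 1) → Finset (Fin m)) (hk : 1 ≤ k) (hm : 0 < m)
    (hr : 0 < r) : Nonempty (confRealization m r k s C) := by
  let q : Fin m × Fin r := (⟨0, hm⟩, ⟨0, hr⟩)
  refine ⟨⟨Pi.single q 1, single_mem_stdSimplex ℝ q, ?_⟩⟩
  have h1 : (Finset.univ.filter fun a => (Pi.single q 1 : Fin m × Fin r → ℝ) a ≠ 0) ⊆ {q} := by
    intro a ha
    rw [Finset.mem_filter] at ha
    rw [Finset.mem_singleton]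
    by_contra h
    exact ha.2 (by simp [h])
  set T := (Finset.univ.filter fun a => (Pi.single q 1 : Fin m × Fin r → ℝ) a ≠ 0) with hT
  have hc : T.card ≤ 1 := (Finset.card_le_card h1).trans (by simp)
  refine ⟨?_, ?_, ?_⟩
  · intro v i j hi hj
    have a1 := Finset.mem_singleton.1 (h1 hi)
    have a2 := Finset.mem_singleton.1 (h1 hj)
    exact congrArg Prod.snd (a1.trans a2.symm)
  · intro i c
    exact (Finset.card_le_card (Finset.filter_subset _ _)).trans hc
  · rw [Finset.filter_false_of_mem]
    · simp
    · intro i _ h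
      have := (Finset.card_le_card (Finset.filter_subset (fun a => a.2 = i) T)).trans hc
      omega

/-- **Proposition 3.2** (`T:connect`): with `r = p^ν` a prime power, `d ≥ 1`,
`k = ⌈(r-1)d/r⌉`, `s = (r-1)d - r(k-1)` with `s < r`, `m = (2r-1)(k+1)` and color
classes of size `2r-1` partitioning `[m]`, the configuration space `𝔠` of tuples
`(A₁,…,A_r; B)` of disjoint rainbow sets (at most `s` of size `k+1`) is
`(rk+s-2)`-connected. -/
theorem configuration_space_connectivity (p ν r d k s m : ℕ)
    (hp : p.Prime) (hν : 1 ≤ ν) (hr : r = p ^ ν) (hd : 1 ≤ d)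
    (hk : (k : ℤ) = ⌈((r : ℚ) - 1) * d / r⌉)
    (hs : (s : ℤ) = ((r : ℤ) - 1) * d - r * ((k : ℤ) - 1))
    (hsr : s < r)
    (hm : m = (2 * r - 1) * (k + 1))
    (C : Fin (k + 1) → Finset (Fin m))
    (hCpart : ∀ v : Fin m, ∃! i, v ∈ C i)
    (hCcard : ∀ i, (C i).card = 2 * r - 1) :
    Nonempty (confRealization m r k s C) ∧
    ∀ j : ℕ, j + 1 < r * k + s → ∀ x : confRealization m r k s C,
      Subsingleton (HomotopyGroup (Fin j) (confRealization m r k s C) x) := by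
  have hr2 : 2 ≤ r := by
    rw [hr]
    exact hp.two_le.trans (Nat.le_self_pow (by omega) p)
  have hk1 : 1 ≤ k := by
    have h1 : (0 : ℤ) < ⌈((r : ℚ) - 1) * d / r⌉ := by
      rw [Int.ceil_pos]
      have h2 : (2 : ℚ) ≤ r := by exact_mod_cast hr2
      have h3 : (1 : ℚ) ≤ d := by exact_mod_cast hd
      have h4 : (0 : ℚ) < (r : ℚ) - 1 := by linarith
      positivity
    rw [← hk] at h1
    exact_mod_cast h1
  have hm0 : 0 < m := by
    rw [hm]
    exact Nat.mul_pos (by omega) (by omega)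
  refine ⟨conf_nonempty m r k s C hk1 hm0 (by omega), ?_⟩
  have hgeo : confRealization m r k s C = geo {S | IsConfSimplex m r k s C S} := rfl
  intro j hj
  rw [hgeo]
  refine subsingleton_htpy (good_null (conf_good m r k s hsr C hCpart hCcard) ?_)
  refine (sph_dim j).trans_lt ?_
  exact_mod_cast (by omega : j < r * k + s - 1)
end
end

section
/- Let K be the complete multipartite complex K_{3,3,3} = [3]*[3]*[3] and let f : K → R^2 be continuous and admit a factorization f = g ∘ α where α : K_{3,3,3} → K_{2,2,2} is the simplicial map induced by surjections [3] → [2] on each color class and g : K_{2,2,2} → R^2 is continuous. Then there exist three pairwise vertex-disjoint triangles Δ_1, Δ_2, Δ_3 in K (each with one vertex of each color) such that f(Δ_1) ∩ f(Δ_2) ∩ f(Δ_3) ≠ ∅. -/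
open scoped Classical

noncomputable section

/-- The geometric realization of the complete multipartite complex
`K_{3,3,3} = [3]*[3]*[3]` (the rainbow simplices): vertices are pairs
`(color, index) ∈ Fin 3 × Fin 3`, and a point of the standard simplex lies in the
realization iff its support contains at most one vertex of each color. -/
def K333 : Set ((Fin 3 × Fin 3) → ℝ) :=
  {x ∈ stdSimplex ℝ (Fin 3 × Fin 3) |
    ∀ c : Fin 3, (Finset.univ.filter fun v => x v ≠ 0 ∧ v.1 = c).card ≤ 1}

/-- Likewise the realization of `K_{2,2,2}`, with vertices `Fin 3 × Fin 2`. -/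
def K222 : Set ((Fin 3 × Fin 2) → ℝ) :=
  {x ∈ stdSimplex ℝ (Fin 3 × Fin 2) |
    ∀ c : Fin 3, (Finset.univ.filter fun v => x v ≠ 0 ∧ v.1 = c).card ≤ 1}

/-- The affine (simplicial) map `K_{3,3,3} → K_{2,2,2}` induced by the vertex
surjections `q c : [3] → [2]` on each color class. -/
def inducedMap (q : Fin 3 → Fin 3 → Fin 2) (x : (Fin 3 × Fin 3) → ℝ) :
    (Fin 3 × Fin 2) → ℝ :=
  fun w => ∑ i : Fin 3, if q w.1 i = w.2 then x (w.1, i) else 0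

/-- The geometric triangle of `K_{3,3,3}` spanned by the rainbow vertex set
`{(c, v c) : c ∈ Fin 3}`. -/
def triangleFace (v : Fin 3 → Fin 3) : Set ((Fin 3 × Fin 3) → ℝ) :=
  {x ∈ stdSimplex ℝ (Fin 3 × Fin 3) | ∀ w, x w ≠ 0 → w.2 = v w.1}


namespace CTV

def Adj (u v : ℤ × ℤ) : Prop :=
  |v.1 - u.1| ≤ 1 ∧ |v.2 - u.2| ≤ 1 ∧ |(v.1 - u.1) + (v.2 - u.2)| ≤ 1

lemma Adj.symm {u v : ℤ × ℤ} (h : Adj u v) : Adj v u := by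
  unfold Adj at *
  simp only [abs_le] at *
  omega

lemma Adj.refl (u : ℤ × ℤ) : Adj u u := by simp [Adj]

/-- sum of `φ` over all small triangles of the subdivided triangle. -/
def triSum {P : Type} (n : ℕ) (H : ℕ → ℕ → P) (φ : P → P → P → ZMod 2) : ZMod 2 :=
  ∑ m ∈ Finset.range n,
    ((∑ k ∈ Finset.range (m + 1), φ (H m k) (H (m + 1) k) (H (m + 1) (k + 1))) +
      ∑ k ∈ Finset.range m, φ (H m k) (H m (k + 1)) (H (m + 1) (k + 1)))

def bdSum {P : Type} (n : ℕ) (H : ℕ → ℕ → P) (β : P → P → ZMod 2) : ZMod 2 :=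
  (∑ m ∈ Finset.range n, β (H m 0) (H (m + 1) 0)) +
  (∑ m ∈ Finset.range n, β (H m m) (H (m + 1) (m + 1))) +
  ∑ k ∈ Finset.range n, β (H n k) (H n (k + 1))

lemma two0 : (2 : ZMod 2) = 0 := by decide

lemma stokes {P : Type} (n : ℕ) (H : ℕ → ℕ → P) (β : P → P → ZMod 2)
    (hs : ∀ u v, β u v = β v u) :
    triSum n H (fun u v w => β u v + β v w + β w u) = bdSum n H β := by
  induction n with
  | zero => simp [triSum, bdSum]
  | succ n ih =>
    unfold triSum bdSum at *
    rw [Finset.sum_range_succ, ih]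
    simp only [Finset.sum_add_distrib]
    rw [Finset.sum_range_succ _ n, Finset.sum_range_succ _ n]
    have e1 : ∑ k ∈ Finset.range (n + 1), β (H n k) (H (n + 1) k)
        = (∑ k ∈ Finset.range n, β (H n (k + 1)) (H (n + 1) (k + 1))) +
          β (H n 0) (H (n + 1) 0) := Finset.sum_range_succ' _ n
    have e2 : ∑ k ∈ Finset.range (n + 1), β (H (n + 1) (k + 1)) (H n k)
        = (∑ k ∈ Finset.range n, β (H (n + 1) (k + 1)) (H n k)) +
          β (H n n) (H (n + 1) (n + 1)) := by
      rw [Finset.sum_range_succ, hs (H n n)]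
    rw [Finset.sum_range_succ _ n] at e1
    rw [Finset.sum_range_succ (fun m => β (H m 0) (H (m + 1) 0)) n,
      Finset.sum_range_succ (fun m => β (H m m) (H (m + 1) (m + 1))) n]
    rw [e1, e2]
    linear_combination ((∑ k ∈ Finset.range n, β (H n (k + 1)) (H (n + 1) (k + 1))) +
      (∑ k ∈ Finset.range n, β (H n k) (H n (k + 1))) +
      ∑ k ∈ Finset.range n, β (H (n + 1) (k + 1)) (H n k)) * two0

/-- `u v w` is a small triangle. -/
def IsTri {P : Type} (n : ℕ) (H : ℕ → ℕ → P) (u v w : P) : Prop :=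
  ∃ m k, m < n ∧ k ≤ m ∧ ((u = H m k ∧ v = H (m + 1) k ∧ w = H (m + 1) (k + 1)) ∨
    (k < m ∧ u = H m k ∧ v = H m (k + 1) ∧ w = H (m + 1) (k + 1)))

lemma triSum_congr {P : Type} {n : ℕ} {H : ℕ → ℕ → P} {φ ψ : P → P → P → ZMod 2}
    (h : ∀ u v w, IsTri n H u v w → φ u v w = ψ u v w) : triSum n H φ = triSum n H ψ := by
  unfold triSum
  refine Finset.sum_congr rfl fun m hm => ?_
  rw [Finset.mem_range] at hm
  congr 1
  · refine Finset.sum_congr rfl fun k hk => ?_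
    rw [Finset.mem_range] at hk
    exact h _ _ _ ⟨m, k, hm, by omega, Or.inl ⟨rfl, rfl, rfl⟩⟩
  · refine Finset.sum_congr rfl fun k hk => ?_
    rw [Finset.mem_range] at hk
    exact h _ _ _ ⟨m, k, hm, by omega, Or.inr ⟨hk, rfl, rfl, rfl⟩⟩

lemma triSum_zero {P : Type} {n : ℕ} {H : ℕ → ℕ → P} :
    triSum n H (fun _ _ _ => 0) = 0 := by simp [triSum]

lemma triSum_add {P : Type} {n : ℕ} {H : ℕ → ℕ → P} (φ ψ : P → P → P → ZMod 2) :
    triSum n H (fun u v w => φ u v w + ψ u v w) = triSum n H φ + triSum n H ψ := by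
  simp only [triSum, Finset.sum_add_distrib]; ring

lemma triSum_sum {P ι : Type} {n : ℕ} {H : ℕ → ℕ → P} (I : Finset ι)
    (φ : ι → P → P → P → ZMod 2) :
    triSum n H (fun u v w => ∑ i ∈ I, φ i u v w) = ∑ i ∈ I, triSum n H (φ i) := by
  induction I using Finset.induction_on with
  | empty => simp [triSum_zero]
  | insert a s ha ih => simp only [Finset.sum_insert ha, triSum_add, ih]

lemma exists_of_triSum_ne {P : Type} {n : ℕ} {H : ℕ → ℕ → P} {φ : P → P → P → ZMod 2}
    (h : triSum n H φ ≠ 0) : ∃ u v w, IsTri n H u v w ∧ φ u v w ≠ 0 := by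
  by_contra hc
  push Not at hc
  exact h ((triSum_congr hc).trans triSum_zero)

/-- the image degree of a triangle -/
def D {P : Type} [DecidableEq P] (n : ℕ) (H : ℕ → ℕ → P) (τ : Finset P) : ZMod 2 :=
  triSum n H (fun u v w => if ({u, v, w} : Finset P) = τ then 1 else 0)

def edgeInd {P : Type} [DecidableEq P] (a b u v : P) : ZMod 2 :=
  if (u = a ∧ v = b) ∨ (u = b ∧ v = a) then 1 else 0

lemma edgeInd_symm {P : Type} [DecidableEq P] (a b u v : P) : edgeInd a b u v = edgeInd a b v u := by
  unfold edgeInd; simp only [or_comm, and_comm]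

def InIm {P : Type} (n : ℕ) (H : ℕ → ℕ → P) (p : P) : Prop := ∃ m k, m ≤ n ∧ k ≤ m ∧ H m k = p

lemma IsTri.mem {P : Type} {n : ℕ} {H : ℕ → ℕ → P} {u v w : P} (h : IsTri n H u v w) :
    InIm n H u ∧ InIm n H v ∧ InIm n H w := by
  obtain ⟨m, k, hm, hk, ⟨rfl, rfl, rfl⟩ | ⟨hk', rfl, rfl, rfl⟩⟩ := h
  · exact ⟨⟨_, _, by omega, by omega, rfl⟩, ⟨_, _, by omega, by omega, rfl⟩,
      ⟨_, _, by omega, by omega, rfl⟩⟩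
  · exact ⟨⟨_, _, by omega, by omega, rfl⟩, ⟨_, _, by omega, by omega, rfl⟩,
      ⟨_, _, by omega, by omega, rfl⟩⟩

def AdjMap (n : ℕ) (H : ℕ → ℕ → ℤ × ℤ) : Prop :=
  ∀ m k, m < n → k ≤ m → Adj (H m k) (H (m + 1) k) ∧ Adj (H m k) (H (m + 1) (k + 1)) ∧
    Adj (H (m + 1) k) (H (m + 1) (k + 1))

lemma IsTri.adj {n : ℕ} {H : ℕ → ℕ → ℤ × ℤ} (hA : AdjMap n H) {u v w : ℤ × ℤ}
    (h : IsTri n H u v w) : Adj u v ∧ Adj v w ∧ Adj w u := by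
  obtain ⟨m, k, hm, hk, ⟨rfl, rfl, rfl⟩ | ⟨hk', rfl, rfl, rfl⟩⟩ := h
  · obtain ⟨a, b, c⟩ := hA m k hm hk
    exact ⟨a, c, b.symm⟩
  · obtain ⟨a, b, c⟩ := hA m k hm hk
    obtain ⟨a', b', c'⟩ := hA m (k + 1) hm hk'
    obtain ⟨m, rfl⟩ : ∃ j, m = j + 1 := ⟨m - 1, by omega⟩
    obtain ⟨a2, b2, c2⟩ := hA m k (by omega) (by omega)
    exact ⟨c2, a', b.symm⟩

lemma tri_eq_iff {P : Type} [DecidableEq P] {a b c u v w : P} (hab : a ≠ b) (hac : a ≠ c)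
    (hbc : b ≠ c) : ({u, v, w} : Finset P) = {a, b, c} ↔
      (a = u ∨ a = v ∨ a = w) ∧ (b = u ∨ b = v ∨ b = w) ∧ (c = u ∨ c = v ∨ c = w) := by
  constructor
  · intro h
    have h1 : a ∈ ({u, v, w} : Finset P) := by rw [h]; simp
    have h2 : b ∈ ({u, v, w} : Finset P) := by rw [h]; simp
    have h3 : c ∈ ({u, v, w} : Finset P) := by rw [h]; simp
    simp only [Finset.mem_insert, Finset.mem_singleton] at h1 h2 h3
    exact ⟨h1, h2, h3⟩
  · rintro ⟨h1, h2, h3⟩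
    symm
    apply Finset.eq_of_subset_of_card_le
    · intro x hx
      simp only [Finset.mem_insert, Finset.mem_singleton] at hx ⊢
      rcases hx with rfl | rfl | rfl <;> assumption
    · rw [Finset.card_eq_three.2 ⟨a, b, c, hab, hac, hbc, rfl⟩]
      exact Finset.card_le_three

lemma tri_ident {P : Type} [DecidableEq P] {a b c d u v w : P} (hab : a ≠ b) (hac : a ≠ c)
    (had : a ≠ d) (hbc : b ≠ c) (hbd : b ≠ d) (hcd : c ≠ d)
    (h1 : edgeInd a b u v ≠ 0 → w = a ∨ w = b ∨ w = c ∨ w = d)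
    (h2 : edgeInd a b v w ≠ 0 → u = a ∨ u = b ∨ u = c ∨ u = d)
    (h3 : edgeInd a b w u ≠ 0 → v = a ∨ v = b ∨ v = c ∨ v = d) :
    edgeInd a b u v + edgeInd a b v w + edgeInd a b w u =
      (if ({u, v, w} : Finset P) = {a, b, c} then 1 else 0) +
      (if ({u, v, w} : Finset P) = {a, b, d} then 1 else 0) := by
  simp only [tri_eq_iff hab hac hbc, tri_eq_iff hab had hbd]
  have h11 : (1 : ZMod 2) + 1 = 0 := by decide
  unfold edgeInd at *
  simp only [ne_eq, ite_eq_right_iff, one_ne_zero, imp_false, not_not] at h1 h2 h3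
  by_cases hu : (u = a ∧ v = b) ∨ (u = b ∧ v = a)
  · have := h1 hu
    clear h1 h2 h3
    obtain ⟨rfl, rfl⟩ | ⟨rfl, rfl⟩ := hu <;> rcases this with rfl | rfl | rfl | rfl <;>
      simp [hab, hac, had, hbc, hbd, hcd, hab.symm, hac.symm, had.symm, hbc.symm, hbd.symm,
        hcd.symm, h11]
  by_cases hv : (v = a ∧ w = b) ∨ (v = b ∧ w = a)
  · have := h2 hv
    clear h1 h2 h3 hu
    obtain ⟨rfl, rfl⟩ | ⟨rfl, rfl⟩ := hv <;> rcases this with rfl | rfl | rfl | rfl <;>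
      simp [hab, hac, had, hbc, hbd, hcd, hab.symm, hac.symm, had.symm, hbc.symm, hbd.symm,
        hcd.symm, h11]
  by_cases hw : (w = a ∧ u = b) ∨ (w = b ∧ u = a)
  · have := h3 hw
    clear h1 h2 h3 hu hv
    obtain ⟨rfl, rfl⟩ | ⟨rfl, rfl⟩ := hw <;> rcases this with rfl | rfl | rfl | rfl <;>
      simp [hab, hac, had, hbc, hbd, hcd, hab.symm, hac.symm, had.symm, hbc.symm, hbd.symm,
        hcd.symm, h11]
  rw [if_neg hu, if_neg hv, if_neg hw, if_neg, if_neg]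
  · simp
  · rintro ⟨rfl | rfl | rfl, rfl | rfl | rfl, -⟩ <;> simp_all
  · rintro ⟨rfl | rfl | rfl, rfl | rfl | rfl, -⟩ <;> simp_all

lemma edge_lemma {n : ℕ} {H : ℕ → ℕ → ℤ × ℤ} (hA : AdjMap n H) {a b c d : ℤ × ℤ}
    (hab : a ≠ b) (hac : a ≠ c) (had : a ≠ d)
    (hbc : b ≠ c) (hbd : b ≠ d) (hcd : c ≠ d)
    (hl : ∀ w, Adj w a → Adj w b → w = a ∨ w = b ∨ w = c ∨ w = d) :
    D n H {a, b, c} + D n H {a, b, d} = bdSum n H (edgeInd a b) := by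
  rw [← stokes n H _ (edgeInd_symm a b), D, D, ← triSum_add]
  refine triSum_congr fun u v w h => ?_
  obtain ⟨h1, h2, h3⟩ := h.adj hA
  have key : ∀ {u v w : ℤ × ℤ}, Adj v w → Adj w u → edgeInd a b u v ≠ 0 →
      w = a ∨ w = b ∨ w = c ∨ w = d := by
    intro u v w h2 h3 h
    unfold edgeInd at h
    simp only [ne_eq, ite_eq_right_iff, one_ne_zero, imp_false, not_not] at h
    obtain ⟨rfl, rfl⟩ | ⟨rfl, rfl⟩ := h
    · exact hl _ h3 h2.symm
    · exact hl _ h2.symm h3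
  exact (tri_ident hab hac had hbc hbd hcd (key h2 h3) (key h3 h1) (key h1 h2)).symm

def Up (x y : ℤ) : Finset (ℤ × ℤ) := {(x, y), (x + 1, y), (x, y + 1)}
def Dn (x y : ℤ) : Finset (ℤ × ℤ) := {(x + 1, y), (x, y + 1), (x + 1, y + 1)}

lemma edge_diag {n : ℕ} {H : ℕ → ℕ → ℤ × ℤ} (hA : AdjMap n H) (x y : ℤ) :
    D n H (Up x y) + D n H (Dn x y) = bdSum n H (edgeInd (x + 1, y) (x, y + 1)) := by
  have := edge_lemma hA (a := (x + 1, y)) (b := (x, y + 1)) (c := (x, y)) (d := (x + 1, y + 1))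
    (by simp) (by simp) (by simp) (by simp) (by simp) (by simp) (by
      rintro ⟨p, q⟩ h1 h2
      simp only [Adj, abs_le, Prod.mk.injEq] at *
      omega)
  rw [← this]
  congr 2
  unfold Up
  ext z; simp; tauto

lemma edge_vert {n : ℕ} {H : ℕ → ℕ → ℤ × ℤ} (hA : AdjMap n H) (x y : ℤ) :
    D n H (Up (x + 1) y) + D n H (Dn x y) = bdSum n H (edgeInd (x + 1, y) (x + 1, y + 1)) := by
  have := edge_lemma hA (a := (x + 1, y)) (b := (x + 1, y + 1)) (c := (x + 1 + 1, y))
    (d := (x, y + 1))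
    (by simp) (by simp) (by simp) (by simp) (by simp) (by simp) (by
      rintro ⟨p, q⟩ h1 h2
      simp only [Adj, abs_le, Prod.mk.injEq] at *
      omega)
  rw [← this]
  congr 2
  · unfold Up
    ext z; simp; tauto
  · unfold Dn
    ext z; simp; tauto

lemma edge_hor {n : ℕ} {H : ℕ → ℕ → ℤ × ℤ} (hA : AdjMap n H) (x y : ℤ) :
    D n H (Up x (y + 1)) + D n H (Dn x y) = bdSum n H (edgeInd (x, y + 1) (x + 1, y + 1)) := by
  have := edge_lemma hA (a := (x, y + 1)) (b := (x + 1, y + 1)) (c := (x, y + 1 + 1))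
    (d := (x + 1, y))
    (by simp) (by simp) (by simp) (by simp) (by simp) (by simp) (by
      rintro ⟨p, q⟩ h1 h2
      simp only [Adj, abs_le, Prod.mk.injEq] at *
      omega)
  rw [← this]
  congr 2
  unfold Dn
  ext z; simp; tauto

lemma z2 {a b : ZMod 2} (h : a + b = 0) : a = b := by
  revert a b; decide

/-- if the boundary misses `p`, the degree is constant on the star of `p`. -/
lemma star_const {n : ℕ} {H : ℕ → ℕ → ℤ × ℤ} (hA : AdjMap n H) (p : ℤ × ℤ)
    (hl : ∀ m ≤ n, H m 0 ≠ p) (hr : ∀ m ≤ n, H m m ≠ p) (hb : ∀ k ≤ n, H n k ≠ p)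
    (x y : ℤ) : (p ∈ Up x y → D n H (Up x y) = D n H (Up p.1 p.2)) ∧
      (p ∈ Dn x y → D n H (Dn x y) = D n H (Up p.1 p.2)) := by
  have hz : ∀ a b : ℤ × ℤ, a = p ∨ b = p → bdSum n H (edgeInd a b) = 0 := by
    intro a b hab
    have aux : ∀ u v, u ≠ p → v ≠ p → edgeInd a b u v = 0 := by
      intro u v hu hv
      unfold edgeInd
      rw [if_neg]
      rintro (⟨rfl, rfl⟩ | ⟨rfl, rfl⟩) <;> tauto
    unfold bdSum
    rw [Finset.sum_eq_zero, Finset.sum_eq_zero, Finset.sum_eq_zero]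
    · simp
    all_goals intro m hm; rw [Finset.mem_range] at hm
    · exact aux _ _ (hb _ (by omega)) (hb _ (by omega))
    · exact aux _ _ (hr _ (by omega)) (hr _ (by omega))
    · exact aux _ _ (hl _ (by omega)) (hl _ (by omega))
  obtain ⟨p, q⟩ := p
  have e1 := edge_vert hA (p - 1) q
  have e2 := edge_diag hA (p - 1) q
  have e3 := edge_hor hA (p - 1) (q - 1)
  have e4 := edge_vert hA (p - 1) (q - 1)
  have e5 := edge_diag hA p (q - 1)
  have e6 := edge_hor hA p (q - 1)
  simp only [sub_add_cancel] at e1 e2 e3 e4 e5 e6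
  rw [hz _ _ (by simp)] at e1 e2 e3 e4 e5 e6
  replace e1 := z2 e1
  replace e2 := z2 e2
  replace e3 := z2 e3
  replace e4 := z2 e4
  replace e5 := z2 e5
  replace e6 := z2 e6
  simp only [Up, Dn, Finset.mem_insert, Finset.mem_singleton, Prod.mk.injEq] at *
  constructor
  · rintro (⟨rfl, rfl⟩ | ⟨rfl, rfl⟩ | ⟨rfl, rfl⟩) <;> simp_all
  · rintro (⟨rfl, rfl⟩ | ⟨rfl, rfl⟩ | ⟨rfl, rfl⟩) <;> simp_all


lemma tri_class {u v w : ℤ × ℤ} (h1 : Adj u v) (h2 : Adj v w) (h3 : Adj w u)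
    (huv : u ≠ v) (hvw : v ≠ w) (huw : u ≠ w) :
    ∃ x y, ({u, v, w} : Finset (ℤ × ℤ)) = Up x y ∨ ({u, v, w} : Finset (ℤ × ℤ)) = Dn x y := by
  refine ⟨min u.1 (min v.1 w.1), min u.2 (min v.2 w.2), ?_⟩
  unfold Up Dn
  rw [tri_eq_iff (by simp) (by simp) (by simp), tri_eq_iff (by simp) (by simp) (by simp)]
  obtain ⟨a, b⟩ := u
  obtain ⟨c, d⟩ := v
  obtain ⟨e, f⟩ := w
  simp only [Adj, abs_le, Prod.mk.injEq, ne_eq] at *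
  obtain ⟨x, hx⟩ : ∃ x, x = min a (min c e) := ⟨_, rfl⟩
  obtain ⟨y, hy⟩ : ∃ y, y = min b (min d f) := ⟨_, rfl⟩
  rw [← hx, ← hy]
  have ha : a = x ∨ a = x + 1 := by omega
  have hc : c = x ∨ c = x + 1 := by omega
  have he : e = x ∨ e = x + 1 := by omega
  have hb : b = y ∨ b = y + 1 := by omega
  have hd : d = y ∨ d = y + 1 := by omega
  have hf : f = y ∨ f = y + 1 := by omega
  clear hx hy
  rcases ha with rfl | rfl <;> rcases hb with rfl | rfl <;> rcases hc with rfl | rfl <;>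
    rcases hd with rfl | rfl <;> first | (exfalso; omega) | skip
  all_goals rcases he with rfl | rfl <;> rcases hf with rfl | rfl <;>
    first | (exfalso; omega) | simp

def Nf (i : Fin 3) : Fin 3 → Bool := fun c => decide (c = i)
def Mf (i : Fin 3) : Fin 3 → Bool := fun c => decide (c ≠ i)
def Tf : Fin 3 → Bool := fun _ => false
def Of : Fin 3 → Bool := fun _ => true

lemma sum_flip (c : Fin 3) (f : (Fin 3 → Bool) → ZMod 2)
    (hf : ∀ s s', (∀ c', c' ≠ c → s c' = s' c') → f s = f s') : ∑ s, f s = 0 := by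
  refine Finset.sum_involution (fun s _ => Function.update s c (!s c)) ?_ ?_ ?_ ?_
  · intro s _
    rw [hf (Function.update s c (!s c)) s (by intro c' h; simp [h])]
    linear_combination f s * two0
  · intro s _ _ h
    have := congrFun h c
    simp at this
  · simp
  · intro s _
    simp

lemma face_cases : ∀ s : Fin 3 → Bool, s = Tf ∨ s = Of ∨ (∃ i, s = Nf i) ∨ ∃ i, s = Mf i := by
  decide

lemma M_nbr : ∀ i c : Fin 3, ∃ s' : Fin 3 → Bool, (s' = Of ∨ ∃ k, s' = Nf k) ∧
    ∀ c', c' ≠ c → Mf i c' = s' c' := by decide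

lemma T_nbr : ∀ i c : Fin 3, c ≠ i → Tf c = Nf i c := by decide

def firstIdx (f : Fin 3 → ZMod 2) : Fin 3 := if f 0 ≠ 0 then 0 else if f 1 ≠ 0 then 1 else 2

lemma firstIdx_spec {f : Fin 3 → ZMod 2} (h : ∃ i, f i ≠ 0) : f (firstIdx f) ≠ 0 := by
  obtain ⟨i, hi⟩ := h
  unfold firstIdx
  split_ifs with h0 h1
  · exact h0
  · exact h1
  · push Not at h0 h1
    fin_cases i <;> simp_all

/-- rainbow indicator -/
lemma rb_eq : ∀ a b c : Fin 3, edgeInd 0 1 a b + edgeInd 0 1 b c + edgeInd 0 1 c a =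
    if ∀ l : Fin 3, l = a ∨ l = b ∨ l = c then 1 else 0 := by
  unfold edgeInd
  decide

lemma tele : ∀ a b : Fin 3, a ≠ 2 → b ≠ 2 →
    edgeInd 0 1 a b = (if b = 1 then 1 else 0) - (if a = 1 then (1 : ZMod 2) else 0) := by
  unfold edgeInd
  decide

lemma no0 : ∀ a b : Fin 3, a ≠ 0 → b ≠ 0 → edgeInd 0 1 a b = 0 := by
  unfold edgeInd
  decide

lemma no1 : ∀ a b : Fin 3, a ≠ 1 → b ≠ 1 → edgeInd 0 1 a b = 0 := by
  unfold edgeInd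
  decide

/-- Sperner's lemma, together with the decomposition over image triangles. -/
lemma sperner {n : ℕ} {H : ℕ → ℕ → ℤ × ℤ} (lam : ℤ × ℤ → Fin 3)
    (hl : ∀ m ≤ n, lam (H m 0) ≠ 0) (hr : ∀ m ≤ n, lam (H m m) ≠ 1)
    (hb : ∀ k ≤ n, lam (H n k) ≠ 2) (h0 : lam (H n 0) = 1) (h1 : lam (H n n) = 0) :
    ∃ τ : Finset (ℤ × ℤ), (∀ l, ∃ x ∈ τ, lam x = l) ∧ D n H τ ≠ 0 := by
  have key := stokes n H (fun u v => edgeInd 0 1 (lam u) (lam v))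
    (fun u v => edgeInd_symm _ _ _ _)
  have hbd : bdSum n H (fun u v => edgeInd 0 1 (lam u) (lam v)) = 1 := by
    unfold bdSum
    rw [Finset.sum_eq_zero, Finset.sum_eq_zero,
      Finset.sum_congr rfl (g := fun k => (if lam (H n (k + 1)) = 1 then (1 : ZMod 2) else 0) -
        (if lam (H n k) = 1 then (1 : ZMod 2) else 0)),
      Finset.sum_range_sub (fun k => if lam (H n k) = 1 then (1 : ZMod 2) else 0)]
    · rw [h0, h1]; decide
    all_goals intro m hm; rw [Finset.mem_range] at hm
    · exact tele _ _ (hb _ (by omega)) (hb _ (by omega))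
    · exact no1 _ _ (hr _ (by omega)) (hr _ (by omega))
    · exact no0 _ _ (hl _ (by omega)) (hl _ (by omega))
  rw [hbd] at key
  set V : Finset (ℤ × ℤ) :=
    (Finset.range (n + 1) ×ˢ Finset.range (n + 1)).image (fun p => H p.1 p.2) with hV
  have hmem : ∀ p, InIm n H p → p ∈ V := by
    rintro p ⟨m, k, hm, hk, rfl⟩
    rw [hV, Finset.mem_image]
    exact ⟨(m, k), by simp; omega, rfl⟩
  have e : triSum n H (fun u v w => edgeInd 0 1 (lam u) (lam v) + edgeInd 0 1 (lam v) (lam w) +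
      edgeInd 0 1 (lam w) (lam u)) = ∑ τ ∈ V.powerset,
      triSum n H (fun u v w => if ({u, v, w} : Finset (ℤ × ℤ)) = τ then
        (if ∀ l, ∃ x ∈ τ, lam x = l then 1 else 0) else 0) := by
    rw [← triSum_sum]
    refine triSum_congr fun u v w h => ?_
    rw [Finset.sum_ite_eq, if_pos, rb_eq]
    · simp [eq_comm]
    · obtain ⟨a, b, c⟩ := h.mem
      rw [Finset.mem_powerset]
      intro x hx
      simp only [Finset.mem_insert, Finset.mem_singleton] at hx
      rcases hx with rfl | rfl | rfl <;> apply hmem <;> assumption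
  rw [e] at key
  obtain ⟨τ, -, hτ⟩ := Finset.exists_ne_zero_of_sum_ne_zero (by rw [key]; exact one_ne_zero)
  refine ⟨τ, ?_⟩
  by_cases hR : ∀ l, ∃ x ∈ τ, lam x = l
  · refine ⟨hR, ?_⟩
    unfold D
    simpa only [if_pos hR] using hτ
  · exfalso
    apply hτ
    simp only [if_neg hR, ite_self]
    exact triSum_zero

lemma D_mem {n : ℕ} {H : ℕ → ℕ → ℤ × ℤ} {τ : Finset (ℤ × ℤ)} (h : D n H τ ≠ 0) :
    ∀ x ∈ τ, InIm n H x := by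
  obtain ⟨u, v, w, ht, hne⟩ := exists_of_triSum_ne h
  have : ({u, v, w} : Finset (ℤ × ℤ)) = τ := by
    by_contra hc
    simp [hc] at hne
  subst this
  obtain ⟨a, b, c⟩ := ht.mem
  intro x hx
  simp only [Finset.mem_insert, Finset.mem_singleton] at hx
  rcases hx with rfl | rfl | rfl <;> assumption

lemma D_class {n : ℕ} {H : ℕ → ℕ → ℤ × ℤ} (hA : AdjMap n H) {τ : Finset (ℤ × ℤ)}
    (lam : ℤ × ℤ → Fin 3) (hR : ∀ l, ∃ x ∈ τ, lam x = l) (h : D n H τ ≠ 0) :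
    ∃ x y, τ = Up x y ∨ τ = Dn x y := by
  obtain ⟨u, v, w, ht, hne⟩ := exists_of_triSum_ne h
  have : ({u, v, w} : Finset (ℤ × ℤ)) = τ := by
    by_contra hc
    simp [hc] at hne
  subst this
  obtain ⟨a, b, c⟩ := ht.adj hA
  have hR' : ∀ l, lam u = l ∨ lam v = l ∨ lam w = l := by simpa using hR
  have hd : ∀ a b c : Fin 3, (∀ l, a = l ∨ b = l ∨ c = l) → a ≠ b ∧ b ≠ c ∧ a ≠ c := by decide
  obtain ⟨d1, d2, d3⟩ := hd _ _ _ hR'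
  exact tri_class a b c (fun h => d1 (by rw [h])) (fun h => d2 (by rw [h]))
    (fun h => d3 (by rw [h]))

theorem comb (n : ℕ) (h : (Fin 3 → Bool) → ℕ → ℕ → ℤ × ℤ)
    (g0 : ∀ s s', (∀ c, c ≠ 0 → s c = s' c) → ∀ m, h s m 0 = h s' m 0)
    (g1 : ∀ s s', (∀ c, c ≠ 1 → s c = s' c) → ∀ m, h s m m = h s' m m)
    (g2 : ∀ s s', (∀ c, c ≠ 2 → s c = s' c) → ∀ k, h s n k = h s' n k)
    (hA : ∀ s, AdjMap n (h s)) :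
    ∃ S : Fin 3 → Fin 3 → Bool, (∀ c, ∃ t, S t c = true ∧ ∀ t', S t' c = true → t' = t) ∧
      ∃ p, ∀ t, InIm n (h (S t)) p := by
  by_contra hcon
  have H : ∀ S : Fin 3 → Fin 3 → Bool, (∀ c, ∃ t, S t c = true ∧ ∀ t', S t' c = true → t' = t) → ∀ p,
      ¬ ∀ t, InIm n (h (S t)) p := by
    intro S hS p hp
    exact hcon ⟨S, hS, p, hp⟩
  have H1 : ∀ p, ¬ ∀ i, InIm n (h (Nf i)) p :=
    H Nf (by decide)
  have H2 : ∀ p, InIm n (h Tf) p → ¬ InIm n (h Of) p := by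
    intro p h1 h2
    refine H ![Of, Tf, Tf] (by decide) p ?_
    intro t; fin_cases t <;> simpa
  have H3 : ∀ i p, InIm n (h Tf) p → InIm n (h (Nf i)) p → ¬ InIm n (h (Mf i)) p := by
    intro i p h1 h2 h3
    refine H ![Tf, Nf i, Mf i] (by clear h1 h2 h3; revert i; decide) p ?_
    intro t; fin_cases t <;> simpa
  -- the labelling
  let lam : ℤ × ℤ → Fin 3 := fun p =>
    if hN : ∃ c, ¬ InIm n (h (Nf c)) p ∧ InIm n (h (Nf (c - 1))) p then hN.choose
    else firstIdx fun i => D n (h (Mf i)) (Up p.1 p.2)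
  have F1 : ∀ p i, InIm n (h (Nf i)) p →
      ¬ InIm n (h (Nf (lam p))) p ∧ InIm n (h (Nf (lam p - 1))) p := by
    intro p i hi
    have hN : ∃ c, ¬ InIm n (h (Nf c)) p ∧ InIm n (h (Nf (c - 1))) p := by
      have aux : ∀ (Q : Fin 3 → Prop), (∃ i, Q i) → (¬ ∀ i, Q i) → ∃ c, ¬ Q c ∧ Q (c - 1) := by
        intro Q h1 h2
        by_contra h3
        push Not at h3
        have a0 := h3 0
        have a1 := h3 1
        have a2 := h3 2
        obtain ⟨i, hi⟩ := h1
        apply h2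
        rw [show (0 : Fin 3) - 1 = 2 by decide] at a0
        rw [show (1 : Fin 3) - 1 = 0 by decide] at a1
        rw [show (2 : Fin 3) - 1 = 1 by decide] at a2
        intro j
        fin_cases i <;> fin_cases j <;> simp at * <;> tauto
      exact aux _ ⟨i, hi⟩ (H1 p)
    have : lam p = hN.choose := dif_pos hN
    rw [this]
    exact hN.choose_spec
  have F2 : ∀ p, (∀ i, ¬ InIm n (h (Nf i)) p) →
      lam p = firstIdx fun i => D n (h (Mf i)) (Up p.1 p.2) := by
    intro p hp
    refine dif_neg ?_
    rintro ⟨c, -, h2⟩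
    exact hp _ h2
  have L : ∀ p i, InIm n (h (Nf i)) p → lam p ≠ i := by
    rintro p i hi rfl
    exact (F1 p _ hi).1 hi
  have N0 : ∀ m ≤ n, InIm n (h (Nf 0)) (h Tf m 0) := fun m hm =>
    ⟨m, 0, hm, by omega, (g0 _ _ (T_nbr 0) m).symm⟩
  have N1 : ∀ m ≤ n, InIm n (h (Nf 1)) (h Tf m m) := fun m hm =>
    ⟨m, m, hm, by omega, (g1 _ _ (T_nbr 1) m).symm⟩
  have N2 : ∀ k ≤ n, InIm n (h (Nf 2)) (h Tf n k) := fun k hk =>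
    ⟨n, k, le_rfl, hk, (g2 _ _ (T_nbr 2) k).symm⟩
  obtain ⟨τ, hR, hT⟩ := sperner (n := n) (H := h Tf) lam
    (fun m hm => L _ _ (N0 m hm)) (fun m hm => L _ _ (N1 m hm)) (fun m hm => L _ _ (N2 m hm))
    (by
      have a := L _ _ (N0 n le_rfl)
      have b := L _ _ (N2 0 (by omega))
      generalize lam (h Tf n 0) = x at a b
      revert x; decide)
    (by
      have a := L _ _ (N1 n le_rfl)
      have b := L _ _ (N2 n le_rfl)
      generalize lam (h Tf n n) = x at a b
      revert x; decide)
  have hTm := D_mem hT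
  obtain ⟨x, y, hxy⟩ := D_class (hA Tf) lam hR hT
  have hNz : ∀ i, D n (h (Nf i)) τ = 0 := by
    intro i
    by_contra hc
    obtain ⟨x, hx, hxl⟩ := hR i
    exact L x i (D_mem hc x hx) hxl
  have hOz : D n (h Of) τ = 0 := by
    by_contra hc
    obtain ⟨x, hx, hxl⟩ := hR 0
    exact H2 x (hTm x hx) (D_mem hc x hx)
  -- the total degree vanishes
  have bd0 : ∀ β : ℤ × ℤ → ℤ × ℤ → ZMod 2, ∑ s, bdSum n (h s) β = 0 := by
    intro β
    unfold bdSum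
    rw [Finset.sum_add_distrib, Finset.sum_add_distrib, sum_flip 0, sum_flip 1, sum_flip 2]
    · simp
    · intro s s' hs
      simp only [g2 s s' hs]
    · intro s s' hs
      simp only [g1 s s' hs]
    · intro s s' hs
      simp only [g0 s s' hs]
  have tot : ∀ x y, ∑ s, D n (h s) (Up x y) = 0 ∧ ∑ s, D n (h s) (Dn x y) = 0 := by
    have eUD : ∀ x y, ∑ s, D n (h s) (Up x y) = ∑ s, D n (h s) (Dn x y) := by
      intro x y
      apply z2
      rw [← Finset.sum_add_distrib, Finset.sum_congr rfl (fun s _ => edge_diag (hA s) x y)]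
      exact bd0 _
    have eDU : ∀ x y, ∑ s, D n (h s) (Up (x + 1) y) = ∑ s, D n (h s) (Dn x y) := by
      intro x y
      apply z2
      rw [← Finset.sum_add_distrib, Finset.sum_congr rfl (fun s _ => edge_vert (hA s) x y)]
      exact bd0 _
    have step : ∀ (k : ℕ) (x y : ℤ),
        ∑ s, D n (h s) (Up x y) = ∑ s, D n (h s) (Up (x + k) y) := by
      intro k x y
      induction k with
      | zero => simp
      | succ k ih =>
        rw [ih, eUD, ← eDU]
        push_cast
        rw [add_assoc]
    have far : ∃ B : ℤ, ∀ s p, InIm n (h s) p → p.1 < B := by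
      let V : Finset ℤ := Finset.univ.biUnion fun s : Fin 3 → Bool =>
        (Finset.range (n + 1) ×ˢ Finset.range (n + 1)).image (fun p => (h s p.1 p.2).1)
      obtain ⟨B, hB⟩ := V.bddAbove
      refine ⟨B + 1, ?_⟩
      rintro s p ⟨m, k, hm, hk, rfl⟩
      have : (h s m k).1 ∈ V := by
        simp only [V, Finset.mem_biUnion, Finset.mem_image]
        exact ⟨s, Finset.mem_univ _, (m, k), by simp; omega, rfl⟩
      have := hB (Finset.mem_coe.2 this)
      omega
    obtain ⟨B, hB⟩ := far
    have up0 : ∀ x y, ∑ s, D n (h s) (Up x y) = 0 := by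
      intro x y
      rw [step (B - x).toNat x y]
      refine Finset.sum_eq_zero fun s _ => ?_
      by_contra hc
      have := hB s _ (D_mem hc (x + (B - x).toNat, y) (by simp [Up]))
      simp only at this
      omega
    exact fun x y => ⟨up0 x y, (eUD x y) ▸ up0 x y⟩
  have totτ : ∑ s, D n (h s) τ = 0 := by
    rcases hxy with rfl | rfl
    · exact (tot x y).1
    · exact (tot x y).2
  have hM : ∃ i, D n (h (Mf i)) τ ≠ 0 := by
    by_contra hc
    push Not at hc
    rw [Finset.sum_eq_single Tf] at totτ
    · exact hT totτ
    · intro s _ hs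
      rcases face_cases s with rfl | rfl | ⟨i, rfl⟩ | ⟨i, rfl⟩
      · exact absurd rfl hs
      · exact hOz
      · exact hNz i
      · exact hc i
    · simp
  have hj := firstIdx_spec (f := fun i => D n (h (Mf i)) τ) hM
  generalize hjdef : firstIdx (fun i => D n (h (Mf i)) τ) = j at hj
  obtain ⟨p, hp, hpl⟩ := hR (j + 1)
  by_cases hpN : ∃ i, InIm n (h (Nf i)) p
  · obtain ⟨i, hi⟩ := hpN
    have := (F1 p i hi).2
    rw [hpl, add_sub_cancel_right] at this
    exact H3 j p (hTm p hp) this (D_mem hj p hp)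
  · push Not at hpN
    have hl := F2 p hpN
    have hpO := H2 p (hTm p hp)
    have hnb : ∀ s', (s' = Of ∨ ∃ k, s' = Nf k) → ¬ InIm n (h s') p := by
      rintro s' (rfl | ⟨k, rfl⟩)
      · exact hpO
      · exact hpN k
    have hc : ∀ i, D n (h (Mf i)) τ = D n (h (Mf i)) (Up p.1 p.2) := by
      intro i
      have := star_const (hA (Mf i)) p ?_ ?_ ?_ x y
      · rcases hxy with rfl | rfl
        · exact this.1 hp
        · exact this.2 hp
      · intro m hm he
        obtain ⟨s', h1, h2⟩ := M_nbr i 0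
        rw [g0 _ _ h2] at he
        exact hnb s' h1 ⟨_, _, hm, by omega, he⟩
      · intro m hm he
        obtain ⟨s', h1, h2⟩ := M_nbr i 1
        rw [g1 _ _ h2] at he
        exact hnb s' h1 ⟨_, _, hm, by omega, he⟩
      · intro m hm he
        obtain ⟨s', h1, h2⟩ := M_nbr i 2
        rw [g2 _ _ h2] at he
        exact hnb s' h1 ⟨_, _, le_rfl, hm, he⟩
    simp only [hc] at hjdef
    rw [hpl, hjdef] at hl
    revert hl
    generalize j = z
    revert z
    decide

def rnd (x y : ℝ) : ℤ × ℤ := (⌊x - (⌊y⌋ : ℝ) / 2⌋, ⌊y⌋)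

lemma rnd_adj {x y x' y' : ℝ} (hx : |x - x'| < 1 / 2) (hy : |y - y'| < 1 / 2) :
    Adj (rnd x y) (rnd x' y') := by
  unfold Adj rnd
  rw [abs_lt] at hx hy
  have a1 := Int.floor_le y
  have a2 := Int.lt_floor_add_one y
  have a3 := Int.floor_le y'
  have a4 := Int.lt_floor_add_one y'
  generalize ⌊y⌋ = b at *
  generalize ⌊y'⌋ = b' at *
  have c1 := Int.floor_le (x - (b : ℝ) / 2)
  have c2 := Int.lt_floor_add_one (x - (b : ℝ) / 2)
  have c3 := Int.floor_le (x' - (b' : ℝ) / 2)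
  have c4 := Int.lt_floor_add_one (x' - (b' : ℝ) / 2)
  generalize ⌊x - (b : ℝ) / 2⌋ = a at *
  generalize ⌊x' - (b' : ℝ) / 2⌋ = a' at *
  have hb1 : b' - b < 2 := by
    have : (b' : ℝ) - b < 2 := by linarith
    exact_mod_cast this
  have hb2 : b - b' < 2 := by
    have : (b : ℝ) - b' < 2 := by linarith
    exact_mod_cast this
  have hcase : b' = b ∨ b' = b + 1 ∨ b = b' + 1 := by omega
  simp only [abs_le]
  rcases hcase with rfl | rfl | rfl
  · have h1 : a' - a < 2 := by
      have : (a' : ℝ) - a < 2 := by linarith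
      exact_mod_cast this
    have h2 : a - a' < 2 := by
      have : (a : ℝ) - a' < 2 := by linarith
      exact_mod_cast this
    omega
  · push_cast at *
    have h1 : a' - a < 1 := by
      have : (a' : ℝ) - a < 1 := by linarith
      exact_mod_cast this
    have h2 : a - a' < 2 := by
      have : (a : ℝ) - a' < 2 := by linarith
      exact_mod_cast this
    omega
  · push_cast at *
    have h1 : a - a' < 1 := by
      have : (a : ℝ) - a' < 1 := by linarith
      exact_mod_cast this
    have h2 : a' - a < 2 := by
      have : (a' : ℝ) - a < 2 := by linarith
      exact_mod_cast this
    omega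

lemma rnd_eq {x y x' y' : ℝ} (h : rnd x y = rnd x' y') : |x - x'| < 1 ∧ |y - y'| < 1 := by
  unfold rnd at h
  rw [Prod.mk.injEq] at h
  obtain ⟨h1, h2⟩ := h
  rw [h2] at h1
  constructor
  · have := Int.abs_sub_lt_one_of_floor_eq_floor h1
    simpa using this
  · exact Int.abs_sub_lt_one_of_floor_eq_floor h2

def Exact1 (S : Fin 3 → Fin 3 → Bool) : Prop :=
  ∀ c, ∃ t, S t c = true ∧ ∀ t', S t' c = true → t' = t

def wt (n m k : ℕ) : Fin 3 → ℝ := ![(k : ℝ) / n, ((m : ℝ) - k) / n, ((n : ℝ) - m) / n]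

lemma wt_mem {n m k : ℕ} (hn : 0 < n) (hm : m ≤ n) (hk : k ≤ m) :
    wt n m k ∈ stdSimplex ℝ (Fin 3) := by
  have hn' : (0 : ℝ) < n := by exact_mod_cast hn
  have hm' : (m : ℝ) ≤ n := by exact_mod_cast hm
  have hk' : (k : ℝ) ≤ m := by exact_mod_cast hk
  constructor
  · intro c
    fin_cases c
    · simp only [wt]; exact div_nonneg (Nat.cast_nonneg _) hn'.le
    · exact div_nonneg (sub_nonneg.2 hk') hn'.le
    · exact div_nonneg (sub_nonneg.2 hm') hn'.le
  · simp only [Fin.sum_univ_three, wt, Matrix.cons_val]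
    field_simp
    ring

lemma approx (X Y : (Fin 3 → Bool) → (Fin 3 → ℝ) → ℝ)
    (hX : ∀ s, ContinuousOn (X s) (stdSimplex ℝ (Fin 3)))
    (hY : ∀ s, ContinuousOn (Y s) (stdSimplex ℝ (Fin 3)))
    (gX : ∀ s s' c w, (∀ c', c' ≠ c → s c' = s' c') → w c = 0 → X s w = X s' w)
    (gY : ∀ s s' c w, (∀ c', c' ≠ c → s c' = s' c') → w c = 0 → Y s w = Y s' w)
    (ε : ℝ) (hε : 0 < ε) :
    ∃ S, Exact1 S ∧ ∃ w : Fin 3 → Fin 3 → ℝ, (∀ t, w t ∈ stdSimplex ℝ (Fin 3)) ∧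
      ∀ t t', |X (S t) (w t) - X (S t') (w t')| < ε ∧ |Y (S t) (w t) - Y (S t') (w t')| < ε := by
  have hc : ContinuousOn (fun w => fun s => (X s w, Y s w)) (stdSimplex ℝ (Fin 3)) :=
    continuousOn_pi.2 fun s => (hX s).prodMk (hY s)
  have hu := (isCompact_stdSimplex ℝ (Fin 3)).uniformContinuousOn_of_continuous hc
  rw [Metric.uniformContinuousOn_iff] at hu
  obtain ⟨δ, hδ, hu⟩ := hu (ε / 2) (by positivity)
  obtain ⟨N, hN⟩ := exists_nat_one_div_lt hδ
  set n : ℕ := N + 1 with hn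
  have hn0 : 0 < n := by omega
  have hn' : (0 : ℝ) < n := by exact_mod_cast hn0
  have hN' : 1 / (n : ℝ) < δ := by rw [hn]; push_cast; exact hN
  let h : (Fin 3 → Bool) → ℕ → ℕ → ℤ × ℤ := fun s m k =>
    rnd (X s (wt n m k) / ε) (Y s (wt n m k) / ε)
  have glue : ∀ s s' c m k, (∀ c', c' ≠ c → s c' = s' c') → wt n m k c = 0 →
      h s m k = h s' m k := by
    intro s s' c m k hs hw
    simp only [h]
    rw [gX s s' c _ hs hw, gY s s' c _ hs hw]
  have adj : ∀ s m k m' k', m ≤ n → k ≤ m → m' ≤ n → k' ≤ m' →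
      (∀ c, |wt n m k c - wt n m' k' c| ≤ 1 / n) → Adj (h s m k) (h s m' k') := by
    intro s m k m' k' h1 h2 h3 h4 h5
    have hd : dist (wt n m k) (wt n m' k') < δ := by
      rw [dist_pi_lt_iff hδ]
      intro c
      rw [Real.dist_eq]
      exact (h5 c).trans_lt hN'
    have := hu _ (wt_mem hn0 h1 h2) _ (wt_mem hn0 h3 h4) hd
    rw [dist_pi_lt_iff (by positivity)] at this
    have := this s
    rw [Prod.dist_eq, max_lt_iff, Real.dist_eq, Real.dist_eq] at this
    simp only at this
    apply rnd_adj
    · rw [← sub_div, abs_div, abs_of_pos hε, div_lt_iff₀ hε]; linarith [this.1]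
    · rw [← sub_div, abs_div, abs_of_pos hε, div_lt_iff₀ hε]; linarith [this.2]
  have cdist : ∀ m k m' k' : ℕ, |(k : ℝ) - k'| ≤ 1 → |((m : ℝ) - k) - (m' - k')| ≤ 1 →
      |(m : ℝ) - m'| ≤ 1 → ∀ c, |wt n m k c - wt n m' k' c| ≤ 1 / n := by
    intro m k m' k' h1 h2 h3 c
    have aux : ∀ a b : ℝ, |a - b| ≤ 1 → |a / n - b / n| ≤ 1 / n := by
      intro a b hab
      rw [← sub_div, abs_div, abs_of_pos hn']
      gcongr
    fin_cases c
    · exact aux _ _ h1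
    · exact aux _ _ h2
    · refine aux _ _ ?_
      rw [abs_sub_comm] at h3
      rwa [show (n : ℝ) - m - (n - m') = m' - m by ring]
  obtain ⟨S, hS, p, hp⟩ := comb n h
    (fun s s' hs m => glue s s' 0 m 0 hs (by simp [wt]))
    (fun s s' hs m => glue s s' 1 m m hs (by simp [wt]))
    (fun s s' hs k => glue s s' 2 n k hs (by simp [wt]))
    (by
      intro s m k hm hk
      refine ⟨adj s _ _ _ _ (by omega) (by omega) (by omega) (by omega) (cdist _ _ _ _ ?_ ?_ ?_),
        adj s _ _ _ _ (by omega) (by omega) (by omega) (by omega) (cdist _ _ _ _ ?_ ?_ ?_),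
        adj s _ _ _ _ (by omega) (by omega) (by omega) (by omega) (cdist _ _ _ _ ?_ ?_ ?_)⟩ <;>
      · push_cast
        ring_nf
        norm_num)
  choose m k hm hk he using hp
  refine ⟨S, hS, fun t => wt n (m t) (k t), fun t => wt_mem hn0 (hm t) (hk t), ?_⟩
  intro t t'
  have := rnd_eq ((he t).trans (he t').symm)
  rw [← sub_div, abs_div, abs_of_pos hε, div_lt_iff₀ hε, ← sub_div, abs_div, abs_of_pos hε,
    div_lt_iff₀ hε] at this
  simpa using this

lemma exact_pt (X Y : (Fin 3 → Bool) → (Fin 3 → ℝ) → ℝ)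
    (hX : ∀ s, ContinuousOn (X s) (stdSimplex ℝ (Fin 3)))
    (hY : ∀ s, ContinuousOn (Y s) (stdSimplex ℝ (Fin 3)))
    (gX : ∀ s s' c w, (∀ c', c' ≠ c → s c' = s' c') → w c = 0 → X s w = X s' w)
    (gY : ∀ s s' c w, (∀ c', c' ≠ c → s c' = s' c') → w c = 0 → Y s w = Y s' w) :
    ∃ S, Exact1 S ∧ ∃ w : Fin 3 → Fin 3 → ℝ, (∀ t, w t ∈ stdSimplex ℝ (Fin 3)) ∧
      ∀ t t', X (S t) (w t) = X (S t') (w t') ∧ Y (S t) (w t) = Y (S t') (w t') := by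
  by_contra hcon
  let K : Set (Fin 3 → Fin 3 → ℝ) := Set.univ.pi fun _ => stdSimplex ℝ (Fin 3)
  have hK : IsCompact K := isCompact_univ_pi fun _ => isCompact_stdSimplex ℝ (Fin 3)
  have hKne : K.Nonempty := by
    refine ⟨fun _ => Pi.single 0 1, fun t _ => ?_⟩
    exact single_mem_stdSimplex ℝ 0
  let Φ : (Fin 3 → Fin 3 → Bool) → (Fin 3 → Fin 3 → ℝ) → ℝ := fun S w =>
    ∑ t, ∑ t', (|X (S t) (w t) - X (S t') (w t')| + |Y (S t) (w t) - Y (S t') (w t')|)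
  have hΦ : ∀ S, ContinuousOn (Φ S) K := by
    intro S
    have pX : ∀ t, ContinuousOn (fun w : Fin 3 → Fin 3 → ℝ => X (S t) (w t)) K := fun t =>
      (hX (S t)).comp (continuous_apply t).continuousOn (fun w hw => hw t trivial)
    have pY : ∀ t, ContinuousOn (fun w : Fin 3 → Fin 3 → ℝ => Y (S t) (w t)) K := fun t =>
      (hY (S t)).comp (continuous_apply t).continuousOn (fun w hw => hw t trivial)
    refine continuousOn_finsetSum _ fun t _ => continuousOn_finsetSum _ fun t' _ => ?_
    exact ((pX t).sub (pX t')).abs.add ((pY t).sub (pY t')).abs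
  have hpos : ∀ S, Exact1 S → ∀ w ∈ K, 0 < Φ S w := by
    intro S hS w hw
    have h0 : 0 ≤ Φ S w := by
      refine Finset.sum_nonneg fun t _ => Finset.sum_nonneg fun t' _ => by positivity
    refine lt_of_le_of_ne h0 fun h => hcon ⟨S, hS, w, fun t => hw t trivial, ?_⟩
    intro t t'
    have h1 := (Finset.sum_eq_zero_iff_of_nonneg (fun t _ =>
      Finset.sum_nonneg fun t' _ => by positivity)).1 h.symm t (Finset.mem_univ _)
    have h2 := (Finset.sum_eq_zero_iff_of_nonneg (fun t' _ => by positivity)).1 h1 t'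
      (Finset.mem_univ _)
    have a1 := abs_nonneg (X (S t) (w t) - X (S t') (w t'))
    have a2 := abs_nonneg (Y (S t) (w t) - Y (S t') (w t'))
    constructor
    · rw [← sub_eq_zero, ← abs_eq_zero]; linarith
    · rw [← sub_eq_zero, ← abs_eq_zero]; linarith
  have hε : ∀ S, ∃ ε > 0, Exact1 S → ∀ w ∈ K, ε ≤ Φ S w := by
    intro S
    by_cases hS : Exact1 S
    · obtain ⟨w, hw, hmin⟩ := hK.exists_isMinOn hKne (hΦ S)
      exact ⟨Φ S w, hpos S hS w hw, fun _ w' hw' => hmin hw'⟩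
    · exact ⟨1, one_pos, fun h => absurd h hS⟩
  choose e he0 he using hε
  obtain ⟨S₀, -, hS₀⟩ := Finset.exists_min_image (Finset.univ : Finset (Fin 3 → Fin 3 → Bool)) e
    ⟨fun _ _ => true, Finset.mem_univ _⟩
  obtain ⟨S, hS, w, hw, hlt⟩ := approx X Y hX hY gX gY (e S₀ / 18) (by have := he0 S₀; positivity)
  have h1 := he S hS w (fun t _ => hw t)
  have h2 := hS₀ S (Finset.mem_univ _)
  have h3 : Φ S w < ∑ t : Fin 3, ∑ t' : Fin 3, (e S₀ / 18 + e S₀ / 18) := by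
    refine Finset.sum_lt_sum_of_nonempty Finset.univ_nonempty fun t _ =>
      Finset.sum_lt_sum_of_nonempty Finset.univ_nonempty fun t' _ => ?_
    exact add_lt_add (hlt t t').1 (hlt t t').2
  simp at h3
  linarith

set_option maxRecDepth 100000 in
set_option maxHeartbeats 2000000 in
lemma fiber : ∀ q : Fin 3 → Fin 2, (∀ y, ∃ x, q x = y) → ∃ b : Fin 2, ∀ σ : Fin 3 → Bool,
    (∃ t, σ t = true ∧ ∀ t', σ t' = true → t' = t) →
    ∃ v : Fin 3 → Fin 3, (∀ i j, v i = v j → i = j) ∧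
      ∀ t, q (v t) = if σ t = true then b else b + 1 := by
  decide


def vx (b : Fin 3 → Fin 2) (s : Fin 3 → Bool) (c : Fin 3) : Fin 2 :=
  if s c = true then b c else b c + 1

/-- The point with barycentric coordinates `w` on the triangle with vertices `u c`. -/
def pt {k : ℕ} (u : Fin 3 → Fin k) (w : Fin 3 → ℝ) : Fin 3 × Fin k → ℝ :=
  fun z => if z.2 = u z.1 then w z.1 else 0

lemma pt_simplex {k : ℕ} (u : Fin 3 → Fin k) {w : Fin 3 → ℝ} (hw : w ∈ stdSimplex ℝ (Fin 3)) :
    pt u w ∈ stdSimplex ℝ (Fin 3 × Fin k) := by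
  constructor
  · intro z
    unfold pt
    split_ifs
    · exact hw.1 _
    · exact le_rfl
  · rw [Fintype.sum_prod_type, ← hw.2]
    refine Finset.sum_congr rfl fun c _ => ?_
    simp [pt]

lemma pt_card {k : ℕ} (u : Fin 3 → Fin k) (w : Fin 3 → ℝ) (c : Fin 3) :
    (Finset.univ.filter fun v : Fin 3 × Fin k => pt u w v ≠ 0 ∧ v.1 = c).card ≤ 1 := by
  rw [Finset.card_le_one]
  rintro ⟨a, a'⟩ ha ⟨b, b'⟩ hb
  simp only [Finset.mem_filter, Finset.mem_univ, true_and, pt, ne_eq, ite_eq_right_iff,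
    Classical.not_imp] at ha hb
  obtain ⟨⟨h1, -⟩, rfl⟩ := ha
  obtain ⟨⟨h2, -⟩, rfl⟩ := hb
  rw [h1, h2]

lemma pt_cont {k : ℕ} (u : Fin 3 → Fin k) : Continuous (pt u) := by
  refine continuous_pi fun z => ?_
  unfold pt
  split_ifs
  · exact continuous_apply _
  · exact continuous_const

end CTV

/-- **Corollary 1.6** (`cor:3-to-2`, topological colored Tverberg for 3-to-2 maps).
Let `f : K_{3,3,3} → ℝ²` be continuous and admit a factorization `f = g ∘ α`, where
`α : K_{3,3,3} → K_{2,2,2}` is the simplicial map induced by surjections `[3] → [2]`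
on each color class and `g : K_{2,2,2} → ℝ²` is continuous. Then there exist three
pairwise vertex-disjoint rainbow triangles `Δ₁, Δ₂, Δ₃` in `K_{3,3,3}` with
`f(Δ₁) ∩ f(Δ₂) ∩ f(Δ₃) ≠ ∅`. -/
theorem colored_tverberg_three_to_two
    (q : Fin 3 → Fin 3 → Fin 2) (hq : ∀ c, Function.Surjective (q c))
    (g : ((Fin 3 × Fin 2) → ℝ) → EuclideanSpace ℝ (Fin 2))
    (hg : ContinuousOn g K222)
    (f : ((Fin 3 × Fin 3) → ℝ) → EuclideanSpace ℝ (Fin 2))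
    (hf : ContinuousOn f K333)
    (hfactor : ∀ x ∈ K333, f x = g (inducedMap q x)) :
    ∃ v : Fin 3 → Fin 3 → Fin 3,
      -- the three triangles are pairwise vertex-disjoint (one vertex of each color)
      (∀ c : Fin 3, Function.Injective fun t : Fin 3 => v t c) ∧
      -- their images under `f` have a common point
      (∃ y : EuclideanSpace ℝ (Fin 2), ∀ t : Fin 3, y ∈ f '' triangleFace (v t)) := by
  classical
  choose b hb using fun c => CTV.fiber (q c) (hq c)
  have mem2 : ∀ s w, w ∈ stdSimplex ℝ (Fin 3) → CTV.pt (CTV.vx b s) w ∈ K222 := fun s w hw =>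
    ⟨CTV.pt_simplex _ hw, fun c => by convert CTV.pt_card (CTV.vx b s) w c⟩
  have hG : ∀ s, ContinuousOn (fun w => g (CTV.pt (CTV.vx b s) w)) (stdSimplex ℝ (Fin 3)) :=
    fun s => hg.comp (CTV.pt_cont _).continuousOn (fun w hw => mem2 s w hw)
  have glue : ∀ (s s' : Fin 3 → Bool) (c : Fin 3) (w : Fin 3 → ℝ),
      (∀ c', c' ≠ c → s c' = s' c') → w c = 0 →
      CTV.pt (CTV.vx b s) w = CTV.pt (CTV.vx b s') w := by
    intro s s' c w hs hw
    funext z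
    unfold CTV.pt CTV.vx
    by_cases hz : z.1 = c
    · simp [hz, hw]
    · rw [hs _ hz]
  have hGc : ∀ (j : Fin 2) s, ContinuousOn (fun w => g (CTV.pt (CTV.vx b s) w) j)
      (stdSimplex ℝ (Fin 3)) := fun j s =>
    (EuclideanSpace.proj (𝕜 := ℝ) j).continuous.comp_continuousOn (hG s)
  obtain ⟨S, hS, w, hw, heq⟩ := CTV.exact_pt
    (fun s w => g (CTV.pt (CTV.vx b s) w) 0) (fun s w => g (CTV.pt (CTV.vx b s) w) 1)
    (hGc 0) (hGc 1)
    (fun s s' c w hs h0 => by simp only [glue s s' c w hs h0])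
    (fun s s' c w hs h0 => by simp only [glue s s' c w hs h0])
  choose v hv1 hv2 using fun c => hb c (fun t => S t c) (hS c)
  have memf : ∀ t, CTV.pt (fun c => v c t) (w t) ∈ K333 := fun t =>
    ⟨CTV.pt_simplex _ (hw t), fun c => by convert CTV.pt_card (fun c => v c t) (w t) c⟩
  have ind : ∀ t, inducedMap q (CTV.pt (fun c => v c t) (w t)) = CTV.pt (CTV.vx b (S t)) (w t) := by
    intro t
    funext z
    unfold inducedMap
    rw [Finset.sum_eq_single (v z.1 t)]
    · simp only [CTV.pt, hv2, CTV.vx, if_true, eq_comm]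
    · intro i _ hi
      simp [CTV.pt, hi]
    · simp
  refine ⟨fun t c => v c t, fun c i j hij => hv1 c i j hij,
    g (CTV.pt (CTV.vx b (S 0)) (w 0)), fun t => ⟨CTV.pt (fun c => v c t) (w t), ?_, ?_⟩⟩
  · refine ⟨CTV.pt_simplex _ (hw t), fun z hz => ?_⟩
    by_contra hc
    exact hz (if_neg hc)
  · rw [hfactor _ (memf t), ind]
    ext j
    fin_cases j
    · exact (heq t 0).1
    · exact (heq t 0).2
end
end
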